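/- arXiv:2010.03836 — 2 statements merged into one kernel-verified Lean document; each statement's English description precedes it below -/
import Mathlib

section
/- (Theorem 14, Holmstedt-type formula) Let 0 < θ₁ < 1, 0 < q₁, r₁ ≤ ∞, a₁, b₁ ∈ SV, and ‖s^{-1/r₁} b₁(s)/a₁(s)‖_{r₁,(1,∞)} < ∞. Put c₁(t) = a₁(t) ‖s^{-1/r₁} b₁(s)/a₁(s)‖_{r₁,(t,∞)} and ρ(t) = t^{θ₁}/c₁(t). Then, with constants independent of f and t, for all f ∈ A₀ + Ā^𝓛_{θ₁,r₁,b₁,q₁,a₁} and all t > 0: K(ρ(t), f; A₀, Ā^𝓛_{θ₁,r₁,b₁,q₁,a₁}) ≈ K(t, f) + ρ(t) ‖ s^{-1/r₁} (b₁(s)/a₁(s)) ‖u^{-θ₁-1/q₁} a₁(u) K(u, f)‖_{q₁,(t,s)} ‖_{r₁,(t,∞)}. -/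
open MeasureTheory Set ENNReal Filter

noncomputable section

/-- The `L_q` quasi-norm (with respect to Lebesgue measure) of an `ℝ≥0∞`-valued
function over a set of reals; for `q = ∞` it is the essential supremum. -/
def LqNorm (q : ℝ≥0∞) (s : Set ℝ) (g : ℝ → ℝ≥0∞) : ℝ≥0∞ :=
  if q = ∞ then essSup g (volume.restrict s)
  else (∫⁻ t in s, g t ^ q.toReal) ^ q⁻¹.toReal

/-- The weight `s ↦ s ^ (-1/r) * b s`, as an `ℝ≥0∞`-valued function
(`1/∞ = 0` by convention). -/
def svWgt (r : ℝ≥0∞) (b : ℝ → ℝ) : ℝ → ℝ≥0∞ :=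
  fun s => ENNReal.ofReal (s ^ (-(r⁻¹.toReal)) * b s)

/-- `f` and `g` are equivalent on `s`: each is bounded by a constant multiple
of the other there. -/
def EquivOn (s : Set ℝ) (f g : ℝ → ℝ) : Prop :=
  ∃ C : ℝ, 0 < C ∧ ∀ t ∈ s, C⁻¹ * g t ≤ f t ∧ f t ≤ C * g t

/-- A positive measurable function `b` on `(0,∞)` is slowly varying if for every
`ε > 0`, `t ^ ε * b t` is equivalent to a non-decreasing function and
`t ^ (-ε) * b t` is equivalent to a non-increasing function. -/
def SlowlyVarying (b : ℝ → ℝ) : Prop :=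
  AEMeasurable b (volume.restrict (Ioi 0)) ∧ (∀ t ∈ Ioi (0:ℝ), 0 < b t) ∧
    ∀ ε : ℝ, 0 < ε →
      (∃ g : ℝ → ℝ, MonotoneOn g (Ioi 0) ∧ EquivOn (Ioi 0) (fun t => t ^ ε * b t) g) ∧
      (∃ g : ℝ → ℝ, AntitoneOn g (Ioi 0) ∧ EquivOn (Ioi 0) (fun t => t ^ (-ε) * b t) g)

/-- A quasi-Banach space continuously embedded into the ambient (Hausdorff) space `E`,
recorded via its extended-real-valued quasi-norm; the space itself is the set of
vectors of finite quasi-norm. -/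
structure QuasiBanach (E : Type*) [AddCommGroup E] [Module ℝ E] where
  N : E → ℝ≥0∞
  zero : N 0 = 0
  definite : ∀ x, N x = 0 → x = 0
  smul : ∀ (c : ℝ) (x : E), N (c • x) = ENNReal.ofReal |c| * N x
  quasi : ∃ C : ℝ≥0∞, 1 ≤ C ∧ C ≠ ∞ ∧ ∀ x y, N (x + y) ≤ C * (N x + N y)
  complete : ∀ f : ℕ → E,
    (∀ ε : ℝ≥0∞, 0 < ε → ∃ M : ℕ, ∀ m ≥ M, ∀ n ≥ M, N (f m - f n) < ε) →
    (∀ n, N (f n) ≠ ∞) →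
    ∃ g : E, N g ≠ ∞ ∧ Tendsto (fun n => N (f n - g)) atTop (nhds 0)

variable {E : Type*} [AddCommGroup E] [Module ℝ E]

/-- The Peetre K-functional of the couple whose quasi-norms are `N₀`, `N₁`. -/
def Kf (N₀ N₁ : E → ℝ≥0∞) (t : ℝ) (f : E) : ℝ≥0∞ :=
  ⨅ g : E, N₀ g + ENNReal.ofReal t * N₁ (f - g)

/-- The quasi-norm of the real interpolation space `Ā_{θ,q;b}`. -/
def normK (N₀ N₁ : E → ℝ≥0∞) (θ : ℝ) (q : ℝ≥0∞) (b : ℝ → ℝ) (f : E) : ℝ≥0∞ :=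
  LqNorm q (Ioi 0) fun u =>
    ENNReal.ofReal (u ^ (-θ - q⁻¹.toReal) * b u) * Kf N₀ N₁ u f

/-- The quasi-norm of the limiting interpolation space `Ā^𝓛_{σ,r,b,q,a}`. -/
def normL (N₀ N₁ : E → ℝ≥0∞) (σ : ℝ) (r q : ℝ≥0∞) (b a : ℝ → ℝ) (f : E) : ℝ≥0∞ :=
  LqNorm r (Ioi 0) fun t =>
    ENNReal.ofReal (t ^ (-(r⁻¹.toReal)) * (b t / a t)) *
      LqNorm q (Ioo 0 t) fun u =>
        ENNReal.ofReal (u ^ (-σ - q⁻¹.toReal) * a u) * Kf N₀ N₁ u f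

/-- The quasi-norm of the limiting interpolation space `Ā^𝓡_{σ,r,b,q,a}`. -/
def normR (N₀ N₁ : E → ℝ≥0∞) (σ : ℝ) (r q : ℝ≥0∞) (b a : ℝ → ℝ) (f : E) : ℝ≥0∞ :=
  LqNorm r (Ioi 0) fun t =>
    ENNReal.ofReal (t ^ (-(r⁻¹.toReal)) * (b t / a t)) *
      LqNorm q (Ioi t) fun u =>
        ENNReal.ofReal (u ^ (-σ - q⁻¹.toReal) * a u) * Kf N₀ N₁ u f

/-- Two (extended-real-valued) quasi-norms define the same space with
equivalent quasi-norms. -/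
def EquivNorms (nX nY : E → ℝ≥0∞) : Prop :=
  ∃ C : ℝ≥0∞, 0 < C ∧ C ≠ ∞ ∧ ∀ f : E, C⁻¹ * nY f ≤ nX f ∧ nX f ≤ C * nY f

/-! The `𝓛`-quasi-norm of `f` is `Γ (K (·, f))` for a monotone, homogeneous, quasi-subadditive
functional `Γ`. Let `φ u = min 1 (u / t)` and `ρ = 1 / Γ φ`. For any such `Γ` one has
`K (ρ, f; A₀, Γ ∘ K) ≈ K (t, f) + ρ Γ (1_{(t,∞)} K (·, f))`: if `f = f₀ + f₁`, then
* `K (t, f₁) φ ≤ K (·, f₁)`, so that `K (t, f₁) ≤ ρ Γ (K (·, f₁))`;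
* `1_{(t,∞)} K (·, f)` is at most a constant times `K (·, f₁) + ‖f₀‖ φ`;
* `K (·, f₁)` is at most a constant times `(‖f₀‖ + t ‖f₁‖) φ + 1_{(t,∞)} K (·, f)`.

Slow variation enters only in the equivalence `Γ φ ≈ t ^ (-θ₁) c₁(t)`, that is, `ρ ≈ ρ(t)`.
-/

section LqNorm

variable {q : ℝ≥0∞} {s t : Set ℝ} {g h : ℝ → ℝ≥0∞}

theorem lqNorm_eq_eLpNorm (hq : q ≠ 0) (s : Set ℝ) (g : ℝ → ℝ≥0∞) :
    LqNorm q s g = eLpNorm g q (volume.restrict s) := by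
  by_cases hq' : q = ∞
  · simp [LqNorm, hq', eLpNormEssSup]
  · simp [LqNorm, hq', eLpNorm_eq_lintegral_rpow_enorm_toReal hq hq']

theorem lqNorm_mono (hq : q ≠ 0) (hs : MeasurableSet s) (hgh : ∀ u ∈ s, g u ≤ h u) :
    LqNorm q s g ≤ LqNorm q s h := by
  simp only [lqNorm_eq_eLpNorm hq]
  exact eLpNorm_mono_enorm_ae (ae_restrict_of_forall_mem hs hgh)

theorem lqNorm_congr (hq : q ≠ 0) (hs : MeasurableSet s) (hgh : EqOn g h s) :
    LqNorm q s g = LqNorm q s h :=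
  le_antisymm (lqNorm_mono hq hs fun _ hu => (hgh hu).le)
    (lqNorm_mono hq hs fun _ hu => (hgh hu).ge)

theorem lqNorm_mono_set (hq : q ≠ 0) (hst : s ⊆ t) (g : ℝ → ℝ≥0∞) :
    LqNorm q s g ≤ LqNorm q t g := by
  simp only [lqNorm_eq_eLpNorm hq]
  exact eLpNorm_mono_measure _ (Measure.restrict_mono_set _ hst)

theorem lqNorm_const_mul (hq : q ≠ 0) (hg : AEMeasurable g (volume.restrict s)) (c : ℝ≥0∞) :
    LqNorm q s (fun u => c * g u) = c * LqNorm q s g := by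
  by_cases hq' : q = ∞
  · simp only [LqNorm, if_pos hq', ENNReal.essSup_const_mul]
  · have hq_pos : q.toReal ≠ 0 := (toReal_pos hq hq').ne'
    simp only [LqNorm, if_neg hq', mul_rpow_of_nonneg _ _ toReal_nonneg]
    rw [lintegral_const_mul'' _ (hg.pow_const _), mul_rpow_of_nonneg _ _ toReal_nonneg,
      toReal_inv, rpow_rpow_inv hq_pos]

theorem lqNorm_add_le (hq : q ≠ 0) (hg : AEMeasurable g (volume.restrict s))
    (hh : AEMeasurable h (volume.restrict s)) :
    LqNorm q s (fun u => g u + h u) ≤ LpAddConst q * (LqNorm q s g + LqNorm q s h) := by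
  simp only [lqNorm_eq_eLpNorm hq]
  exact eLpNorm_add_le' hg.aestronglyMeasurable hh.aestronglyMeasurable q

theorem lqNorm_indicator (hq : q ≠ 0) (ht : MeasurableSet t) (g : ℝ → ℝ≥0∞) :
    LqNorm q s (t.indicator g) = LqNorm q (t ∩ s) g := by
  simp only [lqNorm_eq_eLpNorm hq, eLpNorm_indicator_eq_eLpNorm_restrict ht,
    Measure.restrict_restrict ht]

theorem lqNorm_union_le (hq : q ≠ 0) (hs : MeasurableSet s) (ht : MeasurableSet t)
    (hg : AEMeasurable g (volume.restrict (s ∪ t))) :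
    LqNorm q (s ∪ t) g ≤ LpAddConst q * (LqNorm q s g + LqNorm q t g) := by
  have hle : ∀ u ∈ s ∪ t, g u ≤ s.indicator g u + t.indicator g u := by
    rintro u (hu | hu)
    · simp [hu]
    · simp [hu]
  refine ((lqNorm_mono hq (hs.union ht) hle).trans
    (lqNorm_add_le hq (hg.indicator hs) (hg.indicator ht))).trans_eq ?_
  rw [lqNorm_indicator hq hs, lqNorm_indicator hq ht, inter_eq_left.2 subset_union_left,
    inter_eq_left.2 subset_union_right]

end LqNorm

section KFunctional

variable {G : Type*} [AddCommGroup G] {N₀ N₁ : G → ℝ≥0∞} {κ : ℝ≥0∞} {t u : ℝ} {f : G}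

/-- An extended-real-valued quasi-seminorm with quasi-triangle constant `κ` on an abelian group.
It is the structure on `N₀` and `N₁` under which the K-functional is studied. -/
structure IsQuasiSeminorm (κ : ℝ≥0∞) (N : G → ℝ≥0∞) : Prop where
  one_le : 1 ≤ κ
  map_zero : N 0 = 0
  map_neg : ∀ x, N (-x) = N x
  map_add_le : ∀ x y, N (x + y) ≤ κ * (N x + N y)

theorem IsQuasiSeminorm.map_sub_le {N : G → ℝ≥0∞} (h : IsQuasiSeminorm κ N) (x y : G) :
    N (x - y) ≤ κ * (N x + N y) := by
  simpa only [sub_eq_add_neg, h.map_neg] using h.map_add_le x (-y)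

theorem QuasiBanach.exists_isQuasiSeminorm (A₀ A₁ : QuasiBanach E) :
    ∃ κ : ℝ≥0∞, κ ≠ ∞ ∧ IsQuasiSeminorm κ A₀.N ∧ IsQuasiSeminorm κ A₁.N := by
  obtain ⟨κ₀, h₀, h₀', hA₀⟩ := A₀.quasi
  obtain ⟨κ₁, -, h₁', hA₁⟩ := A₁.quasi
  have map_neg (A : QuasiBanach E) (x : E) : A.N (-x) = A.N x := by simpa using A.smul (-1) x
  refine ⟨max κ₀ κ₁, (max_lt h₀'.lt_top h₁'.lt_top).ne,
    ⟨le_max_of_le_left h₀, A₀.zero, map_neg A₀, fun x y => (hA₀ x y).trans ?_⟩,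
    ⟨le_max_of_le_left h₀, A₁.zero, map_neg A₁, fun x y => (hA₁ x y).trans ?_⟩⟩
  · gcongr; exact le_max_left _ _
  · gcongr; exact le_max_right _ _

theorem kf_le (N₀ N₁ : G → ℝ≥0∞) (t : ℝ) (f g : G) :
    Kf N₀ N₁ t f ≤ N₀ g + ENNReal.ofReal t * N₁ (f - g) :=
  iInf_le _ g

theorem kf_le_left (h₁ : N₁ 0 = 0) (N₀ : G → ℝ≥0∞) (t : ℝ) (f : G) : Kf N₀ N₁ t f ≤ N₀ f := by
  simpa [h₁] using kf_le N₀ N₁ t f f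

theorem kf_le_right (h₀ : N₀ 0 = 0) (N₁ : G → ℝ≥0∞) (t : ℝ) (f : G) :
    Kf N₀ N₁ t f ≤ ENNReal.ofReal t * N₁ f := by
  simpa [h₀] using kf_le N₀ N₁ t f 0

theorem le_const_mul_kf_add {C x y : ℝ≥0∞} (hC : C ≠ ∞)
    (h : ∀ g, x ≤ C * (N₀ g + ENNReal.ofReal t * N₁ (f - g) + y)) :
    x ≤ C * (Kf N₀ N₁ t f + y) := by
  rw [Kf, ENNReal.iInf_add, ENNReal.mul_iInf fun hC' => absurd hC' hC]
  exact le_iInf h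

theorem kf_mono (N₀ N₁ : G → ℝ≥0∞) (f : G) : Monotone fun u => Kf N₀ N₁ u f := fun s t hst =>
  iInf_mono fun g => by gcongr

theorem measurable_kf (N₀ N₁ : G → ℝ≥0∞) (f : G) : Measurable fun u => Kf N₀ N₁ u f :=
  (kf_mono N₀ N₁ f).measurable

theorem ofReal_div_mul_kf_le (N₀ N₁ : G → ℝ≥0∞) (f : G) (hu : 0 < u) (hut : u ≤ t) :
    ENNReal.ofReal (u / t) * Kf N₀ N₁ t f ≤ Kf N₀ N₁ u f := by
  have ht : 0 < t := hu.trans_le hut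
  refine le_iInf fun g => ?_
  calc ENNReal.ofReal (u / t) * Kf N₀ N₁ t f
      ≤ ENNReal.ofReal (u / t) * (N₀ g + ENNReal.ofReal t * N₁ (f - g)) := by
        gcongr; exact kf_le N₀ N₁ t f g
    _ = ENNReal.ofReal (u / t) * N₀ g + ENNReal.ofReal u * N₁ (f - g) := by
        rw [mul_add, ← mul_assoc, ← ENNReal.ofReal_mul (by positivity), div_mul_cancel₀ _ ht.ne']
    _ ≤ N₀ g + ENNReal.ofReal u * N₁ (f - g) := by
        gcongr
        exact mul_le_of_le_one_left' (ENNReal.ofReal_le_one.2 ((div_le_one ht).2 hut))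

theorem IsQuasiSeminorm.kf (h₀ : IsQuasiSeminorm κ N₀) (h₁ : IsQuasiSeminorm κ N₁)
    (hκ : κ ≠ ∞) (t : ℝ) : IsQuasiSeminorm κ (Kf N₀ N₁ t) where
  one_le := h₀.one_le
  map_zero := le_zero_iff.1 ((kf_le_left h₁.map_zero N₀ t 0).trans_eq h₀.map_zero)
  map_neg f := (Equiv.neg G).iInf_congr fun g => by
    simp only [Equiv.neg_apply, h₀.map_neg, sub_neg_eq_add]
    rw [← h₁.map_neg, neg_add', sub_eq_add_neg]
  map_add_le f f' := by
    refine le_const_mul_kf_add hκ fun g => ?_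
    rw [add_comm _ (Kf N₀ N₁ t f')]
    refine le_const_mul_kf_add hκ fun g' => ?_
    calc Kf N₀ N₁ t (f + f')
        ≤ N₀ (g + g') + ENNReal.ofReal t * N₁ (f - g + (f' - g')) := by
          rw [← add_sub_add_comm]; exact kf_le N₀ N₁ t _ _
      _ ≤ κ * (N₀ g + N₀ g') + ENNReal.ofReal t * (κ * (N₁ (f - g) + N₁ (f' - g'))) := by
          gcongr
          · exact h₀.map_add_le g g'
          · exact h₁.map_add_le _ _
      _ = κ * (N₀ g' + ENNReal.ofReal t * N₁ (f' - g') +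
            (N₀ g + ENNReal.ofReal t * N₁ (f - g))) := by ring

end KFunctional

section Holmstedt

variable {G : Type*} [AddCommGroup G] {N₀ N₁ : G → ℝ≥0∞} {κ C D : ℝ≥0∞} {t u ρ : ℝ}
  {Γ : (ℝ → ℝ≥0∞) → ℝ≥0∞}

/-- The function `u ↦ min 1 (u / t)`, the profile of the K-functional of a vector whose two
quasi-norms are `1` and `1 / t`. -/
def unitRamp (t u : ℝ) : ℝ≥0∞ :=
  min 1 (ENNReal.ofReal (u / t))

/-- A monotone, homogeneous functional on functions on `(0, ∞)` that satisfies the quasi-triangle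
inequality with constant `D`. Only the values on `(0, ∞)` matter, and measurability is required
because lower Lebesgue integrals are not additive. -/
structure IsLatticeQuasiNorm (D : ℝ≥0∞) (Γ : (ℝ → ℝ≥0∞) → ℝ≥0∞) : Prop where
  mono : ∀ {k l : ℝ → ℝ≥0∞}, (∀ u, 0 < u → k u ≤ l u) → Γ k ≤ Γ l
  const_mul : ∀ {k : ℝ → ℝ≥0∞}, Measurable k → ∀ c : ℝ≥0∞, Γ (fun u => c * k u) = c * Γ k
  add_le : ∀ {k l : ℝ → ℝ≥0∞}, Measurable k → Measurable l →
    Γ (fun u => k u + l u) ≤ D * (Γ k + Γ l)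

@[fun_prop]
theorem measurable_unitRamp (t : ℝ) : Measurable (unitRamp t) := by
  unfold unitRamp
  fun_prop

theorem unitRamp_of_le (ht : 0 < t) (hut : u ≤ t) : unitRamp t u = ENNReal.ofReal (u / t) :=
  min_eq_right (ENNReal.ofReal_le_one.2 ((div_le_one ht).2 hut))

theorem unitRamp_of_ge (ht : 0 < t) (htu : t ≤ u) : unitRamp t u = 1 :=
  min_eq_left (ENNReal.one_le_ofReal.2 ((one_le_div ht).2 htu))

theorem kf_mul_unitRamp_le (N₀ N₁ : G → ℝ≥0∞) (f : G) (ht : 0 < t) (hu : 0 < u) :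
    Kf N₀ N₁ t f * unitRamp t u ≤ Kf N₀ N₁ u f := by
  rcases le_total u t with hut | htu
  · rw [unitRamp_of_le ht hut, mul_comm]
    exact ofReal_div_mul_kf_le N₀ N₁ f hu hut
  · rw [unitRamp_of_ge ht htu, mul_one]
    exact kf_mono N₀ N₁ f htu

theorem indicator_kf_le (h₀ : IsQuasiSeminorm κ N₀) (h₁ : IsQuasiSeminorm κ N₁) (hκ : κ ≠ ∞)
    (ht : 0 < t) (f g : G) (u : ℝ) :
    (Ioi t).indicator (fun u => Kf N₀ N₁ u f) u ≤
      κ * (Kf N₀ N₁ u (f - g) + N₀ g * unitRamp t u) := by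
  refine indicator_apply_le' (fun hu : t < u => ?_) fun _ => zero_le
  calc Kf N₀ N₁ u f = Kf N₀ N₁ u (f - g + g) := by rw [sub_add_cancel]
    _ ≤ κ * (Kf N₀ N₁ u (f - g) + Kf N₀ N₁ u g) := (h₀.kf h₁ hκ u).map_add_le _ _
    _ ≤ κ * (Kf N₀ N₁ u (f - g) + N₀ g * unitRamp t u) := by
      rw [unitRamp_of_ge ht hu.le, mul_one]
      gcongr
      exact kf_le_left h₁.map_zero N₀ u g

theorem kf_sub_le (h₀ : IsQuasiSeminorm κ N₀) (h₁ : IsQuasiSeminorm κ N₁) (hκ : κ ≠ ∞)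
    (ht : 0 < t) (f g : G) (u : ℝ) :
    Kf N₀ N₁ u (f - g) ≤
      κ * ((N₀ g + ENNReal.ofReal t * N₁ (f - g)) * unitRamp t u +
        (Ioi t).indicator (fun u => Kf N₀ N₁ u f) u) := by
  rcases le_or_gt u t with hut | htu
  · rw [indicator_of_notMem (notMem_Ioi.2 hut), add_zero, unitRamp_of_le ht hut]
    calc Kf N₀ N₁ u (f - g) ≤ ENNReal.ofReal u * N₁ (f - g) := kf_le_right h₀.map_zero N₁ u _
      _ = ENNReal.ofReal t * N₁ (f - g) * ENNReal.ofReal (u / t) := by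
        rw [mul_right_comm, ← ENNReal.ofReal_mul ht.le, mul_div_cancel₀ _ ht.ne']
      _ ≤ (N₀ g + ENNReal.ofReal t * N₁ (f - g)) * ENNReal.ofReal (u / t) := by
        gcongr; exact le_add_self
      _ ≤ _ := le_mul_of_one_le_left' h₀.one_le
  · rw [indicator_of_mem (mem_Ioi.2 htu), unitRamp_of_ge ht htu.le, mul_one]
    calc Kf N₀ N₁ u (f - g) ≤ κ * (Kf N₀ N₁ u f + Kf N₀ N₁ u g) :=
          (h₀.kf h₁ hκ u).map_sub_le f g
      _ ≤ κ * (N₀ g + ENNReal.ofReal t * N₁ (f - g) + Kf N₀ N₁ u f) := by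
        rw [add_comm (Kf N₀ N₁ u f)]
        gcongr
        exact (kf_le_left h₁.map_zero N₀ u g).trans le_self_add

theorem IsLatticeQuasiNorm.le_mul_apply_kf (hΓ : IsLatticeQuasiNorm D Γ) (ht : 0 < t)
    (hge : 1 ≤ C * (ENNReal.ofReal ρ * Γ (unitRamp t))) (N₀ N₁ : G → ℝ≥0∞) (f : G) :
    Kf N₀ N₁ t f ≤ C * (ENNReal.ofReal ρ * Γ fun u => Kf N₀ N₁ u f) :=
  calc Kf N₀ N₁ t f
      ≤ Kf N₀ N₁ t f * (C * (ENNReal.ofReal ρ * Γ (unitRamp t))) := le_mul_of_one_le_right' hge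
    _ = C * (ENNReal.ofReal ρ * Γ fun u => Kf N₀ N₁ t f * unitRamp t u) := by
      rw [hΓ.const_mul (measurable_unitRamp t)]; ring
    _ ≤ C * (ENNReal.ofReal ρ * Γ fun u => Kf N₀ N₁ u f) := by
      gcongr C * (ENNReal.ofReal ρ * ?_)
      exact hΓ.mono fun u hu => kf_mul_unitRamp_le N₀ N₁ f ht hu

theorem IsLatticeQuasiNorm.apply_indicator_kf_le (hΓ : IsLatticeQuasiNorm D Γ)
    (h₀ : IsQuasiSeminorm κ N₀) (h₁ : IsQuasiSeminorm κ N₁) (hκ : κ ≠ ∞) (ht : 0 < t) (f g : G) :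
    Γ ((Ioi t).indicator fun u => Kf N₀ N₁ u f) ≤
      κ * D * (Γ (fun u => Kf N₀ N₁ u (f - g)) + N₀ g * Γ (unitRamp t)) := by
  have hK := measurable_kf N₀ N₁ (f - g)
  calc Γ ((Ioi t).indicator fun u => Kf N₀ N₁ u f)
      ≤ Γ fun u => κ * (Kf N₀ N₁ u (f - g) + N₀ g * unitRamp t u) :=
        hΓ.mono fun u _ => indicator_kf_le h₀ h₁ hκ ht f g u
    _ = κ * Γ fun u => Kf N₀ N₁ u (f - g) + N₀ g * unitRamp t u := hΓ.const_mul (by fun_prop) κ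
    _ ≤ κ * (D * (Γ (fun u => Kf N₀ N₁ u (f - g)) + Γ fun u => N₀ g * unitRamp t u)) := by
        gcongr; exact hΓ.add_le hK (by fun_prop)
    _ = _ := by rw [hΓ.const_mul (measurable_unitRamp t), mul_assoc]

theorem IsLatticeQuasiNorm.apply_kf_sub_le (hΓ : IsLatticeQuasiNorm D Γ)
    (h₀ : IsQuasiSeminorm κ N₀) (h₁ : IsQuasiSeminorm κ N₁) (hκ : κ ≠ ∞) (ht : 0 < t) (f g : G) :
    Γ (fun u => Kf N₀ N₁ u (f - g)) ≤
      κ * D * ((N₀ g + ENNReal.ofReal t * N₁ (f - g)) * Γ (unitRamp t) +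
        Γ ((Ioi t).indicator fun u => Kf N₀ N₁ u f)) := by
  set z := N₀ g + ENNReal.ofReal t * N₁ (f - g)
  set R := (Ioi t).indicator fun u => Kf N₀ N₁ u f
  have hR : Measurable R := (measurable_kf N₀ N₁ f).indicator measurableSet_Ioi
  calc Γ (fun u => Kf N₀ N₁ u (f - g))
      ≤ Γ fun u => κ * (z * unitRamp t u + R u) :=
        hΓ.mono fun u _ => kf_sub_le h₀ h₁ hκ ht f g u
    _ = κ * Γ fun u => z * unitRamp t u + R u := hΓ.const_mul (by fun_prop) κ
    _ ≤ κ * (D * (Γ (fun u => z * unitRamp t u) + Γ R)) := by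
        gcongr; exact hΓ.add_le (by fun_prop) hR
    _ = _ := by rw [hΓ.const_mul (measurable_unitRamp t), mul_assoc]

theorem IsLatticeQuasiNorm.kf_add_le_mul_kf (hΓ : IsLatticeQuasiNorm D Γ)
    (h₀ : IsQuasiSeminorm κ N₀) (h₁ : IsQuasiSeminorm κ N₁) (hκ : κ ≠ ∞) (hD : D ≠ ∞)
    (hC : C ≠ ∞) (ht : 0 < t) (hle : ENNReal.ofReal ρ * Γ (unitRamp t) ≤ C)
    (hge : 1 ≤ C * (ENNReal.ofReal ρ * Γ (unitRamp t))) (f : G) :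
    Kf N₀ N₁ t f + ENNReal.ofReal ρ * Γ ((Ioi t).indicator fun u => Kf N₀ N₁ u f) ≤
      κ * (1 + C) * (1 + D) * Kf N₀ (fun g => Γ fun u => Kf N₀ N₁ u g) ρ f := by
  have hM : κ * (1 + C) * (1 + D) ≠ ∞ := by finiteness
  rw [← add_zero (Kf N₀ (fun g => Γ fun u => Kf N₀ N₁ u g) ρ f)]
  refine le_const_mul_kf_add hM fun g => ?_
  set Λ := Γ fun u => Kf N₀ N₁ u (f - g)
  have hKt : Kf N₀ N₁ t f ≤ κ * (N₀ g + C * (ENNReal.ofReal ρ * Λ)) :=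
    calc Kf N₀ N₁ t f = Kf N₀ N₁ t (g + (f - g)) := by rw [add_sub_cancel]
      _ ≤ κ * (Kf N₀ N₁ t g + Kf N₀ N₁ t (f - g)) := (h₀.kf h₁ hκ t).map_add_le _ _
      _ ≤ κ * (N₀ g + C * (ENNReal.ofReal ρ * Λ)) := by
        gcongr
        · exact kf_le_left h₁.map_zero N₀ t g
        · exact hΓ.le_mul_apply_kf ht hge N₀ N₁ (f - g)
  calc _ ≤ κ * (N₀ g + C * (ENNReal.ofReal ρ * Λ)) +
          ENNReal.ofReal ρ * (κ * D * (Λ + N₀ g * Γ (unitRamp t))) := by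
        gcongr
        exact hΓ.apply_indicator_kf_le h₀ h₁ hκ ht f g
    _ = κ * ((1 + D * (ENNReal.ofReal ρ * Γ (unitRamp t))) * N₀ g +
          (C + D) * (ENNReal.ofReal ρ * Λ)) := by ring
    _ ≤ κ * ((1 + D * C) * N₀ g + (C + D) * (ENNReal.ofReal ρ * Λ)) := by gcongr
    _ ≤ κ * ((1 + D * C) * N₀ g + (C + D) * (ENNReal.ofReal ρ * Λ)) +
          κ * ((C + D) * N₀ g + (1 + D * C) * (ENNReal.ofReal ρ * Λ)) := le_self_add
    _ = κ * (1 + C) * (1 + D) * (N₀ g + ENNReal.ofReal ρ * Λ + 0) := by ring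

theorem IsLatticeQuasiNorm.kf_le_mul_kf_add (hΓ : IsLatticeQuasiNorm D Γ)
    (h₀ : IsQuasiSeminorm κ N₀) (h₁ : IsQuasiSeminorm κ N₁) (hκ : κ ≠ ∞) (hD : D ≠ ∞)
    (hC : C ≠ ∞) (ht : 0 < t) (hle : ENNReal.ofReal ρ * Γ (unitRamp t) ≤ C) (f : G) :
    Kf N₀ (fun g => Γ fun u => Kf N₀ N₁ u g) ρ f ≤ κ * (1 + C) * (1 + D) *
      (Kf N₀ N₁ t f + ENNReal.ofReal ρ * Γ ((Ioi t).indicator fun u => Kf N₀ N₁ u f)) := by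
  have hM : κ * (1 + C) * (1 + D) ≠ ∞ := by finiteness
  refine le_const_mul_kf_add hM fun g => ?_
  set z := N₀ g + ENNReal.ofReal t * N₁ (f - g)
  set R := Γ ((Ioi t).indicator fun u => Kf N₀ N₁ u f)
  calc _ ≤ N₀ g + ENNReal.ofReal ρ * Γ (fun u => Kf N₀ N₁ u (f - g)) := kf_le _ _ ρ f g
    _ ≤ κ * z + ENNReal.ofReal ρ * (κ * D * (z * Γ (unitRamp t) + R)) := by
        gcongr
        · exact le_self_add.trans (le_mul_of_one_le_left' h₀.one_le)
        · exact hΓ.apply_kf_sub_le h₀ h₁ hκ ht f g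
    _ = κ * ((1 + D * (ENNReal.ofReal ρ * Γ (unitRamp t))) * z + D * (ENNReal.ofReal ρ * R)) := by
        ring
    _ ≤ κ * ((1 + D * C) * z + D * (ENNReal.ofReal ρ * R)) := by gcongr
    _ ≤ κ * ((1 + D * C) * z + D * (ENNReal.ofReal ρ * R)) +
          κ * ((C + D) * z + (1 + C + D * C) * (ENNReal.ofReal ρ * R)) := le_self_add
    _ = κ * (1 + C) * (1 + D) * (z + ENNReal.ofReal ρ * R) := by ring

end Holmstedt

section NestedNorm

variable {q r : ℝ≥0∞} {v w : ℝ → ℝ≥0∞} {t : ℝ}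

/-- The norm `‖w(s) ‖v k‖_{q,(0,s)}‖_{r,(0,∞)}`, whose value at the K-functional of a vector is
its quasi-norm in an `𝓛`-space. -/
def nestedNorm (q r : ℝ≥0∞) (v w k : ℝ → ℝ≥0∞) : ℝ≥0∞ :=
  LqNorm r (Ioi 0) fun s => w s * LqNorm q (Ioo 0 s) fun u => v u * k u

theorem measurable_lqNorm_Ioo (hq : q ≠ 0) (g : ℝ → ℝ≥0∞) :
    Measurable fun s => LqNorm q (Ioo 0 s) g :=
  Monotone.measurable fun _ _ hst => lqNorm_mono_set hq (Ioo_subset_Ioo_right hst) g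

theorem isLatticeQuasiNorm_nestedNorm (hq : q ≠ 0) (hr : r ≠ 0)
    (hv : AEMeasurable v (volume.restrict (Ioi 0)))
    (hw : AEMeasurable w (volume.restrict (Ioi 0))) :
    IsLatticeQuasiNorm (LpAddConst r * LpAddConst q) (nestedNorm q r v w) := by
  have hin {k : ℝ → ℝ≥0∞} (hk : Measurable k) (s : ℝ) :
      AEMeasurable (fun u => v u * k u) (volume.restrict (Ioo 0 s)) :=
    (hv.mono_measure (Measure.restrict_mono_set _ Ioo_subset_Ioi_self)).mul hk.aemeasurable
  have hout (g : ℝ → ℝ≥0∞) :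
      AEMeasurable (fun s => w s * LqNorm q (Ioo 0 s) g) (volume.restrict (Ioi 0)) :=
    hw.mul (measurable_lqNorm_Ioo hq g).aemeasurable
  refine ⟨fun {k l} hkl => ?_, fun {k} hk c => ?_, fun {k l} hk hl => ?_⟩
  · refine lqNorm_mono hr measurableSet_Ioi fun s _ => ?_
    gcongr w s * ?_
    refine lqNorm_mono hq measurableSet_Ioo fun u hu => ?_
    gcongr
    exact hkl u hu.1
  · simp only [nestedNorm, mul_left_comm _ c, lqNorm_const_mul hq (hin hk _),
      lqNorm_const_mul hr (hout _)]
  · let I (k : ℝ → ℝ≥0∞) (s : ℝ) : ℝ≥0∞ := LqNorm q (Ioo 0 s) fun u => v u * k u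
    calc nestedNorm q r v w (fun u => k u + l u)
        ≤ LqNorm r (Ioi 0) fun s => w s * (LpAddConst q * (I k s + I l s)) := by
          refine lqNorm_mono hr measurableSet_Ioi fun s _ => ?_
          simp only [mul_add (v _)]
          gcongr w s * ?_
          exact lqNorm_add_le hq (hin hk s) (hin hl s)
      _ = LpAddConst q * LqNorm r (Ioi 0) fun s => w s * I k s + w s * I l s := by
          simp only [mul_left_comm (w _), mul_add (w _)]
          exact lqNorm_const_mul hr ((hout _).add (hout _)) _
      _ ≤ LpAddConst q * (LpAddConst r * (nestedNorm q r v w k + nestedNorm q r v w l)) := by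
          gcongr
          exact lqNorm_add_le hr (hout _) (hout _)
      _ = _ := by ring

theorem nestedNorm_indicator_Ioi (hq : q ≠ 0) (hr : r ≠ 0) (ht : 0 < t) (v w k : ℝ → ℝ≥0∞) :
    nestedNorm q r v w ((Ioi t).indicator k) =
      LqNorm r (Ioi t) fun s => w s * LqNorm q (Ioo t s) fun u => v u * k u := by
  have hinner (s : ℝ) : LqNorm q (Ioo 0 s) (fun u => v u * (Ioi t).indicator k u) =
      LqNorm q (Ioo t s) fun u => v u * k u := by
    simp only [← indicator_mul_right]
    rw [lqNorm_indicator hq measurableSet_Ioi, Ioi_inter_Ioo, max_eq_left ht.le]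
  have houter : (fun s => w s * LqNorm q (Ioo t s) fun u => v u * k u) =
      (Ioi t).indicator fun s => w s * LqNorm q (Ioo t s) fun u => v u * k u := by
    refine (indicator_eq_self.2 fun s hs => ?_).symm
    contrapose! hs
    simp [Ioo_eq_empty_of_le (notMem_Ioi.1 hs), lqNorm_eq_eLpNorm hq]
  simp only [nestedNorm, hinner]
  rw [houter, lqNorm_indicator hr measurableSet_Ioi, lqNorm_indicator hr measurableSet_Ioi,
    inter_self, Ioi_inter_Ioi, max_eq_left ht.le]

end NestedNorm

section PowerWeight

variable {q : ℝ≥0∞} {S : Set ℝ} {s x β M : ℝ} {g : ℝ → ℝ}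

theorem lintegral_Ioc_rpow_sub_one (hs : 0 < s) (hβ : 0 < β) :
    ∫⁻ u in Ioc 0 s, ENNReal.ofReal (u ^ (β - 1)) = ENNReal.ofReal (s ^ β / β) := by
  have hint : IntegrableOn (fun u => u ^ (β - 1)) (Ioc 0 s) :=
    (intervalIntegrable_iff_integrableOn_Ioc_of_le hs.le).1
      (intervalIntegral.intervalIntegrable_rpow' (by linarith))
  rw [← ofReal_integral_eq_lintegral_ofReal hint
      (ae_restrict_of_forall_mem measurableSet_Ioc fun u hu => Real.rpow_nonneg hu.1.le _),
    ← intervalIntegral.integral_of_le hs.le, integral_rpow (Or.inl (by linarith)),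
    sub_add_cancel, Real.zero_rpow hβ.ne', sub_zero]

theorem lintegral_Ioi_rpow_sub_one (hs : 0 < s) (hβ : β < 0) :
    ∫⁻ u in Ioi s, ENNReal.ofReal (u ^ (β - 1)) = ENNReal.ofReal (s ^ β / -β) := by
  have hβ' : β - 1 < -1 := by linarith
  rw [← ofReal_integral_eq_lintegral_ofReal (integrableOn_Ioi_rpow_of_lt hβ' hs)
      (ae_restrict_of_forall_mem measurableSet_Ioi fun u hu => Real.rpow_nonneg (hs.trans hu).le _),
    integral_Ioi_rpow_of_lt hβ' hs, sub_add_cancel, neg_div, div_neg]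

theorem lqNorm_svWgt_rpow_le (hq : q ≠ 0) (hs : 0 < s) (hS : MeasurableSet S) (hS₀ : S ⊆ Ioi 0)
    (hle : ∀ u ∈ S, u ^ β ≤ s ^ β)
    (hint : q ≠ ∞ → ∫⁻ u in S, ENNReal.ofReal (u ^ (β * q.toReal - 1)) =
      ENNReal.ofReal (s ^ (β * q.toReal) / |β * q.toReal|)) :
    LqNorm q S (svWgt q fun u => u ^ β) ≤
      ENNReal.ofReal (|β * q.toReal|⁻¹ ^ q⁻¹.toReal) * ENNReal.ofReal (s ^ β) := by
  by_cases hq' : q = ∞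
  · subst hq'
    have hae : svWgt ∞ (fun u => u ^ β) ≤ᵐ[volume.restrict S] fun _ => ENNReal.ofReal (s ^ β) :=
      ae_restrict_of_forall_mem hS fun u hu => by
        simpa [svWgt] using ENNReal.ofReal_le_ofReal (hle u hu)
    simpa [LqNorm] using essSup_le_of_ae_le _ hae
  · have hq_pos : 0 < q.toReal := toReal_pos hq hq'
    have hpow : ∀ u ∈ S, svWgt q (fun u => u ^ β) u ^ q.toReal =
        ENNReal.ofReal (u ^ (β * q.toReal - 1)) := fun u hu => by
      have hu₀ : 0 < u := hS₀ hu
      rw [svWgt, ENNReal.ofReal_rpow_of_pos (by positivity), ← Real.rpow_add hu₀,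
        ← Real.rpow_mul hu₀.le, toReal_inv, add_mul, neg_mul, inv_mul_cancel₀ hq_pos.ne',
        neg_add_eq_sub]
    rw [LqNorm, if_neg hq', setLIntegral_congr_fun hS hpow, hint hq',
      ENNReal.ofReal_rpow_of_nonneg (by positivity) toReal_nonneg,
      ← ENNReal.ofReal_mul (by positivity), div_eq_inv_mul,
      Real.mul_rpow (by positivity) (by positivity), ← Real.rpow_mul hs.le, mul_assoc β,
      toReal_inv, mul_inv_cancel₀ hq_pos.ne', mul_one]

theorem aemeasurable_svWgt {μ : Measure ℝ} (hg : AEMeasurable g μ) (q : ℝ≥0∞) :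
    AEMeasurable (svWgt q g) μ := by
  unfold svWgt
  fun_prop

theorem exists_lqNorm_Ioc_svWgt_rpow_le (hq : q ≠ 0) (hβ : 0 < β) :
    ∃ C ≠ ∞, ∀ s > 0, LqNorm q (Ioc 0 s) (svWgt q fun u => u ^ β) ≤ C * ENNReal.ofReal (s ^ β) :=
  ⟨_, ENNReal.ofReal_ne_top, fun s hs =>
    lqNorm_svWgt_rpow_le hq hs measurableSet_Ioc Ioc_subset_Ioi_self
      (fun u hu => Real.rpow_le_rpow hu.1.le hu.2 hβ.le) fun hq' => by
        have hβq := mul_pos hβ (toReal_pos hq hq')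
        rw [abs_of_pos hβq, lintegral_Ioc_rpow_sub_one hs hβq]⟩

theorem exists_lqNorm_Ioi_svWgt_rpow_le (hq : q ≠ 0) (hβ : β < 0) :
    ∃ C ≠ ∞, ∀ s > 0, LqNorm q (Ioi s) (svWgt q fun u => u ^ β) ≤ C * ENNReal.ofReal (s ^ β) :=
  ⟨_, ENNReal.ofReal_ne_top, fun s hs =>
    lqNorm_svWgt_rpow_le hq hs measurableSet_Ioi (Ioi_subset_Ioi hs.le)
      (fun u hu => Real.rpow_le_rpow_of_nonpos hs (le_of_lt hu) hβ.le) fun hq' => by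
        have hβq := mul_neg_of_neg_of_pos hβ (toReal_pos hq hq')
        rw [abs_of_neg hβq, lintegral_Ioi_rpow_sub_one hs hβq]⟩

theorem lqNorm_svWgt_le_of_le_mul_rpow (hq : q ≠ 0) (hS : MeasurableSet S) (hS₀ : S ⊆ Ioi 0)
    (hM : 0 ≤ M) (hle : ∀ u ∈ S, g u ≤ M * u ^ β) :
    LqNorm q S (svWgt q g) ≤ ENNReal.ofReal M * LqNorm q S (svWgt q fun u => u ^ β) := by
  rw [← lqNorm_const_mul hq (aemeasurable_svWgt (by fun_prop) q)]
  refine lqNorm_mono hq hS fun u hu => ?_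
  have hu₀ : 0 < u := hS₀ hu
  rw [svWgt, svWgt, ← ENNReal.ofReal_mul hM, mul_left_comm]
  gcongr
  exact hle u hu

theorem lqNorm_svWgt_rpow_add_mul_le {b : ℝ → ℝ} {C : ℝ} {C' : ℝ≥0∞} (hq : q ≠ 0)
    (hS : MeasurableSet S) (hS₀ : S ⊆ Ioi 0) (hs : 0 < s) (hbs : 0 ≤ b s) (hC : 0 ≤ C)
    (hb : ∀ u ∈ S, u ^ β * b u ≤ C * (s ^ β * b s))
    (hpow : LqNorm q S (svWgt q fun u => u ^ β) ≤ C' * ENNReal.ofReal (s ^ β)) :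
    LqNorm q S (svWgt q fun u => u ^ (β + β) * b u) ≤
      ENNReal.ofReal C * C' * ENNReal.ofReal (s ^ (β + β) * b s) := by
  have hle : ∀ u ∈ S, u ^ (β + β) * b u ≤ C * (s ^ β * b s) * u ^ β := fun u hu => by
    have hu₀ : 0 < u := hS₀ hu
    rw [Real.rpow_add hu₀, mul_right_comm]
    exact mul_le_mul_of_nonneg_right (hb u hu) (by positivity)
  calc LqNorm q S (svWgt q fun u => u ^ (β + β) * b u)
      ≤ ENNReal.ofReal (C * (s ^ β * b s)) * LqNorm q S (svWgt q fun u => u ^ β) :=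
        lqNorm_svWgt_le_of_le_mul_rpow hq hS hS₀ (by positivity) hle
    _ ≤ ENNReal.ofReal (C * (s ^ β * b s)) * (C' * ENNReal.ofReal (s ^ β)) := by gcongr
    _ = ENNReal.ofReal C * C' * ENNReal.ofReal (s ^ (β + β) * b s) := by
        rw [Real.rpow_add hs, mul_assoc (s ^ β), ENNReal.ofReal_mul hC,
          ENNReal.ofReal_mul (p := s ^ β) (q := s ^ β * b s) (by positivity)]
        ring

theorem lqNorm_const (hq : q ≠ 0) (hS : volume S ≠ 0) (c : ℝ≥0∞) :
    LqNorm q S (fun _ => c) = c * volume S ^ q⁻¹.toReal := by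
  have hμ : volume.restrict S ≠ 0 := by simpa using hS
  rw [lqNorm_eq_eLpNorm hq, eLpNorm_const c hq hμ]
  simp

theorem ofReal_le_mul_lqNorm_svWgt_Ioo (hq : q ≠ 0) (hx : 0 < x)
    (hM : 0 ≤ M) (hle : ∀ u ∈ Ioo x (2 * x), M ≤ g u) :
    ENNReal.ofReal M ≤ ENNReal.ofReal (2 ^ q⁻¹.toReal) * LqNorm q (Ioo x (2 * x)) (svWgt q g) := by
  set p := q⁻¹.toReal
  have hconst : ENNReal.ofReal ((2 * x) ^ (-p) * M) * ENNReal.ofReal x ^ p ≤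
      LqNorm q (Ioo x (2 * x)) (svWgt q g) := by
    have hvol : volume (Ioo x (2 * x)) = ENNReal.ofReal x := by
      rw [Real.volume_Ioo]; ring_nf
    rw [← hvol, ← lqNorm_const hq (by simpa [hvol] using hx)]
    refine lqNorm_mono hq measurableSet_Ioo fun u hu => ENNReal.ofReal_le_ofReal ?_
    have hu₀ : 0 < u := hx.trans hu.1
    exact mul_le_mul (Real.rpow_le_rpow_of_nonpos hu₀ hu.2.le (neg_nonpos.2 toReal_nonneg))
      (hle u hu) hM (by positivity)
  refine le_trans (le_of_eq ?_) (mul_le_mul_right hconst _)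
  rw [ENNReal.ofReal_rpow_of_pos hx, ← ENNReal.ofReal_mul (by positivity),
    ← ENNReal.ofReal_mul (by positivity), Real.mul_rpow zero_le_two hx.le,
    Real.rpow_neg zero_le_two, Real.rpow_neg hx.le]
  congr 1
  field_simp

theorem ofReal_le_mul_lqNorm_svWgt {c : ℝ} (hq : q ≠ 0) (hx : 0 < x) (hS : Ioo x (2 * x) ⊆ S)
    (hM : 0 ≤ M) (hc : 0 < c) (hle : ∀ u ∈ Ioo x (2 * x), M ≤ c * g u) :
    ENNReal.ofReal M ≤
      ENNReal.ofReal c * ENNReal.ofReal (2 ^ q⁻¹.toReal) * LqNorm q S (svWgt q g) :=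
  calc ENNReal.ofReal M = ENNReal.ofReal c * ENNReal.ofReal (c⁻¹ * M) := by
        rw [← ENNReal.ofReal_mul hc.le, mul_inv_cancel_left₀ hc.ne']
    _ ≤ ENNReal.ofReal c *
          (ENNReal.ofReal (2 ^ q⁻¹.toReal) * LqNorm q (Ioo x (2 * x)) (svWgt q g)) := by
        gcongr
        exact ofReal_le_mul_lqNorm_svWgt_Ioo hq hx (by positivity) fun u hu =>
          (inv_mul_le_iff₀ hc).2 (hle u hu)
    _ ≤ ENNReal.ofReal c * ENNReal.ofReal (2 ^ q⁻¹.toReal) * LqNorm q S (svWgt q g) := by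
        rw [mul_assoc]
        gcongr
        exact lqNorm_mono_set hq hS _

end PowerWeight

section SlowlyVarying

variable {q : ℝ≥0∞} {a b f g f' g' : ℝ → ℝ} {S : Set ℝ} {α ε t : ℝ}

theorem EquivOn.pos (h : EquivOn S f g) (hf : ∀ t ∈ S, 0 < f t) : ∀ t ∈ S, 0 < g t := by
  obtain ⟨C, hC, h⟩ := h
  exact fun t ht => pos_of_mul_pos_right ((hf t ht).trans_le (h t ht).2) hC.le

theorem EquivOn.div (h : EquivOn S f g) (h' : EquivOn S f' g') (hf : ∀ t ∈ S, 0 < f t)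
    (hf' : ∀ t ∈ S, 0 < f' t) : EquivOn S (fun t => f t / f' t) fun t => g t / g' t := by
  have hg := h.pos hf
  have hg' := h'.pos hf'
  obtain ⟨C, hC, h⟩ := h
  obtain ⟨C', hC', h'⟩ := h'
  refine ⟨C * C', by positivity, fun t ht => ?_⟩
  obtain ⟨hft, hft', hgt, hgt'⟩ : 0 < f t ∧ 0 < f' t ∧ 0 < g t ∧ 0 < g' t :=
    ⟨hf t ht, hf' t ht, hg t ht, hg' t ht⟩
  constructor
  · calc (C * C')⁻¹ * (g t / g' t) = C⁻¹ * g t / (C' * g' t) := by field_simp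
      _ ≤ f t / f' t := div_le_div₀ hft.le (h t ht).1 hft' (h' t ht).2
  · calc f t / f' t ≤ C * g t / (C'⁻¹ * g' t) :=
          div_le_div₀ (by positivity) (h t ht).2 (by positivity) (h' t ht).1
      _ = C * C' * (g t / g' t) := by field_simp

theorem EquivOn.exists_le_mul (h : EquivOn S f g) :
    ∃ C > 0, ∀ x ∈ S, ∀ y ∈ S, g x ≤ g y → f x ≤ C * f y := by
  obtain ⟨C, hC, h⟩ := h
  refine ⟨C * C, by positivity, fun x hx y hy hxy => ?_⟩
  calc f x ≤ C * g x := (h x hx).2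
    _ ≤ C * (C * f y) := by
      gcongr
      exact hxy.trans ((inv_mul_le_iff₀ hC).1 (h y hy).1)
    _ = C * C * f y := (mul_assoc _ _ _).symm

theorem SlowlyVarying.pos (hb : SlowlyVarying b) (ht : 0 < t) : 0 < b t :=
  hb.2.1 t ht

theorem SlowlyVarying.div (hb : SlowlyVarying b) (ha : SlowlyVarying a) :
    SlowlyVarying fun t => b t / a t := by
  have hpos {c : ℝ → ℝ} (hc : SlowlyVarying c) (δ : ℝ) : ∀ t ∈ Ioi (0 : ℝ), 0 < t ^ δ * c t :=
    fun t ht => mul_pos (Real.rpow_pos_of_pos ht δ) (hc.pos ht)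
  have hsplit {t : ℝ} (ht : t ∈ Ioi 0) (δ : ℝ) :
      t ^ δ * (b t / a t) = t ^ (δ / 2) * b t / (t ^ (-(δ / 2)) * a t) := by
    have ht₀ : 0 < t := ht
    have hat := ha.pos ht₀
    rw [Real.rpow_neg ht₀.le, ← add_halves δ, Real.rpow_add ht₀, add_halves]
    field_simp
  refine ⟨hb.1.div ha.1, fun t ht => div_pos (hb.pos ht) (ha.pos ht), fun ε hε => ?_⟩
  obtain ⟨⟨g, hg, hbg⟩, ⟨h, hh, hbh⟩⟩ := hb.2.2 (ε / 2) (half_pos hε)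
  obtain ⟨⟨g', hg', hag'⟩, ⟨h', hh', hah'⟩⟩ := ha.2.2 (ε / 2) (half_pos hε)
  have hg_pos := hbg.pos (hpos hb _)
  have hh_pos := hbh.pos (hpos hb _)
  have hg_pos' := hag'.pos (hpos ha _)
  have hh_pos' := hah'.pos (hpos ha _)
  refine ⟨⟨fun t => g t / h' t, fun x hx y hy hxy => ?_, ?_⟩,
    ⟨fun t => h t / g' t, fun x hx y hy hxy => ?_, ?_⟩⟩
  · exact div_le_div₀ (hg_pos y hy).le (hg hx hy hxy) (hh_pos' y hy) (hh' hx hy hxy)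
  · obtain ⟨C, hC, hle⟩ := hbg.div hah' (hpos hb _) (hpos ha _)
    exact ⟨C, hC, fun t ht => by simpa only [hsplit ht ε] using hle t ht⟩
  · exact div_le_div₀ (hh_pos x hx).le (hh hx hy hxy) (hg_pos' x hx) (hg' hx hy hxy)
  · obtain ⟨C, hC, hle⟩ := hbh.div hag' (hpos hb _) (hpos ha _)
    exact ⟨C, hC, fun t ht => by
      simpa only [hsplit ht (-ε), neg_div, neg_neg] using hle t ht⟩

theorem SlowlyVarying.exists_rpow_mul_le (hb : SlowlyVarying b) (hε : 0 < ε) :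
    ∃ C > 0, ∀ s > 0, ∀ u ≥ s, s ^ ε * b s ≤ C * (u ^ ε * b u) := by
  obtain ⟨⟨g, hg, hbg⟩, -⟩ := hb.2.2 ε hε
  obtain ⟨C, hC, h⟩ := hbg.exists_le_mul
  exact ⟨C, hC, fun s hs u hsu =>
    h s hs u (hs.trans_le hsu) (hg hs (hs.trans_le hsu) hsu)⟩

theorem SlowlyVarying.exists_rpow_neg_mul_le (hb : SlowlyVarying b) (hε : 0 < ε) :
    ∃ C > 0, ∀ s > 0, ∀ u ≥ s, u ^ (-ε) * b u ≤ C * (s ^ (-ε) * b s) := by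
  obtain ⟨-, g, hg, hbg⟩ := hb.2.2 ε hε
  obtain ⟨C, hC, h⟩ := hbg.exists_le_mul
  exact ⟨C, hC, fun s hs u hsu =>
    h u (hs.trans_le hsu) s hs (hg hs (hs.trans_le hsu) hsu)⟩

theorem SlowlyVarying.aemeasurable_svWgt_rpow_mul (hb : SlowlyVarying b) (hS : S ⊆ Ioi 0)
    (q : ℝ≥0∞) (α : ℝ) : AEMeasurable (svWgt q fun u => u ^ α * b u) (volume.restrict S) := by
  have hb_meas := hb.1.mono_measure (Measure.restrict_mono_set volume hS)
  exact aemeasurable_svWgt (by fun_prop) q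

theorem SlowlyVarying.exists_lqNorm_Ioc_le (hb : SlowlyVarying b) (hq : q ≠ 0) (hα : 0 < α) :
    ∃ C ≠ ∞, ∀ s > 0, LqNorm q (Ioc 0 s) (svWgt q fun u => u ^ α * b u) ≤
      C * ENNReal.ofReal (s ^ α * b s) := by
  obtain ⟨C, hC, hbC⟩ := hb.exists_rpow_mul_le (half_pos hα)
  obtain ⟨C', hC', hpow⟩ := exists_lqNorm_Ioc_svWgt_rpow_le hq (half_pos hα)
  refine ⟨ENNReal.ofReal C * C', by finiteness, fun s hs => ?_⟩
  simpa only [add_halves] using lqNorm_svWgt_rpow_add_mul_le hq measurableSet_Ioc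
    Ioc_subset_Ioi_self hs (hb.pos hs).le hC.le (fun u hu => hbC u hu.1 s hu.2) (hpow s hs)

theorem SlowlyVarying.exists_lqNorm_Ioi_le (hb : SlowlyVarying b) (hq : q ≠ 0) (hα : α < 0) :
    ∃ C ≠ ∞, ∀ s > 0, LqNorm q (Ioi s) (svWgt q fun u => u ^ α * b u) ≤
      C * ENNReal.ofReal (s ^ α * b s) := by
  have hα' : α / 2 < 0 := by linarith
  obtain ⟨C, hC, hbC⟩ := hb.exists_rpow_neg_mul_le (neg_pos.2 hα')
  obtain ⟨C', hC', hpow⟩ := exists_lqNorm_Ioi_svWgt_rpow_le hq hα'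
  simp only [neg_neg] at hbC
  refine ⟨ENNReal.ofReal C * C', by finiteness, fun s hs => ?_⟩
  simpa only [add_halves] using lqNorm_svWgt_rpow_add_mul_le hq measurableSet_Ioi
    (Ioi_subset_Ioi hs.le) hs (hb.pos hs).le hC.le (fun u hu => hbC s hs u (le_of_lt hu))
    (hpow s hs)

theorem SlowlyVarying.exists_le_lqNorm_Ioo (hb : SlowlyVarying b) (hq : q ≠ 0) (hα : 0 < α) :
    ∃ C ≠ ∞, ∀ s > 0, ENNReal.ofReal (s ^ α * b s) ≤
      C * LqNorm q (Ioo 0 s) (svWgt q fun u => u ^ α * b u) := by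
  obtain ⟨C, hC, hbC⟩ := hb.exists_rpow_neg_mul_le one_pos
  refine ⟨ENNReal.ofReal (2 ^ α * (C * 2)) * ENNReal.ofReal (2 ^ q⁻¹.toReal), by finiteness,
    fun s hs => ?_⟩
  have hbs := hb.pos hs
  have hdouble : 2 * (s / 2) = s := by ring
  refine ofReal_le_mul_lqNorm_svWgt hq (half_pos hs) ?_ (by positivity) (by positivity)
    fun u hu => ?_
  · rw [hdouble]
    exact Ioo_subset_Ioo_left (half_pos hs).le
  · rw [hdouble] at hu
    have hu₀ : 0 < u := (half_pos hs).trans hu.1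
    have hsu : s ≤ 2 * u := by linarith [hu.1]
    have hbu := hb.pos hu₀
    have hle : b s ≤ C * 2 * b u := by
      have h := hbC u hu₀ s hu.2.le
      rw [Real.rpow_neg_one, Real.rpow_neg_one, inv_mul_le_iff₀ hs] at h
      calc b s ≤ s * (C * (u⁻¹ * b u)) := h
        _ ≤ 2 * u * (C * (u⁻¹ * b u)) := by gcongr
        _ = C * 2 * b u := by field_simp
    calc s ^ α * b s ≤ (2 * u) ^ α * (C * 2 * b u) := by gcongr
      _ = 2 ^ α * (C * 2) * (u ^ α * b u) := by rw [Real.mul_rpow zero_le_two hu₀.le]; ring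

theorem SlowlyVarying.exists_le_lqNorm_Ioi (hb : SlowlyVarying b) (hq : q ≠ 0) :
    ∃ C ≠ ∞, ∀ s > 0, ENNReal.ofReal (b s) ≤ C * LqNorm q (Ioi s) (svWgt q b) := by
  obtain ⟨C, hC, hbC⟩ := hb.exists_rpow_mul_le one_pos
  refine ⟨ENNReal.ofReal (C * 2) * ENNReal.ofReal (2 ^ q⁻¹.toReal), by finiteness,
    fun s hs => ofReal_le_mul_lqNorm_svWgt hq hs Ioo_subset_Ioi_self (hb.pos hs).le
      (by positivity) fun u hu => le_of_mul_le_mul_left ?_ hs⟩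
  have hbu := hb.pos (hs.trans hu.1)
  calc s * b s ≤ C * (u * b u) := by simpa only [Real.rpow_one] using hbC s hs u hu.1.le
    _ ≤ C * (2 * s * b u) := by gcongr; exact hu.2.le
    _ = s * (C * 2 * b u) := by ring

theorem SlowlyVarying.lqNorm_Ioi_ne_zero (hb : SlowlyVarying b) (hq : q ≠ 0) (ht : 0 < t) :
    LqNorm q (Ioi t) (svWgt q b) ≠ 0 := by
  obtain ⟨C, -, hC⟩ := hb.exists_le_lqNorm_Ioi hq
  intro h
  have hbt := hC t ht
  rw [h, mul_zero, nonpos_iff_eq_zero, ENNReal.ofReal_eq_zero] at hbt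
  exact hbt.not_gt (hb.pos ht)

theorem SlowlyVarying.lqNorm_Ioi_ne_top (hb : SlowlyVarying b) (hq : q ≠ 0)
    (hfin : LqNorm q (Ioi 1) (svWgt q b) ≠ ∞) (ht : 0 < t) :
    LqNorm q (Ioi t) (svWgt q b) ≠ ∞ := by
  obtain ⟨C, hC, hbC⟩ := hb.exists_rpow_mul_le one_pos
  obtain ⟨C', hC', hpow⟩ := exists_lqNorm_Ioi_svWgt_rpow_le hq neg_one_lt_zero
  have hb₁ := hb.pos one_pos
  have hsub : Ioc t 1 ⊆ Ioi t := Ioc_subset_Ioi_self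
  have hle : ∀ u ∈ Ioc t 1, b u ≤ C * b 1 * u ^ (-1 : ℝ) := fun u hu => by
    have hu₀ : 0 < u := ht.trans hu.1
    rw [Real.rpow_neg_one, ← div_eq_mul_inv, le_div_iff₀ hu₀, mul_comm]
    simpa using hbC u hu₀ 1 hu.2
  have hIoc : LqNorm q (Ioc t 1) (svWgt q b) ≠ ∞ := by
    refine ne_top_of_le_ne_top ?_ (lqNorm_svWgt_le_of_le_mul_rpow hq measurableSet_Ioc
      (hsub.trans (Ioi_subset_Ioi ht.le)) (by positivity) hle)
    exact ENNReal.mul_ne_top ENNReal.ofReal_ne_top (ne_top_of_le_ne_top (by finiteness)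
      ((lqNorm_mono_set hq hsub _).trans (hpow t ht)))
  have hunion : Ioi t ⊆ Ioc t 1 ∪ Ioi 1 := Ioi_subset_Ioc_union_Ioi
  have hmeas : AEMeasurable (svWgt q b) (volume.restrict (Ioc t 1 ∪ Ioi 1)) :=
    (aemeasurable_svWgt hb.1 q).mono_measure (Measure.restrict_mono_set _
      (union_subset (hsub.trans (Ioi_subset_Ioi ht.le)) (Ioi_subset_Ioi zero_le_one)))
  have hlt := LpAddConst_lt_top q
  exact ne_top_of_le_ne_top (by finiteness) ((lqNorm_mono_set hq hunion _).trans
    (lqNorm_union_le hq measurableSet_Ioc measurableSet_Ioi hmeas))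

end SlowlyVarying

section FundamentalFunction

variable {q r : ℝ≥0∞} {a b : ℝ → ℝ} {θ t u : ℝ}

theorem ofReal_rpow_sub_mul_eq_svWgt (hu : 0 < u) (q : ℝ≥0∞) (α : ℝ) (a : ℝ → ℝ) :
    ENNReal.ofReal (u ^ (α - q⁻¹.toReal) * a u) = svWgt q (fun u => u ^ α * a u) u := by
  rw [svWgt, sub_eq_neg_add, Real.rpow_add hu, mul_assoc]

theorem ofReal_inv_mul_ofReal_rpow_one_add_mul (ht : 0 < t) (α x : ℝ) :
    ENNReal.ofReal t⁻¹ * ENNReal.ofReal (t ^ (1 + α) * x) = ENNReal.ofReal (t ^ α * x) := by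
  rw [← ENNReal.ofReal_mul (by positivity), Real.rpow_add ht, Real.rpow_one,
    mul_assoc, inv_mul_cancel_left₀ ht.ne']

theorem svWgt_mul_ofReal_div (hu : 0 < u) (ht : 0 < t) (q : ℝ≥0∞) (α : ℝ) (a : ℝ → ℝ) :
    svWgt q (fun u => u ^ α * a u) u * ENNReal.ofReal (u / t) =
      ENNReal.ofReal t⁻¹ * svWgt q (fun u => u ^ (1 + α) * a u) u := by
  rw [svWgt, svWgt, ← ENNReal.ofReal_mul' (by positivity), ← ENNReal.ofReal_mul (by positivity),
    Real.rpow_add hu, Real.rpow_one]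
  congr 1
  field_simp

theorem svWgt_mul_unitRamp_le (hu : 0 < u) (ht : 0 < t) (q : ℝ≥0∞) (α : ℝ) (a : ℝ → ℝ) :
    svWgt q (fun u => u ^ α * a u) u * unitRamp t u ≤
      ENNReal.ofReal t⁻¹ * svWgt q (fun u => u ^ (1 + α) * a u) u := by
  rw [← svWgt_mul_ofReal_div hu ht]
  gcongr
  exact min_le_right _ _

theorem SlowlyVarying.exists_lqNorm_Ioc_mul_unitRamp_le (ha : SlowlyVarying a) (hq : q ≠ 0)
    (hθ' : θ < 1) :
    ∃ C ≠ ∞, ∀ t > 0, ∀ s > 0,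
      LqNorm q (Ioc 0 s) (fun u => svWgt q (fun u => u ^ (-θ) * a u) u * unitRamp t u) ≤
        C * (ENNReal.ofReal t⁻¹ * ENNReal.ofReal (s ^ (1 + -θ) * a s)) := by
  obtain ⟨C, hC, hle⟩ := ha.exists_lqNorm_Ioc_le hq (show 0 < 1 + -θ by linarith)
  refine ⟨C, hC, fun t ht s hs => ?_⟩
  have hmeas : AEMeasurable (svWgt q fun u => u ^ (1 + -θ) * a u) (volume.restrict (Ioc 0 s)) :=
    ha.aemeasurable_svWgt_rpow_mul Ioc_subset_Ioi_self q _
  calc _ ≤ LqNorm q (Ioc 0 s) fun u =>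
          ENNReal.ofReal t⁻¹ * svWgt q (fun u => u ^ (1 + -θ) * a u) u :=
        lqNorm_mono hq measurableSet_Ioc fun u hu => svWgt_mul_unitRamp_le hu.1 ht q _ a
    _ = ENNReal.ofReal t⁻¹ * LqNorm q (Ioc 0 s) (svWgt q fun u => u ^ (1 + -θ) * a u) :=
        lqNorm_const_mul hq hmeas _
    _ ≤ ENNReal.ofReal t⁻¹ * (C * ENNReal.ofReal (s ^ (1 + -θ) * a s)) := by
        gcongr
        exact hle s hs
    _ = _ := mul_left_comm _ _ _

theorem SlowlyVarying.exists_lqNorm_Ioi_mul_unitRamp_le (ha : SlowlyVarying a) (hq : q ≠ 0)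
    (hθ : 0 < θ) (hθ' : θ < 1) :
    ∃ C ≠ ∞, ∀ t > 0,
      LqNorm q (Ioi 0) (fun u => svWgt q (fun u => u ^ (-θ) * a u) u * unitRamp t u) ≤
        C * ENNReal.ofReal (t ^ (-θ) * a t) := by
  obtain ⟨C, hC, hIoc⟩ := ha.exists_lqNorm_Ioc_mul_unitRamp_le hq hθ'
  obtain ⟨C', hC', hIoi⟩ := ha.exists_lqNorm_Ioi_le hq (neg_lt_zero.2 hθ)
  have hlt := LpAddConst_lt_top q
  refine ⟨LpAddConst q * (C + C'), by finiteness, fun t ht => ?_⟩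
  have hmeas : AEMeasurable (fun u => svWgt q (fun u => u ^ (-θ) * a u) u * unitRamp t u)
      (volume.restrict (Ioc 0 t ∪ Ioi t)) := by
    rw [Ioc_union_Ioi_eq_Ioi ht.le]
    exact (ha.aemeasurable_svWgt_rpow_mul Subset.rfl q _).mul (measurable_unitRamp t).aemeasurable
  rw [← Ioc_union_Ioi_eq_Ioi ht.le, mul_assoc, add_mul]
  refine (lqNorm_union_le hq measurableSet_Ioc measurableSet_Ioi hmeas).trans ?_
  gcongr
  · simpa only [ofReal_inv_mul_ofReal_rpow_one_add_mul ht] using hIoc t ht t ht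
  · refine (lqNorm_mono hq measurableSet_Ioi fun u _ => ?_).trans (hIoi t ht)
    exact mul_le_of_le_one_right' (min_le_left _ _)

theorem SlowlyVarying.exists_le_lqNorm_Ioo_mul_unitRamp (ha : SlowlyVarying a) (hq : q ≠ 0)
    (hθ' : θ < 1) :
    ∃ C ≠ ∞, ∀ t > 0, ENNReal.ofReal (t ^ (-θ) * a t) ≤
      C * LqNorm q (Ioo 0 t) (fun u => svWgt q (fun u => u ^ (-θ) * a u) u * unitRamp t u) := by
  obtain ⟨C, hC, hle⟩ := ha.exists_le_lqNorm_Ioo hq (show 0 < 1 + -θ by linarith)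
  refine ⟨C, hC, fun t ht => ?_⟩
  have hmeas : AEMeasurable (svWgt q fun u => u ^ (1 + -θ) * a u) (volume.restrict (Ioo 0 t)) :=
    ha.aemeasurable_svWgt_rpow_mul Ioo_subset_Ioi_self q _
  calc ENNReal.ofReal (t ^ (-θ) * a t)
      = ENNReal.ofReal t⁻¹ * ENNReal.ofReal (t ^ (1 + -θ) * a t) :=
        (ofReal_inv_mul_ofReal_rpow_one_add_mul ht _ _).symm
    _ ≤ ENNReal.ofReal t⁻¹ *
          (C * LqNorm q (Ioo 0 t) (svWgt q fun u => u ^ (1 + -θ) * a u)) := by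
        gcongr
        exact hle t ht
    _ = C * LqNorm q (Ioo 0 t) fun u =>
          ENNReal.ofReal t⁻¹ * svWgt q (fun u => u ^ (1 + -θ) * a u) u := by
        rw [lqNorm_const_mul hq hmeas, mul_left_comm]
    _ ≤ C * LqNorm q (Ioo 0 t) fun u => svWgt q (fun u => u ^ (-θ) * a u) u * unitRamp t u := by
        gcongr
        refine lqNorm_mono hq measurableSet_Ioo fun u hu => ?_
        rw [unitRamp_of_le ht hu.2.le, svWgt_mul_ofReal_div hu.1 ht]

theorem exists_lqNorm_Ioc_mul_lqNorm_mul_unitRamp_le (ha : SlowlyVarying a)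
    (hb : SlowlyVarying b) (hq : q ≠ 0) (hr : r ≠ 0) (hθ' : θ < 1) :
    ∃ C ≠ ∞, ∀ t > 0,
      LqNorm r (Ioc 0 t) (fun s => svWgt r (fun s => b s / a s) s *
        LqNorm q (Ioo 0 s) fun u => svWgt q (fun u => u ^ (-θ) * a u) u * unitRamp t u) ≤
        C * ENNReal.ofReal (t ^ (-θ) * b t) := by
  obtain ⟨C, hC, hinner⟩ := ha.exists_lqNorm_Ioc_mul_unitRamp_le hq hθ'
  obtain ⟨C', hC', houter⟩ := hb.exists_lqNorm_Ioc_le hr (show 0 < 1 + -θ by linarith)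
  refine ⟨C * C', by finiteness, fun t ht => ?_⟩
  have hcancel {s : ℝ} (hs : 0 < s) :
      svWgt r (fun s => b s / a s) s * ENNReal.ofReal (s ^ (1 + -θ) * a s) =
        svWgt r (fun s => s ^ (1 + -θ) * b s) s := by
    have has := ha.pos hs
    rw [svWgt, svWgt, ← ENNReal.ofReal_mul' (by positivity)]
    congr 1
    field_simp
  calc _ ≤ LqNorm r (Ioc 0 t) fun s =>
          C * ENNReal.ofReal t⁻¹ * svWgt r (fun s => s ^ (1 + -θ) * b s) s := by
        refine lqNorm_mono hr measurableSet_Ioc fun s hs => ?_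
        rw [← hcancel hs.1, mul_left_comm, mul_assoc]
        gcongr svWgt r _ s * ?_
        exact (lqNorm_mono_set hq Ioo_subset_Ioc_self _).trans (hinner t ht s hs.1)
    _ = C * ENNReal.ofReal t⁻¹ * LqNorm r (Ioc 0 t) (svWgt r fun s => s ^ (1 + -θ) * b s) :=
        lqNorm_const_mul hr (hb.aemeasurable_svWgt_rpow_mul Ioc_subset_Ioi_self r _) _
    _ ≤ C * ENNReal.ofReal t⁻¹ * (C' * ENNReal.ofReal (t ^ (1 + -θ) * b t)) := by
        gcongr
        exact houter t ht
    _ = C * C' * ENNReal.ofReal (t ^ (-θ) * b t) := by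
        rw [← ofReal_inv_mul_ofReal_rpow_one_add_mul ht (-θ) (b t)]; ring

theorem exists_lqNorm_Ioi_mul_lqNorm_mul_unitRamp_le (ha : SlowlyVarying a)
    (hb : SlowlyVarying b) (hq : q ≠ 0) (hr : r ≠ 0) (hθ : 0 < θ) (hθ' : θ < 1) :
    ∃ C ≠ ∞, ∀ t > 0,
      LqNorm r (Ioi t) (fun s => svWgt r (fun s => b s / a s) s *
        LqNorm q (Ioo 0 s) fun u => svWgt q (fun u => u ^ (-θ) * a u) u * unitRamp t u) ≤
        C * (ENNReal.ofReal (t ^ (-θ) * a t) *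
          LqNorm r (Ioi t) (svWgt r fun s => b s / a s)) := by
  obtain ⟨C, hC, hinner⟩ := ha.exists_lqNorm_Ioi_mul_unitRamp_le hq hθ hθ'
  refine ⟨C, hC, fun t ht => ?_⟩
  have hw := (aemeasurable_svWgt (hb.div ha).1 r).mono_measure
    (Measure.restrict_mono_set volume (Ioi_subset_Ioi ht.le))
  rw [← mul_assoc, ← lqNorm_const_mul hr hw]
  refine lqNorm_mono hr measurableSet_Ioi fun s _ => ?_
  rw [mul_comm]
  gcongr
  exact (lqNorm_mono_set hq Ioo_subset_Ioi_self _).trans (hinner t ht)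

theorem SlowlyVarying.exists_ofReal_rpow_mul_le (ha : SlowlyVarying a) (hb : SlowlyVarying b)
    (hr : r ≠ 0) (α : ℝ) :
    ∃ C ≠ ∞, ∀ t > 0, ENNReal.ofReal (t ^ α * b t) ≤
      C * (ENNReal.ofReal (t ^ α * a t) *
        LqNorm r (Ioi t) (svWgt r fun s => b s / a s)) := by
  obtain ⟨C, hC, hW⟩ := (hb.div ha).exists_le_lqNorm_Ioi hr
  refine ⟨C, hC, fun t ht => ?_⟩
  have hat := ha.pos ht
  calc ENNReal.ofReal (t ^ α * b t)
      = ENNReal.ofReal (t ^ α * a t) * ENNReal.ofReal (b t / a t) := by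
        rw [← ENNReal.ofReal_mul (by positivity), mul_assoc, mul_div_cancel₀ _ hat.ne']
    _ ≤ ENNReal.ofReal (t ^ α * a t) *
          (C * LqNorm r (Ioi t) (svWgt r fun s => b s / a s)) := by
        gcongr
        exact hW t ht
    _ = _ := mul_left_comm _ _ _

theorem exists_nestedNorm_unitRamp_le (ha : SlowlyVarying a) (hb : SlowlyVarying b) (hq : q ≠ 0)
    (hr : r ≠ 0) (hθ : 0 < θ) (hθ' : θ < 1) :
    ∃ C ≠ ∞, ∀ t > 0,
      nestedNorm q r (svWgt q fun u => u ^ (-θ) * a u) (svWgt r fun s => b s / a s) (unitRamp t) ≤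
        C * (ENNReal.ofReal (t ^ (-θ) * a t) *
          LqNorm r (Ioi t) (svWgt r fun s => b s / a s)) := by
  obtain ⟨C₁, hC₁, hIoc⟩ := exists_lqNorm_Ioc_mul_lqNorm_mul_unitRamp_le ha hb hq hr hθ'
  obtain ⟨C₂, hC₂, hIoi⟩ := exists_lqNorm_Ioi_mul_lqNorm_mul_unitRamp_le ha hb hq hr hθ hθ'
  obtain ⟨C₃, hC₃, hba⟩ := ha.exists_ofReal_rpow_mul_le hb hr (-θ)
  have hlt := LpAddConst_lt_top r
  refine ⟨LpAddConst r * (C₁ * C₃ + C₂), by finiteness, fun t ht => ?_⟩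
  let F (s : ℝ) : ℝ≥0∞ := svWgt r (fun s => b s / a s) s *
    LqNorm q (Ioo 0 s) fun u => svWgt q (fun u => u ^ (-θ) * a u) u * unitRamp t u
  have hF : AEMeasurable F (volume.restrict (Ioc 0 t ∪ Ioi t)) := by
    rw [Ioc_union_Ioi_eq_Ioi ht.le]
    exact (aemeasurable_svWgt (hb.div ha).1 r).mul (measurable_lqNorm_Ioo hq _).aemeasurable
  calc LqNorm r (Ioi 0) F = LqNorm r (Ioc 0 t ∪ Ioi t) F := by rw [Ioc_union_Ioi_eq_Ioi ht.le]
    _ ≤ LpAddConst r * (LqNorm r (Ioc 0 t) F + LqNorm r (Ioi t) F) :=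
        lqNorm_union_le hr measurableSet_Ioc measurableSet_Ioi hF
    _ ≤ LpAddConst r * (C₁ * (C₃ * (ENNReal.ofReal (t ^ (-θ) * a t) *
          LqNorm r (Ioi t) (svWgt r fun s => b s / a s))) +
          C₂ * (ENNReal.ofReal (t ^ (-θ) * a t) *
            LqNorm r (Ioi t) (svWgt r fun s => b s / a s))) := by
        gcongr
        · exact (hIoc t ht).trans (by gcongr; exact hba t ht)
        · exact hIoi t ht
    _ = _ := by ring

theorem exists_le_nestedNorm_unitRamp (ha : SlowlyVarying a) (hb : SlowlyVarying b) (hq : q ≠ 0)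
    (hr : r ≠ 0) (hθ' : θ < 1) :
    ∃ C ≠ ∞, ∀ t > 0,
      ENNReal.ofReal (t ^ (-θ) * a t) * LqNorm r (Ioi t) (svWgt r fun s => b s / a s) ≤ C *
        nestedNorm q r (svWgt q fun u => u ^ (-θ) * a u) (svWgt r fun s => b s / a s)
          (unitRamp t) := by
  obtain ⟨C, hC, hle⟩ := ha.exists_le_lqNorm_Ioo_mul_unitRamp hq hθ'
  refine ⟨C, hC, fun t ht => ?_⟩
  let F (s : ℝ) : ℝ≥0∞ :=
    LqNorm q (Ioo 0 s) fun u => svWgt q (fun u => u ^ (-θ) * a u) u * unitRamp t u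
  have hw := (aemeasurable_svWgt (hb.div ha).1 r).mono_measure
    (Measure.restrict_mono_set volume (Ioi_subset_Ioi ht.le))
  calc _ ≤ C * F t * LqNorm r (Ioi t) (svWgt r fun s => b s / a s) := by
        gcongr
        exact hle t ht
    _ = C * LqNorm r (Ioi t) fun s => F t * svWgt r (fun s => b s / a s) s := by
        rw [lqNorm_const_mul hr hw, mul_assoc]
    _ ≤ C * LqNorm r (Ioi t) fun s => svWgt r (fun s => b s / a s) s * F s := by
        gcongr C * ?_
        refine lqNorm_mono hr measurableSet_Ioi fun s hs => ?_
        rw [mul_comm]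
        gcongr
        exact lqNorm_mono_set hq (Ioo_subset_Ioo_right (le_of_lt hs)) _
    _ ≤ _ := by
        gcongr C * ?_
        exact lqNorm_mono_set hr (Ioi_subset_Ioi ht.le) _

end FundamentalFunction

section WeightedNorm

variable {q r : ℝ≥0∞} {a b : ℝ → ℝ} {θ t x : ℝ}

theorem ofReal_rpow_div_mul_ofReal_rpow_neg_mul {W : ℝ≥0∞} (ht : 0 < t) (hx : 0 < x)
    (hW₀ : W ≠ 0) (hW : W ≠ ∞) (θ : ℝ) :
    ENNReal.ofReal (t ^ θ / (x * W.toReal)) * (ENNReal.ofReal (t ^ (-θ) * x) * W) = 1 := by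
  lift W to NNReal using hW
  have hW_pos : 0 < (W : ℝ) := by simpa [pos_iff_ne_zero] using hW₀
  rw [coe_toReal, ← ENNReal.ofReal_coe_nnreal, ← ENNReal.ofReal_mul (by positivity),
    ← ENNReal.ofReal_mul (by positivity), Real.rpow_neg ht.le, ← ENNReal.ofReal_one]
  congr 1
  field_simp

theorem exists_ofReal_mul_nestedNorm_unitRamp_le (ha : SlowlyVarying a) (hb : SlowlyVarying b)
    (hq : q ≠ 0) (hr : r ≠ 0) (hθ : 0 < θ) (hθ' : θ < 1)
    (hfin : LqNorm r (Ioi 1) (svWgt r fun s => b s / a s) ≠ ∞) {ρ : ℝ → ℝ}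
    (hρ : ∀ t, ρ t = t ^ θ / (a t * (LqNorm r (Ioi t) (svWgt r fun s => b s / a s)).toReal)) :
    ∃ C ≠ ∞, ∀ t > 0,
      ENNReal.ofReal (ρ t) * nestedNorm q r (svWgt q fun u => u ^ (-θ) * a u)
        (svWgt r fun s => b s / a s) (unitRamp t) ≤ C ∧
      1 ≤ C * (ENNReal.ofReal (ρ t) * nestedNorm q r (svWgt q fun u => u ^ (-θ) * a u)
        (svWgt r fun s => b s / a s) (unitRamp t)) := by
  obtain ⟨C, hC, hle⟩ := exists_nestedNorm_unitRamp_le ha hb hq hr hθ hθ'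
  obtain ⟨C', hC', hge⟩ := exists_le_nestedNorm_unitRamp ha hb hq hr hθ'
  refine ⟨C + C', by finiteness, fun t ht => ?_⟩
  have hone : ENNReal.ofReal (ρ t) * (ENNReal.ofReal (t ^ (-θ) * a t) *
      LqNorm r (Ioi t) (svWgt r fun s => b s / a s)) = 1 := by
    rw [hρ]
    exact ofReal_rpow_div_mul_ofReal_rpow_neg_mul ht (ha.pos ht)
      ((hb.div ha).lqNorm_Ioi_ne_zero hr ht) ((hb.div ha).lqNorm_Ioi_ne_top hr hfin ht) θ
  constructor
  · refine (mul_le_mul_right (hle t ht) _).trans ?_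
    rw [mul_left_comm, hone, mul_one]
    exact le_self_add
  · rw [← hone, mul_left_comm (C + C')]
    exact mul_le_mul_right ((hge t ht).trans (mul_le_mul_left le_add_self _)) _

theorem normL_eq_nestedNorm {G : Type*} [AddCommGroup G] (hq : q ≠ 0) (N₀ N₁ : G → ℝ≥0∞)
    (θ : ℝ) (r : ℝ≥0∞) (b a : ℝ → ℝ) :
    normL N₀ N₁ θ r q b a = fun f =>
      nestedNorm q r (svWgt q fun u => u ^ (-θ) * a u) (svWgt r fun s => b s / a s)
        fun u => Kf N₀ N₁ u f := by
  ext f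
  rw [normL, nestedNorm]
  congr 1 with s
  congr 1
  refine lqNorm_congr hq measurableSet_Ioo fun u hu => ?_
  rw [ofReal_rpow_sub_mul_eq_svWgt hu.1]

theorem lqNorm_Ioi_mul_lqNorm_Ioo_eq_nestedNorm (hq : q ≠ 0) (hr : r ≠ 0) (ht : 0 < t) (θ : ℝ)
    (a b : ℝ → ℝ) (k : ℝ → ℝ≥0∞) :
    (LqNorm r (Ioi t) fun s => ENNReal.ofReal (s ^ (-(r⁻¹.toReal)) * (b s / a s)) *
      LqNorm q (Ioo t s) fun u => ENNReal.ofReal (u ^ (-θ - q⁻¹.toReal) * a u) * k u) =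
      nestedNorm q r (svWgt q fun u => u ^ (-θ) * a u) (svWgt r fun s => b s / a s)
        ((Ioi t).indicator k) := by
  rw [nestedNorm_indicator_Ioi hq hr ht]
  congr 1 with s
  congr 1
  refine lqNorm_congr hq measurableSet_Ioo fun u hu => ?_
  rw [ofReal_rpow_sub_mul_eq_svWgt (ht.trans hu.1)]

end WeightedNorm

theorem theorem14_general {G : Type*} [AddCommGroup G] {N₀ N₁ : G → ℝ≥0∞} {κ : ℝ≥0∞}
    (h₀ : IsQuasiSeminorm κ N₀) (h₁ : IsQuasiSeminorm κ N₁) (hκ : κ ≠ ∞)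
    {θ₁ : ℝ} (hθ₁ : 0 < θ₁) (hθ₁' : θ₁ < 1)
    {q₁ r₁ : ℝ≥0∞} (hq₁ : 0 < q₁) (hr₁ : 0 < r₁)
    {a₁ b₁ : ℝ → ℝ} (h_sv_a₁ : SlowlyVarying a₁) (h_sv_b₁ : SlowlyVarying b₁)
    (hfin : LqNorm r₁ (Ioi 1) (svWgt r₁ (fun s => b₁ s / a₁ s)) ≠ ∞)
    {c₁ ρ : ℝ → ℝ}
    (hc₁ : ∀ t, c₁ t = a₁ t * (LqNorm r₁ (Ioi t) (svWgt r₁ (fun s => b₁ s / a₁ s))).toReal)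
    (hρ : ∀ t, ρ t = t ^ θ₁ / c₁ t) :
    ∃ C : ℝ≥0∞, 0 < C ∧ C ≠ ∞ ∧ ∀ f : G, ∀ t : ℝ, 0 < t →
      C⁻¹ * (Kf N₀ N₁ t f + ENNReal.ofReal (ρ t) *
        LqNorm r₁ (Ioi t) (fun s =>
          ENNReal.ofReal (s ^ (-(r₁⁻¹.toReal)) * (b₁ s / a₁ s)) *
            LqNorm q₁ (Ioo t s) (fun u =>
              ENNReal.ofReal (u ^ (-θ₁ - q₁⁻¹.toReal) * a₁ u) * Kf N₀ N₁ u f)))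
          ≤ Kf N₀ (normL N₀ N₁ θ₁ r₁ q₁ b₁ a₁) (ρ t) f ∧
      Kf N₀ (normL N₀ N₁ θ₁ r₁ q₁ b₁ a₁) (ρ t) f
          ≤ C * (Kf N₀ N₁ t f + ENNReal.ofReal (ρ t) *
        LqNorm r₁ (Ioi t) (fun s =>
          ENNReal.ofReal (s ^ (-(r₁⁻¹.toReal)) * (b₁ s / a₁ s)) *
            LqNorm q₁ (Ioo t s) (fun u =>
              ENNReal.ofReal (u ^ (-θ₁ - q₁⁻¹.toReal) * a₁ u) * Kf N₀ N₁ u f))) := by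
  have hΓ := isLatticeQuasiNorm_nestedNorm hq₁.ne' hr₁.ne'
    (h_sv_a₁.aemeasurable_svWgt_rpow_mul Subset.rfl q₁ (-θ₁))
    (aemeasurable_svWgt (h_sv_b₁.div h_sv_a₁).1 r₁)
  obtain ⟨C, hC, hramp⟩ := exists_ofReal_mul_nestedNorm_unitRamp_le h_sv_a₁ h_sv_b₁ hq₁.ne'
    hr₁.ne' hθ₁ hθ₁' hfin fun t => (hρ t).trans (by rw [hc₁])
  have hqlt := LpAddConst_lt_top q₁
  have hrlt := LpAddConst_lt_top r₁
  have hκ_pos : κ ≠ 0 := (one_pos.trans_le h₀.one_le).ne'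
  have hM : κ * (1 + C) * (1 + LpAddConst r₁ * LpAddConst q₁) ≠ 0 := by simp [hκ_pos]
  have hM' : κ * (1 + C) * (1 + LpAddConst r₁ * LpAddConst q₁) ≠ ∞ := by finiteness
  refine ⟨_, pos_iff_ne_zero.2 hM, hM', fun f t ht => ?_⟩
  rw [normL_eq_nestedNorm hq₁.ne', lqNorm_Ioi_mul_lqNorm_Ioo_eq_nestedNorm hq₁.ne' hr₁.ne' ht,
    ENNReal.inv_mul_le_iff hM hM']
  obtain ⟨hle, hge⟩ := hramp t ht
  exact ⟨hΓ.kf_add_le_mul_kf h₀ h₁ hκ (by finiteness) hC ht hle hge f,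
    hΓ.kf_le_mul_kf_add h₀ h₁ hκ (by finiteness) hC ht hle f⟩

theorem theorem14
    (A₀ A₁ : QuasiBanach E)
    (hne : ∃ x : E, x ≠ 0 ∧ A₀.N x ≠ ∞ ∧ A₁.N x ≠ ∞)
    (θ₁ : ℝ) (hθ₁ : 0 < θ₁) (hθ₁' : θ₁ < 1)
    (q₁ r₁ : ℝ≥0∞) (hq₁ : 0 < q₁) (hr₁ : 0 < r₁)
    (a₁ b₁ : ℝ → ℝ)
    (h_sv_a₁ : SlowlyVarying a₁)
    (h_sv_b₁ : SlowlyVarying b₁)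
    (hfin : LqNorm r₁ (Ioi 1) (svWgt r₁ (fun s => b₁ s / a₁ s)) ≠ ∞)
    (c₁ ρ : ℝ → ℝ)
    (hc₁ : ∀ t, c₁ t = a₁ t * (LqNorm r₁ (Ioi t) (svWgt r₁ (fun s => b₁ s / a₁ s))).toReal)
    (hρ : ∀ t, ρ t = t ^ θ₁ / c₁ t) :
    ∃ C : ℝ≥0∞, 0 < C ∧ C ≠ ∞ ∧
      ∀ f : E,
        (∃ f₀ f₁, f = f₀ + f₁ ∧ A₀.N f₀ ≠ ∞ ∧ normL A₀.N A₁.N θ₁ r₁ q₁ b₁ a₁ f₁ ≠ ∞) →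
        ∀ t : ℝ, 0 < t →
          C⁻¹ * (Kf A₀.N A₁.N t f + ENNReal.ofReal (ρ t) *
            LqNorm r₁ (Ioi t) (fun s =>
              ENNReal.ofReal (s ^ (-(r₁⁻¹.toReal)) * (b₁ s / a₁ s)) *
                LqNorm q₁ (Ioo t s) (fun u =>
                  ENNReal.ofReal (u ^ (-θ₁ - q₁⁻¹.toReal) * a₁ u) * Kf A₀.N A₁.N u f)))
              ≤ Kf A₀.N (normL A₀.N A₁.N θ₁ r₁ q₁ b₁ a₁) (ρ t) f ∧
          Kf A₀.N (normL A₀.N A₁.N θ₁ r₁ q₁ b₁ a₁) (ρ t) f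
              ≤ C * (Kf A₀.N A₁.N t f + ENNReal.ofReal (ρ t) *
            LqNorm r₁ (Ioi t) (fun s =>
              ENNReal.ofReal (s ^ (-(r₁⁻¹.toReal)) * (b₁ s / a₁ s)) *
                LqNorm q₁ (Ioo t s) (fun u =>
                  ENNReal.ofReal (u ^ (-θ₁ - q₁⁻¹.toReal) * a₁ u) * Kf A₀.N A₁.N u f))) := by
  obtain ⟨κ, hκ, hA₀, hA₁⟩ := A₀.exists_isQuasiSeminorm A₁
  obtain ⟨C, hC, hC', h⟩ :=
    theorem14_general hA₀ hA₁ hκ hθ₁ hθ₁' hq₁ hr₁ h_sv_a₁ h_sv_b₁ hfin hc₁ hρ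
  exact ⟨C, hC, hC', fun f _ => h f⟩

end
end

section
/- (Theorem 15) Let 0 < θ₁ < 1, 0 ≤ θ < 1, 0 < q₁, r, r₁ ≤ ∞, a, a₁, b₁ ∈ SV, and ‖s^{-1/r₁} b₁(s)/a₁(s)‖_{r₁,(1,∞)} < ∞; if θ = 0 assume additionally ‖s^{-1/r} a(s)‖_{r,(1,∞)} < ∞. Put c₁(t) = a₁(t) ‖s^{-1/r₁} b₁(s)/a₁(s)‖_{r₁,(t,∞)} and ρ(t) = t^{θ₁}/c₁(t). Then (A₀, Ā^𝓛_{θ₁,r₁,b₁,q₁,a₁})_{θ,r;a} ≅ Ā_{η,r;a^#}, where η = θθ₁ and a^#(t) = c₁(t)^θ a(ρ(t)). -/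
open MeasureTheory Set ENNReal Filter

noncomputable section

variable {E : Type*} [AddCommGroup E] [Module ℝ E]

/-!
The quasi-norm of `X = Ā^𝓛` is only used through two estimates at each scale `t`, with
`ρ(t) = t ^ θ₁ / c₁(t)`: every `h` satisfies `K(t, h) ≲ ρ(t) ‖h‖_X`, and `ρ(t) ‖h‖_X ≲ κ` as soon as
`K(u, h)` is at most `κ u / t` for `u ≤ t` and at most `κ (u / t) ^ γ` for `u > t`, where `γ < θ₁`.
Applied to the pieces of a decomposition of `f` they give
`K(t, f; A₀, A₁) ≲ K(ρ(t), f; A₀, X) ≲ sup_m M ^ (-γ m) K(M ^ m t, f; A₀, A₁)`.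
Since `ρ` varies regularly with positive index, `ρ(M ^ k)` is a lacunary sequence for large `M`.
Discretizing the outer quasi-norm of `(A₀, X)` along `ρ(M ^ k)` and that of `(A₀, A₁)` along `M ^ k`
therefore performs the change of variables `u = ρ(t)`, although `ρ` need be neither continuous nor
monotone. As `θ < 1`, some `γ` between `θ θ₁` and `θ₁` makes the supremum over `m` harmless, by a
discrete Hardy inequality.
-/

section LpNorm

variable {α : Type*} [MeasurableSpace α] {μ : Measure α} {F G : α → ℝ≥0∞} {c p : ℝ≥0∞}

lemma eLpNorm_le_const_mul_of_ae_le (hc : c ≠ ∞) (h : ∀ᵐ x ∂μ, F x ≤ c * G x) :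
    eLpNorm F p μ ≤ c * eLpNorm G p μ := by
  lift c to NNReal using hc
  exact eLpNorm_le_nnreal_smul_eLpNorm_of_ae_le_mul' h p

lemma const_mul_eLpNorm_le : c * eLpNorm F p μ ≤ eLpNorm (fun x => c * F x) p μ := by
  have finite_case {k : ℝ≥0∞} (hk : k ≠ ∞) :
      k * eLpNorm F p μ ≤ eLpNorm (fun x => k * F x) p μ := by
    rcases eq_or_ne k 0 with rfl | hk₀
    · simp
    rw [ENNReal.mul_le_iff_le_inv hk₀ hk]
    refine eLpNorm_le_const_mul_of_ae_le (ENNReal.inv_ne_top.2 hk₀) (.of_forall fun x => ?_)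
    rw [← mul_assoc, ENNReal.inv_mul_cancel hk₀ hk, one_mul]
  rcases eq_or_ne c ∞ with rfl | hc
  · rw [← ENNReal.iSup_natCast, ENNReal.iSup_mul]
    refine iSup_le fun n => (finite_case (ENNReal.natCast_ne_top n)).trans ?_
    refine eLpNorm_mono_enorm fun x => ?_
    simp only [enorm_eq_self]
    gcongr
    exact le_iSup (fun k : ℕ => (k : ℝ≥0∞)) n
  · exact finite_case hc

lemma eLpNorm_restrict_union_le (hp : p ≠ 0) (s t : Set α) :
    eLpNorm F p (μ.restrict (s ∪ t)) ≤
      2 ^ p⁻¹.toReal * (eLpNorm F p (μ.restrict s) + eLpNorm F p (μ.restrict t)) := by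
  rcases eq_or_ne p ∞ with rfl | hp'
  · simp only [ENNReal.inv_top, ENNReal.toReal_zero, ENNReal.rpow_zero, one_mul,
      eLpNorm_exponent_top]
    refine essSup_le_of_ae_le _ ?_
    change ∀ᵐ x ∂(μ.restrict (s ∪ t)), ‖F x‖ₑ ≤ _
    rw [ae_restrict_union_iff]
    constructor
    · filter_upwards [enorm_ae_le_eLpNormEssSup F (μ.restrict s)] with x hx
      exact hx.trans le_self_add
    · filter_upwards [enorm_ae_le_eLpNormEssSup F (μ.restrict t)] with x hx
      exact hx.trans le_add_self
  · have hp₀ : 0 < p.toReal := ENNReal.toReal_pos hp hp'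
    simp only [eLpNorm_eq_lintegral_rpow_enorm_toReal hp hp', one_div, ENNReal.toReal_inv,
      enorm_eq_self]
    have hinv : 0 ≤ p.toReal⁻¹ := inv_nonneg.2 hp₀.le
    have key {x y : ℝ≥0∞} : (x + y) ^ p.toReal⁻¹ ≤
        2 ^ p.toReal⁻¹ * (x ^ p.toReal⁻¹ + y ^ p.toReal⁻¹) := by
      calc (x + y) ^ p.toReal⁻¹ ≤ (2 * max x y) ^ p.toReal⁻¹ := by
            gcongr
            rw [two_mul]
            exact add_le_add (le_max_left x y) (le_max_right x y)
        _ = 2 ^ p.toReal⁻¹ * max (x ^ p.toReal⁻¹) (y ^ p.toReal⁻¹) := by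
            rw [ENNReal.mul_rpow_of_nonneg _ _ hinv, (ENNReal.monotone_rpow_of_nonneg hinv).map_max]
        _ ≤ _ := by gcongr; exact max_le le_self_add le_add_self
    refine le_trans ?_ key
    gcongr
    exact lintegral_union_le _ s t

end LpNorm

/-- The scale-invariant measure `du/u` on `(0, ∞)`, as a measure on `ℝ`. Integrating against it
absorbs the factors `u ^ (-1/q)` of the interpolation quasi-norms. -/
def logMeasure : Measure ℝ :=
  (volume.restrict (Ioi 0)).withDensity fun u => ENNReal.ofReal u⁻¹

section LogMeasure

lemma ae_logMeasure : ae logMeasure = ae (volume.restrict (Ioi (0 : ℝ))) := by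
  have hpos : ∀ᵐ u ∂volume.restrict (Ioi (0 : ℝ)), ENNReal.ofReal u⁻¹ ≠ 0 := by
    filter_upwards [ae_restrict_mem measurableSet_Ioi] with u hu
    exact (ENNReal.ofReal_pos.2 (inv_pos.2 hu)).ne'
  exact le_antisymm (withDensity_absolutelyContinuous _ _).ae_le
    (withDensity_absolutelyContinuous' (by fun_prop) hpos).ae_le

lemma ae_logMeasure_pos : ∀ᵐ u ∂logMeasure, 0 < u := by
  rw [ae_logMeasure]
  exact ae_restrict_mem measurableSet_Ioi

lemma ae_logMeasure_restrict {s : Set ℝ} (hs : MeasurableSet s) (hs₀ : s ⊆ Ioi 0) :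
    ae (logMeasure.restrict s) = ae (volume.restrict s) := by
  rw [ae_restrict_eq hs, ae_logMeasure, ← ae_restrict_eq hs, Measure.restrict_restrict hs,
    inter_eq_left.2 hs₀]

lemma lintegral_logMeasure_restrict {s : Set ℝ} (hs : MeasurableSet s) (hs₀ : s ⊆ Ioi 0)
    (F : ℝ → ℝ≥0∞) :
    ∫⁻ u in s, F u ∂logMeasure = ∫⁻ u in s, ENNReal.ofReal u⁻¹ * F u := by
  rw [logMeasure, setLIntegral_withDensity_eq_setLIntegral_mul_non_measurable _ (by fun_prop) _ hs
    (by simp), Measure.restrict_restrict hs, inter_eq_left.2 hs₀]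
  rfl

lemma logMeasure_Ioc {x y : ℝ} (hx : 0 < x) (hxy : x ≤ y) :
    logMeasure (Ioc x y) = ENNReal.ofReal (Real.log (y / x)) := by
  have hy : 0 < y := hx.trans_le hxy
  have hinv : ∀ u ∈ Ioc x y, 0 ≤ u⁻¹ := fun u hu => inv_nonneg.2 (hx.trans hu.1).le
  have hint : IntegrableOn (fun u : ℝ => u⁻¹) (Ioc x y) := by
    rw [← intervalIntegrable_iff_integrableOn_Ioc_of_le hxy, intervalIntegrable_inv_iff]
    exact .inr (notMem_uIcc_of_lt hx hy)
  rw [← setLIntegral_one, lintegral_logMeasure_restrict measurableSet_Ioc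
    (fun u hu => hx.trans hu.1)]
  simp only [mul_one]
  rw [← ofReal_integral_eq_lintegral_ofReal hint (ae_restrict_of_forall_mem measurableSet_Ioc hinv),
    ← intervalIntegral.integral_of_le hxy, integral_inv_of_pos hx hy]

lemma LqNorm_eq_eLpNorm {q : ℝ≥0∞} (hq : q ≠ 0) {s : Set ℝ} (hs : MeasurableSet s)
    (hs₀ : s ⊆ Ioi 0) {g F : ℝ → ℝ≥0∞}
    (h : ∀ u ∈ s, g u = ENNReal.ofReal (u ^ (-q⁻¹.toReal)) * F u) :
    LqNorm q s g = eLpNorm F q (logMeasure.restrict s) := by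
  rcases eq_or_ne q ∞ with rfl | hq'
  · have hgF : g =ᵐ[volume.restrict s] F := by
      filter_upwards [ae_restrict_mem hs] with u hu
      simp [h u hu]
    rw [LqNorm, if_pos rfl, eLpNorm_exponent_top, essSup_congr_ae hgF]
    simp only [eLpNormEssSup, essSup, ae_logMeasure_restrict hs hs₀, enorm_eq_self]
  · have hq₀ : q.toReal ≠ 0 := (ENNReal.toReal_pos hq hq').ne'
    rw [LqNorm, if_neg hq', eLpNorm_eq_lintegral_rpow_enorm_toReal hq hq',
      lintegral_logMeasure_restrict hs hs₀, one_div, ENNReal.toReal_inv]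
    congr 1
    refine setLIntegral_congr_fun hs fun u hu => ?_
    have hu₀ : 0 < u := hs₀ hu
    simp only [enorm_eq_self]
    rw [h u hu, ENNReal.mul_rpow_of_nonneg _ _ ENNReal.toReal_nonneg,
      ENNReal.ofReal_rpow_of_pos (by positivity), ← Real.rpow_mul hu₀.le, ENNReal.toReal_inv,
      neg_mul, inv_mul_cancel₀ hq₀, Real.rpow_neg_one]

end LogMeasure

/-- Regular variation of index `α` up to equivalence: `f` is positive on `(0, ∞)` and, for every
`ε > 0`, `t ^ (ε - α) * f t` is equivalent to a non-decreasing function and `t ^ (-ε - α) * f t` to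
a non-increasing one. It is encoded as a bound on the increments of `log f` in the coordinate
`log t`, where products, powers and compositions are linear. -/
def RegularlyVarying (α : ℝ) (f : ℝ → ℝ) : Prop :=
  (∀ t, 0 < t → 0 < f t) ∧
    ∀ ε, 0 < ε → ∃ A, ∀ x y, 0 < x → 0 < y →
      |Real.log (f y) - Real.log (f x) - α * (Real.log y - Real.log x)| ≤
        A + ε * |Real.log y - Real.log x|

lemma le_exp_mul_rpow_mul_iff {u v x y : ℝ} (hu : 0 < u) (hv : 0 < v) (hx : 0 < x) (hy : 0 < y)
    (A β : ℝ) :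
    v ≤ Real.exp A * (y / x) ^ β * u ↔
      Real.log v - Real.log u ≤ A + β * (Real.log y - Real.log x) := by
  have hyx : 0 < y / x := div_pos hy hx
  rw [← Real.log_le_log_iff hv (by positivity), Real.log_mul (by positivity) hu.ne',
    Real.log_mul (by positivity) (by positivity), Real.log_exp, Real.log_rpow hyx,
    Real.log_div hy.ne' hx.ne', sub_le_iff_le_add]

namespace RegularlyVarying

variable {α β : ℝ} {f g : ℝ → ℝ}

lemma pos (hf : RegularlyVarying α f) {t : ℝ} (ht : 0 < t) : 0 < f t := hf.1 t ht

lemma of_forall_le (hpos : ∀ t, 0 < t → 0 < f t)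
    (h : ∀ ε, 0 < ε → ∃ A, ∀ x y, 0 < x → x ≤ y →
      |Real.log (f y) - Real.log (f x) - α * (Real.log y - Real.log x)| ≤
        A + ε * (Real.log y - Real.log x)) :
    RegularlyVarying α f := by
  refine ⟨hpos, fun ε hε => ?_⟩
  obtain ⟨A, hA⟩ := h ε hε
  have ordered {x y : ℝ} (hx : 0 < x) (hxy : x ≤ y) := (hA x y hx hxy).trans
    (add_le_add_right (mul_le_mul_of_nonneg_left (le_abs_self _) hε.le) A)
  refine ⟨A, fun x y hx hy => ?_⟩
  rcases le_total x y with hxy | hyx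
  · exact ordered hx hxy
  · have hneg : Real.log (f y) - Real.log (f x) - α * (Real.log y - Real.log x) =
        -(Real.log (f x) - Real.log (f y) - α * (Real.log x - Real.log y)) := by ring
    rw [hneg, abs_neg, abs_sub_comm (Real.log y)]
    exact ordered hy hyx

lemma exists_le_rpow (hf : RegularlyVarying α f) {ε : ℝ} (hε : 0 < ε) :
    ∃ C, 0 < C ∧ ∀ x y, 0 < x → x ≤ y →
      f y ≤ C * (y / x) ^ (α + ε) * f x ∧ f x ≤ C * (y / x) ^ (ε - α) * f y := by
  obtain ⟨A, hA⟩ := hf.2 ε hε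
  refine ⟨Real.exp A, Real.exp_pos A, fun x y hx hxy => ?_⟩
  have hy : 0 < y := hx.trans_le hxy
  have hbound := hA x y hx hy
  rw [abs_of_nonneg (sub_nonneg.2 (Real.log_le_log hx hxy)), abs_le] at hbound
  rw [le_exp_mul_rpow_mul_iff (hf.pos hx) (hf.pos hy) hx hy,
    le_exp_mul_rpow_mul_iff (hf.pos hy) (hf.pos hx) hx hy]
  constructor <;> linarith

lemma congr (hf : RegularlyVarying α f) (h : ∀ t, 0 < t → g t = f t) : RegularlyVarying α g := by
  refine ⟨fun t ht => h t ht ▸ hf.pos ht, fun ε hε => ?_⟩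
  obtain ⟨A, hA⟩ := hf.2 ε hε
  refine ⟨A, fun x y hx hy => ?_⟩
  rw [h x hx, h y hy]
  exact hA x y hx hy

lemma rpow (α : ℝ) : RegularlyVarying α (fun t => t ^ α) := by
  refine ⟨fun t ht => Real.rpow_pos_of_pos ht α, fun ε hε => ⟨0, fun x y hx hy => ?_⟩⟩
  rw [Real.log_rpow hx, Real.log_rpow hy, ← mul_sub, sub_self, abs_zero, zero_add]
  positivity

lemma mul (hf : RegularlyVarying α f) (hg : RegularlyVarying β g) :
    RegularlyVarying (α + β) (fun t => f t * g t) := by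
  refine ⟨fun t ht => mul_pos (hf.pos ht) (hg.pos ht), fun ε hε => ?_⟩
  obtain ⟨A, hA⟩ := hf.2 (ε / 2) (half_pos hε)
  obtain ⟨B, hB⟩ := hg.2 (ε / 2) (half_pos hε)
  refine ⟨A + B, fun x y hx hy => ?_⟩
  rw [Real.log_mul (hf.pos hx).ne' (hg.pos hx).ne', Real.log_mul (hf.pos hy).ne' (hg.pos hy).ne']
  refine (le_of_eq (congrArg abs ?_)).trans ((abs_add_le _ _).trans
    ((add_le_add (hA x y hx hy) (hB x y hx hy)).trans (le_of_eq ?_))) <;> ring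

lemma rpow_mul (hf : RegularlyVarying α f) (β : ℝ) :
    RegularlyVarying (β + α) (fun t => t ^ β * f t) :=
  (rpow β).mul hf

lemma comp (hf : RegularlyVarying α f) (hg : RegularlyVarying β g) :
    RegularlyVarying (α * β) (fun t => f (g t)) := by
  refine ⟨fun t ht => hf.pos (hg.pos ht), fun ε hε => ?_⟩
  obtain ⟨δ, hδ, hδε⟩ : ∃ δ, 0 < δ ∧ |α| * δ ≤ ε / 2 := by
    refine ⟨ε / 2 / (|α| + 1), by positivity, ?_⟩
    rw [mul_div_left_comm]
    exact mul_le_of_le_one_right (by positivity) ((div_le_one (by positivity)).2 (by simp))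
  obtain ⟨A, hA⟩ := hf.2 (ε / 2 / (|β| + δ)) (by positivity)
  obtain ⟨B, hB⟩ := hg.2 δ hδ
  refine ⟨A + ε / 2 / (|β| + δ) * B + |α| * B, fun x y hx hy => ?_⟩
  have hfg := hA (g x) (g y) (hg.pos hx) (hg.pos hy)
  have hgxy := hB x y hx hy
  set L := Real.log y - Real.log x
  set Lg := Real.log (g y) - Real.log (g x)
  set Lf := Real.log (f (g y)) - Real.log (f (g x))
  have hLg : |Lg| ≤ |β| * |L| + (B + δ * |L|) := by
    rw [← abs_mul]
    linarith [abs_sub_abs_le_abs_sub Lg (β * L)]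
  calc |Lf - α * β * L| = |(Lf - α * Lg) + α * (Lg - β * L)| := by ring_nf
    _ ≤ |Lf - α * Lg| + |α| * |Lg - β * L| := by rw [← abs_mul]; exact abs_add_le _ _
    _ ≤ A + ε / 2 / (|β| + δ) * (|β| * |L| + (B + δ * |L|)) + |α| * (B + δ * |L|) := by
        gcongr
        exact hfg.trans (by gcongr)
    _ = A + ε / 2 / (|β| + δ) * B + |α| * B + (ε / 2 + |α| * δ) * |L| := by
        field_simp
        ring
    _ ≤ A + ε / 2 / (|β| + δ) * B + |α| * B + ε * |L| := by
        gcongr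
        linarith

lemma inv (hf : RegularlyVarying α f) : RegularlyVarying (-α) (fun t => (f t)⁻¹) := by
  simpa only [Real.rpow_neg_one, neg_one_mul] using (rpow (-1)).comp hf

lemma div (hf : RegularlyVarying α f) (hg : RegularlyVarying β g) :
    RegularlyVarying (α - β) (fun t => f t / g t) := by
  simpa only [div_eq_mul_inv, sub_eq_add_neg] using hf.mul hg.inv

end RegularlyVarying

lemma EquivOn.exists_le_const_mul {s : Set ℝ} {f g : ℝ → ℝ} (h : EquivOn s f g) :
    ∃ C, 0 < C ∧ ∀ x ∈ s, ∀ y ∈ s, g x ≤ g y → f x ≤ C * f y := by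
  obtain ⟨C, hC, hfg⟩ := h
  refine ⟨C * C, by positivity, fun x hx y hy hxy => ?_⟩
  calc f x ≤ C * g x := (hfg x hx).2
    _ ≤ C * g y := by gcongr
    _ ≤ C * (C * f y) := by
        gcongr
        exact (inv_mul_le_iff₀ hC).1 (hfg y hy).1
    _ = C * C * f y := (mul_assoc C C _).symm

lemma SlowlyVarying.regularlyVarying {b : ℝ → ℝ} (hb : SlowlyVarying b) : RegularlyVarying 0 b := by
  obtain ⟨-, hpos, hequiv⟩ := hb
  refine .of_forall_le hpos fun ε hε => ?_
  obtain ⟨⟨g₁, hg₁, h₁⟩, ⟨g₂, hg₂, h₂⟩⟩ := hequiv ε hε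
  obtain ⟨C₁, hC₁, hb₁⟩ := h₁.exists_le_const_mul
  obtain ⟨C₂, hC₂, hb₂⟩ := h₂.exists_le_const_mul
  refine ⟨max (Real.log C₁) (Real.log C₂), fun x y hx hxy => ?_⟩
  have hy : 0 < y := hx.trans_le hxy
  have log_le {u v c C : ℝ} (hu : 0 < u) (hv : 0 < v) (hC : 0 < C)
      (h : u ^ c * b u ≤ C * (v ^ c * b v)) :
      c * Real.log u + Real.log (b u) ≤ Real.log C + (c * Real.log v + Real.log (b v)) := by
    have hbu : 0 < b u := hpos u hu
    have hbv : 0 < b v := hpos v hv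
    rwa [← Real.log_le_log_iff (by positivity) (by positivity),
      Real.log_mul hC.ne' (by positivity), Real.log_mul (by positivity) hbu.ne',
      Real.log_mul (by positivity) hbv.ne', Real.log_rpow hu, Real.log_rpow hv] at h
  have lower := log_le hx hy hC₁ (hb₁ x hx y hy (hg₁ hx hy hxy))
  have upper := log_le hy hx hC₂ (hb₂ y hy x hx (hg₂ hx hy hxy))
  rw [zero_mul, sub_zero, abs_le]
  constructor <;>
    linarith [le_max_left (Real.log C₁) (Real.log C₂), le_max_right (Real.log C₁) (Real.log C₂)]

/-- `F` changes by a factor at most `C` between points of `(0, ∞)` whose ratio is at most `D`,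
so that its values along a lacunary sequence determine it up to constants. -/
def ModerateWith (D : ℝ) (C : ℝ≥0∞) (F : ℝ → ℝ≥0∞) : Prop :=
  ∀ x y, 0 < x → 0 < y → x ≤ D * y → y ≤ D * x → F x ≤ C * F y

lemma ModerateWith.mul {D : ℝ} {C₁ C₂ : ℝ≥0∞} {F G : ℝ → ℝ≥0∞} (hF : ModerateWith D C₁ F)
    (hG : ModerateWith D C₂ G) : ModerateWith D (C₁ * C₂) (fun u => F u * G u) :=
  fun x y hx hy hxy hyx => by
    rw [mul_mul_mul_comm]
    exact mul_le_mul' (hF x y hx hy hxy hyx) (hG x y hx hy hxy hyx)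

lemma RegularlyVarying.exists_moderateWith {α : ℝ} {f : ℝ → ℝ} (hf : RegularlyVarying α f) (D : ℝ) :
    ∃ C : ℝ≥0∞, C ≠ ∞ ∧ ModerateWith D C (fun u => ENNReal.ofReal (f u)) := by
  obtain ⟨A, hA⟩ := hf.2 1 one_pos
  refine ⟨ENNReal.ofReal (Real.exp (A + (1 + |α|) * Real.log D)), ENNReal.ofReal_ne_top,
    fun x y hx hy hxy hyx => ?_⟩
  have hfx := hf.pos hx
  have hfy := hf.pos hy
  have hD : 0 < D := pos_of_mul_pos_left (hx.trans_le hxy) hy.le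
  rw [← ENNReal.ofReal_mul (Real.exp_pos _).le]
  refine ENNReal.ofReal_le_ofReal ?_
  have hlog : |Real.log y - Real.log x| ≤ Real.log D := by
    rw [← Real.log_le_log_iff hx (by positivity), Real.log_mul hD.ne' hy.ne'] at hxy
    rw [← Real.log_le_log_iff hy (by positivity), Real.log_mul hD.ne' hx.ne'] at hyx
    rw [abs_le]
    constructor <;> linarith
  have hα : |α * (Real.log y - Real.log x)| ≤ |α| * Real.log D := by
    rw [abs_mul]
    gcongr
  rw [← Real.log_le_log_iff hfx (by positivity), Real.log_mul (by positivity) hfy.ne', Real.log_exp]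
  have hbound := abs_le.1 (hA x y hx hy)
  linarith [abs_le.1 hα]

lemma exists_le_const_mul_eLpNorm_Ioc {q : ℝ≥0∞} (hq : q ≠ 0) {C : ℝ≥0∞} (hC : C ≠ ∞) :
    ∃ C' : ℝ≥0∞, C' ≠ ∞ ∧ ∀ F : ℝ → ℝ≥0∞, ModerateWith 2 C F → ∀ x t, 0 < x → x ≤ t → t ≤ 2 * x →
      F t ≤ C' * eLpNorm F q (logMeasure.restrict (Ioc x (2 * x))) := by
  set m := ENNReal.ofReal (Real.log 2) ^ (1 / q.toReal)
  have hlog : 0 < ENNReal.ofReal (Real.log 2) := ENNReal.ofReal_pos.2 (Real.log_pos one_lt_two)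
  have hm₀ : m ≠ 0 := (ENNReal.rpow_pos hlog ENNReal.ofReal_ne_top).ne'
  have hm : m ≠ ∞ := ENNReal.rpow_ne_top_of_nonneg (by positivity) ENNReal.ofReal_ne_top
  refine ⟨m⁻¹ * C, ENNReal.mul_ne_top (ENNReal.inv_ne_top.2 hm₀) hC,
    fun F hF x t hx hxt htx => ?_⟩
  have hmass : logMeasure.restrict (Ioc x (2 * x)) univ = ENNReal.ofReal (Real.log 2) := by
    rw [Measure.restrict_apply_univ, logMeasure_Ioc hx (by linarith),
      mul_div_cancel_right₀ _ hx.ne']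
  have hconst : eLpNorm (fun _ => F t) q (logMeasure.restrict (Ioc x (2 * x))) = F t * m := by
    rw [eLpNorm_const _ hq, hmass, enorm_eq_self]
    exact fun h => hlog.ne' (by rw [← hmass, h, Measure.coe_zero, Pi.zero_apply])
  have hFt : ∀ u ∈ Ioc x (2 * x), F t ≤ C * F u := fun u hu =>
    hF t u (by linarith) (by linarith [hu.1]) (by linarith [hu.1]) (by linarith [hu.2])
  rw [mul_assoc, ← ENNReal.mul_le_iff_le_inv hm₀ hm, mul_comm, ← hconst]
  exact eLpNorm_le_const_mul_of_ae_le hC (ae_restrict_of_forall_mem measurableSet_Ioc hFt)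

lemma lintegral_div_rpow_Ioc {p s : ℝ} (hp : 0 < p) (hs : 0 < s) :
    ∫⁻ u in Ioc 0 s, ENNReal.ofReal ((u / s) ^ p) ∂logMeasure = ENNReal.ofReal p⁻¹ := by
  have hpow {u : ℝ} (hu : u ∈ Ioc 0 s) :
      ENNReal.ofReal u⁻¹ * ENNReal.ofReal ((u / s) ^ p) =
        ENNReal.ofReal (s ^ (-p) * u ^ (p - 1)) := by
    rw [← ENNReal.ofReal_mul (inv_nonneg.2 hu.1.le), Real.div_rpow hu.1.le hs.le,
      Real.rpow_sub_one hu.1.ne', Real.rpow_neg hs.le]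
    ring_nf
  have hint : IntegrableOn (fun u : ℝ => s ^ (-p) * u ^ (p - 1)) (Ioc 0 s) := by
    rw [← intervalIntegrable_iff_integrableOn_Ioc_of_le hs.le]
    exact (intervalIntegral.intervalIntegrable_rpow' (by linarith)).const_mul _
  have hnonneg : ∀ u ∈ Ioc 0 s, 0 ≤ s ^ (-p) * u ^ (p - 1) := fun u hu => by
    have := hu.1
    positivity
  rw [lintegral_logMeasure_restrict measurableSet_Ioc (fun u hu => hu.1),
    setLIntegral_congr_fun measurableSet_Ioc (fun u hu => hpow hu),
    ← ofReal_integral_eq_lintegral_ofReal hint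
      (ae_restrict_of_forall_mem measurableSet_Ioc hnonneg),
    integral_const_mul, ← intervalIntegral.integral_of_le hs.le,
    integral_rpow (.inl (by linarith)), sub_add_cancel, Real.zero_rpow hp.ne', sub_zero,
    mul_div_assoc', ← Real.rpow_add hs, neg_add_cancel, Real.rpow_zero, one_div]

lemma lintegral_div_rpow_Ioi {p s : ℝ} (hp : p < 0) (hs : 0 < s) :
    ∫⁻ u in Ioi s, ENNReal.ofReal ((u / s) ^ p) ∂logMeasure = ENNReal.ofReal (-p)⁻¹ := by
  have hpow {u : ℝ} (hu : u ∈ Ioi s) :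
      ENNReal.ofReal u⁻¹ * ENNReal.ofReal ((u / s) ^ p) =
        ENNReal.ofReal (s ^ (-p) * u ^ (p - 1)) := by
    have hu₀ : 0 < u := hs.trans hu
    rw [← ENNReal.ofReal_mul (inv_nonneg.2 hu₀.le), Real.div_rpow hu₀.le hs.le,
      Real.rpow_sub_one hu₀.ne', Real.rpow_neg hs.le]
    ring_nf
  have hint : IntegrableOn (fun u : ℝ => s ^ (-p) * u ^ (p - 1)) (Ioi s) :=
    (integrableOn_Ioi_rpow_of_lt (by linarith) hs).const_mul _
  have hnonneg : ∀ u ∈ Ioi s, 0 ≤ s ^ (-p) * u ^ (p - 1) := fun u hu => by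
    have : 0 < u := hs.trans hu
    positivity
  rw [lintegral_logMeasure_restrict measurableSet_Ioi (fun u hu => hs.trans hu),
    setLIntegral_congr_fun measurableSet_Ioi (fun u hu => hpow hu),
    ← ofReal_integral_eq_lintegral_ofReal hint
      (ae_restrict_of_forall_mem measurableSet_Ioi hnonneg),
    integral_const_mul, integral_Ioi_rpow_of_lt (by linarith) hs, sub_add_cancel,
    mul_div_assoc', mul_neg, ← Real.rpow_add hs, neg_add_cancel, Real.rpow_zero, ← one_div,
    div_neg, neg_div]

lemma eLpNorm_div_rpow_le {q : ℝ≥0∞} (hq : q ≠ 0) {β s : ℝ} (hs : 0 < s) {S : Set ℝ}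
    (hS : MeasurableSet S) (hS₀ : S ⊆ Ioi 0) (hle : ∀ u ∈ S, (u / s) ^ β ≤ 1)
    (hint : q ≠ ∞ → ∫⁻ u in S, ENNReal.ofReal ((u / s) ^ (β * q.toReal)) ∂logMeasure ≤
      ENNReal.ofReal |β * q.toReal|⁻¹) :
    eLpNorm (fun u => ENNReal.ofReal ((u / s) ^ β)) q (logMeasure.restrict S) ≤
      ENNReal.ofReal |β * q.toReal|⁻¹ ^ q⁻¹.toReal := by
  rcases eq_or_ne q ∞ with rfl | hq'
  · rw [ENNReal.inv_top, ENNReal.toReal_zero, ENNReal.rpow_zero, eLpNorm_exponent_top]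
    refine essSup_le_of_ae_le _ (ae_restrict_of_forall_mem hS fun u hu => ?_)
    exact ENNReal.ofReal_le_one.2 (hle u hu)
  · rw [eLpNorm_eq_lintegral_rpow_enorm_toReal hq hq', one_div, ENNReal.toReal_inv]
    gcongr
    refine le_trans (le_of_eq (setLIntegral_congr_fun hS fun u hu => ?_)) (hint hq')
    have hus : 0 < u / s := div_pos (hS₀ hu) hs
    simp only [enorm_eq_self]
    rw [ENNReal.ofReal_rpow_of_pos (by positivity), ← Real.rpow_mul hus.le]

lemma exists_eLpNorm_div_rpow_Ioc_le {q : ℝ≥0∞} (hq : q ≠ 0) {β : ℝ} (hβ : 0 < β) :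
    ∃ C : ℝ≥0∞, C ≠ ∞ ∧ ∀ s, 0 < s →
      eLpNorm (fun u => ENNReal.ofReal ((u / s) ^ β)) q (logMeasure.restrict (Ioc 0 s)) ≤ C := by
  refine ⟨_, ENNReal.rpow_ne_top_of_nonneg ENNReal.toReal_nonneg ENNReal.ofReal_ne_top, fun s hs =>
    eLpNorm_div_rpow_le hq hs measurableSet_Ioc (fun u hu => hu.1) (fun u hu => ?_) fun hq' => ?_⟩
  · exact Real.rpow_le_one (div_nonneg hu.1.le hs.le) ((div_le_one hs).2 hu.2) hβ.le
  · have hp : 0 < β * q.toReal := mul_pos hβ (ENNReal.toReal_pos hq hq')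
    rw [lintegral_div_rpow_Ioc hp hs, abs_of_pos hp]

lemma exists_eLpNorm_div_rpow_Ioi_le {q : ℝ≥0∞} (hq : q ≠ 0) {β : ℝ} (hβ : β < 0) :
    ∃ C : ℝ≥0∞, C ≠ ∞ ∧ ∀ s, 0 < s →
      eLpNorm (fun u => ENNReal.ofReal ((u / s) ^ β)) q (logMeasure.restrict (Ioi s)) ≤ C := by
  refine ⟨_, ENNReal.rpow_ne_top_of_nonneg ENNReal.toReal_nonneg ENNReal.ofReal_ne_top, fun s hs =>
    eLpNorm_div_rpow_le hq hs measurableSet_Ioi (fun u hu => hs.trans hu) (fun u hu => ?_)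
      fun hq' => ?_⟩
  · exact Real.rpow_le_one_of_one_le_of_nonpos ((one_le_div hs).2 (le_of_lt hu)) hβ.le
  · have hp : β * q.toReal < 0 := mul_neg_of_neg_of_pos hβ (ENNReal.toReal_pos hq hq')
    rw [lintegral_div_rpow_Ioi hp hs, abs_of_neg hp]

namespace RegularlyVarying

variable {α : ℝ} {f : ℝ → ℝ} {q : ℝ≥0∞}

lemma exists_eLpNorm_Ioc_le (hf : RegularlyVarying α f) (hα : 0 < α) (hq : q ≠ 0) :
    ∃ C : ℝ≥0∞, C ≠ ∞ ∧ ∀ s, 0 < s →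
      eLpNorm (fun u => ENNReal.ofReal (f u)) q (logMeasure.restrict (Ioc 0 s)) ≤
        C * ENNReal.ofReal (f s) := by
  obtain ⟨C, hC, hfC⟩ := hf.exists_le_rpow (half_pos hα)
  obtain ⟨C', hC', hpow⟩ := exists_eLpNorm_div_rpow_Ioc_le hq (half_pos hα)
  refine ⟨ENNReal.ofReal C * C', ENNReal.mul_ne_top ENNReal.ofReal_ne_top hC', fun s hs => ?_⟩
  have hfs : 0 < f s := hf.pos hs
  have hle : ∀ u ∈ Ioc 0 s, ENNReal.ofReal (f u) ≤
      ENNReal.ofReal (C * f s) * ENNReal.ofReal ((u / s) ^ (α / 2)) := fun u hu => by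
    have hexp : (s / u) ^ (α / 2 - α) = (u / s) ^ (α / 2) := by
      rw [← inv_div u s, Real.inv_rpow (div_nonneg hu.1.le hs.le),
        ← Real.rpow_neg (div_nonneg hu.1.le hs.le)]
      ring_nf
    rw [← ENNReal.ofReal_mul (by positivity), mul_right_comm, ← hexp]
    exact ENNReal.ofReal_le_ofReal (hfC u s hu.1 hu.2).2
  refine (eLpNorm_le_const_mul_of_ae_le ENNReal.ofReal_ne_top
    (ae_restrict_of_forall_mem measurableSet_Ioc hle)).trans ?_
  rw [ENNReal.ofReal_mul hC.le, mul_right_comm]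
  gcongr
  exact hpow s hs

lemma exists_eLpNorm_Ioi_le (hf : RegularlyVarying α f) (hα : α < 0) (hq : q ≠ 0) :
    ∃ C : ℝ≥0∞, C ≠ ∞ ∧ ∀ s, 0 < s →
      eLpNorm (fun u => ENNReal.ofReal (f u)) q (logMeasure.restrict (Ioi s)) ≤
        C * ENNReal.ofReal (f s) := by
  obtain ⟨C, hC, hfC⟩ := hf.exists_le_rpow (ε := -α / 2) (by linarith)
  obtain ⟨C', hC', hpow⟩ := exists_eLpNorm_div_rpow_Ioi_le hq (β := α + -α / 2) (by linarith)
  refine ⟨ENNReal.ofReal C * C', ENNReal.mul_ne_top ENNReal.ofReal_ne_top hC', fun s hs => ?_⟩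
  have hfs : 0 < f s := hf.pos hs
  have hle : ∀ u ∈ Ioi s, ENNReal.ofReal (f u) ≤
      ENNReal.ofReal (C * f s) * ENNReal.ofReal ((u / s) ^ (α + -α / 2)) := fun u hu => by
    rw [← ENNReal.ofReal_mul (by positivity), mul_right_comm]
    exact ENNReal.ofReal_le_ofReal (hfC s u hs (le_of_lt hu)).1
  refine (eLpNorm_le_const_mul_of_ae_le ENNReal.ofReal_ne_top
    (ae_restrict_of_forall_mem measurableSet_Ioi hle)).trans ?_
  rw [ENNReal.ofReal_mul hC.le, mul_right_comm]
  gcongr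
  exact hpow s hs

end RegularlyVarying

/-- The `L_r(du/u)` quasi-norm of `d` over `(t, ∞)`; in the theorem it is the factor by which
`c₁` differs from `a₁`. -/
def tailNorm (r : ℝ≥0∞) (d : ℝ → ℝ) (t : ℝ) : ℝ≥0∞ :=
  eLpNorm (fun u => ENNReal.ofReal (d u)) r (logMeasure.restrict (Ioi t))

section TailNorm

variable {r : ℝ≥0∞} {d : ℝ → ℝ}

lemma tailNorm_antitone : Antitone (tailNorm r d) := fun _ _ hxy =>
  eLpNorm_mono_measure _ (Measure.restrict_mono (Ioi_subset_Ioi hxy) le_rfl)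

lemma RegularlyVarying.exists_le_tailNorm {α : ℝ} (hd : RegularlyVarying α d) (hr : r ≠ 0) :
    ∃ C : ℝ≥0∞, C ≠ ∞ ∧ ∀ t, 0 < t → ENNReal.ofReal (d t) ≤ C * tailNorm r d t := by
  obtain ⟨C, hC, hdC⟩ := hd.exists_moderateWith 2
  obtain ⟨C', hC', hle⟩ := exists_le_const_mul_eLpNorm_Ioc hr hC
  refine ⟨C', hC', fun t ht => (hle _ hdC t t ht le_rfl (by linarith)).trans ?_⟩
  gcongr
  exact eLpNorm_mono_measure _ (Measure.restrict_mono Ioc_subset_Ioi_self le_rfl)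

lemma RegularlyVarying.exists_eLpNorm_Ioc_le_rpow (hd : RegularlyVarying 0 d) (hr : r ≠ 0) {ε : ℝ}
    (hε : 0 < ε) :
    ∃ C : ℝ≥0∞, C ≠ ∞ ∧ ∀ x y, 0 < x → x ≤ y →
      eLpNorm (fun u => ENNReal.ofReal (d u)) r (logMeasure.restrict (Ioc x y)) ≤
        C * ENNReal.ofReal ((y / x) ^ ε) * ENNReal.ofReal (d y) := by
  obtain ⟨C, hC, hle⟩ := (hd.rpow_mul ε).exists_eLpNorm_Ioc_le (by linarith) hr
  refine ⟨C, hC, fun x y hx hxy => ?_⟩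
  have hy : 0 < y := hx.trans_le hxy
  have hweight : ∀ u ∈ Ioc x y, ENNReal.ofReal (d u) ≤
      ENNReal.ofReal (x ^ (-ε)) * ENNReal.ofReal (u ^ ε * d u) := fun u hu => by
    have hu₀ : 0 < u := hx.trans hu.1
    rw [← ENNReal.ofReal_mul (by positivity), ← mul_assoc, Real.rpow_neg hx.le, mul_comm _ (u ^ ε),
      ← div_eq_mul_inv]
    refine ENNReal.ofReal_le_ofReal (le_mul_of_one_le_left (hd.pos hu₀).le ?_)
    exact (one_le_div (by positivity)).2 (Real.rpow_le_rpow hx.le hu.1.le hε.le)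
  calc eLpNorm (fun u => ENNReal.ofReal (d u)) r (logMeasure.restrict (Ioc x y))
      ≤ ENNReal.ofReal (x ^ (-ε)) * eLpNorm (fun u => ENNReal.ofReal (u ^ ε * d u)) r
          (logMeasure.restrict (Ioc x y)) :=
        eLpNorm_le_const_mul_of_ae_le ENNReal.ofReal_ne_top
          (ae_restrict_of_forall_mem measurableSet_Ioc hweight)
    _ ≤ ENNReal.ofReal (x ^ (-ε)) * (C * ENNReal.ofReal (y ^ ε * d y)) := by
        gcongr
        refine le_trans (eLpNorm_mono_measure _ (Measure.restrict_mono ?_ le_rfl)) (hle y hy)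
        exact Ioc_subset_Ioc_left hx.le
    _ = C * ENNReal.ofReal ((y / x) ^ ε) * ENNReal.ofReal (d y) := by
        rw [ENNReal.ofReal_mul (by positivity), Real.div_rpow hy.le hx.le, div_eq_mul_inv,
          ENNReal.ofReal_mul (by positivity), Real.rpow_neg hx.le]
        ring

lemma RegularlyVarying.exists_tailNorm_le_rpow (hd : RegularlyVarying 0 d) (hr : r ≠ 0) {ε : ℝ}
    (hε : 0 < ε) :
    ∃ C : ℝ≥0∞, C ≠ ∞ ∧ ∀ x y, 0 < x → x ≤ y →
      tailNorm r d x ≤ C * ENNReal.ofReal ((y / x) ^ ε) * tailNorm r d y := by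
  obtain ⟨C₁, hC₁, hIoc⟩ := hd.exists_eLpNorm_Ioc_le_rpow hr hε
  obtain ⟨C₂, hC₂, htail⟩ := hd.exists_le_tailNorm hr
  have htwo : (2 : ℝ≥0∞) ^ r⁻¹.toReal ≠ ∞ :=
    ENNReal.rpow_ne_top_of_nonneg ENNReal.toReal_nonneg ENNReal.ofNat_ne_top
  refine ⟨2 ^ r⁻¹.toReal * (C₁ * C₂ + 1), by finiteness, fun x y hx hxy => ?_⟩
  have hone : 1 ≤ ENNReal.ofReal ((y / x) ^ ε) :=
    ENNReal.one_le_ofReal.2 (Real.one_le_rpow ((one_le_div hx).2 hxy) hε.le)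
  set p := ENNReal.ofReal ((y / x) ^ ε)
  calc tailNorm r d x
      ≤ 2 ^ r⁻¹.toReal * (eLpNorm (fun u => ENNReal.ofReal (d u)) r
          (logMeasure.restrict (Ioc x y)) + tailNorm r d y) := by
        rw [tailNorm, ← Ioc_union_Ioi_eq_Ioi hxy]
        exact eLpNorm_restrict_union_le hr _ _
    _ ≤ 2 ^ r⁻¹.toReal * (C₁ * p * (C₂ * tailNorm r d y) + p * tailNorm r d y) := by
        gcongr
        · exact (hIoc x y hx hxy).trans (by gcongr; exact htail y (hx.trans_le hxy))
        · exact le_mul_of_one_le_left zero_le hone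
    _ = 2 ^ r⁻¹.toReal * (C₁ * C₂ + 1) * p * tailNorm r d y := by ring

lemma RegularlyVarying.tailNorm_ne_top (hd : RegularlyVarying 0 d) (hr : r ≠ 0)
    (hfin : tailNorm r d 1 ≠ ∞) {t : ℝ} (ht : 0 < t) : tailNorm r d t ≠ ∞ := by
  rcases le_total 1 t with h | h
  · exact ne_top_of_le_ne_top hfin (tailNorm_antitone h)
  · obtain ⟨C, hC, hle⟩ := hd.exists_tailNorm_le_rpow hr one_pos
    exact ne_top_of_le_ne_top (by finiteness) (hle t 1 ht h)

lemma RegularlyVarying.tailNorm_pos {α : ℝ} (hd : RegularlyVarying α d) (hr : r ≠ 0) {t : ℝ}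
    (ht : 0 < t) : 0 < tailNorm r d t := by
  obtain ⟨C, -, hle⟩ := hd.exists_le_tailNorm hr
  have hpos := (ENNReal.ofReal_pos.2 (hd.pos ht)).trans_le (hle t ht)
  exact (ENNReal.mul_pos_iff.1 hpos).2

lemma RegularlyVarying.toReal_tailNorm (hd : RegularlyVarying 0 d) (hr : r ≠ 0)
    (hfin : tailNorm r d 1 ≠ ∞) : RegularlyVarying 0 (fun t => (tailNorm r d t).toReal) := by
  have hpos {t : ℝ} (ht : 0 < t) : 0 < (tailNorm r d t).toReal :=
    ENNReal.toReal_pos (hd.tailNorm_pos hr ht).ne' (hd.tailNorm_ne_top hr hfin ht)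
  refine .of_forall_le (fun t ht => hpos ht) fun ε hε => ?_
  obtain ⟨C, hC, hle⟩ := hd.exists_tailNorm_le_rpow hr hε
  refine ⟨Real.log (C.toReal + 1), fun x y hx hxy => ?_⟩
  have hy : 0 < y := hx.trans_le hxy
  have htop := hd.tailNorm_ne_top hr hfin hy
  have hanti := Real.log_le_log (hpos hy)
    (ENNReal.toReal_mono (hd.tailNorm_ne_top hr hfin hx) (tailNorm_antitone hxy))
  have hgrowth : (tailNorm r d x).toReal ≤
      Real.exp (Real.log (C.toReal + 1)) * (y / x) ^ ε * (tailNorm r d y).toReal := by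
    rw [Real.exp_log (by positivity)]
    refine (ENNReal.toReal_mono (by finiteness) (hle x y hx hxy)).trans ?_
    rw [ENNReal.toReal_mul, ENNReal.toReal_mul, ENNReal.toReal_ofReal (by positivity)]
    gcongr
    exact le_add_of_nonneg_right zero_le_one
  rw [le_exp_mul_rpow_mul_iff (hpos hy) (hpos hx) hx hy] at hgrowth
  rw [zero_mul, sub_zero, abs_le]
  constructor <;> linarith

end TailNorm

/-- `m` is bounded by a constant multiple of `n`, uniformly in the index. Two quasi-norms are
equivalent when each dominates the other, see `Dominated.equivNorms`. -/
def Dominated {ι : Type*} (m n : ι → ℝ≥0∞) : Prop :=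
  ∃ C : ℝ≥0∞, C ≠ ∞ ∧ ∀ i, m i ≤ C * n i

namespace Dominated

lemma trans {ι : Type*} {l m n : ι → ℝ≥0∞} (hlm : Dominated l m) (hmn : Dominated m n) :
    Dominated l n := by
  obtain ⟨C₁, hC₁, h₁⟩ := hlm
  obtain ⟨C₂, hC₂, h₂⟩ := hmn
  refine ⟨C₁ * C₂, ENNReal.mul_ne_top hC₁ hC₂, fun i => (h₁ i).trans ?_⟩
  rw [mul_assoc]
  gcongr
  exact h₂ i

lemma equivNorms {G : Type*} {m n : G → ℝ≥0∞} (hmn : Dominated m n) (hnm : Dominated n m) :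
    EquivNorms m n := by
  obtain ⟨C₁, hC₁, h₁⟩ := hmn
  obtain ⟨C₂, hC₂, h₂⟩ := hnm
  have hC : max (max C₁ C₂) 1 ≠ ∞ := by simp [hC₁, hC₂]
  refine ⟨max (max C₁ C₂) 1, by simp, hC, fun f => ⟨?_, (h₁ f).trans ?_⟩⟩
  · rw [ENNReal.inv_mul_le_iff (by simp) hC]
    exact (h₂ f).trans (by gcongr; simp)
  · gcongr
    simp

end Dominated

/-- A two-sided sequence of positive reals whose consecutive ratios lie in `[2, D]`; it serves to
discretize `L_r(du/u)` quasi-norms. -/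
structure IsLacunary (D : ℝ) (x : ℤ → ℝ) : Prop where
  pos : ∀ k, 0 < x k
  two_mul_le : ∀ k, 2 * x k ≤ x (k + 1)
  le_mul : ∀ k, x (k + 1) ≤ D * x k

namespace IsLacunary

variable {D : ℝ} {x : ℤ → ℝ}

lemma zpow {M : ℝ} (hM : 2 ≤ M) : IsLacunary M (fun k => M ^ k) where
  pos k := by positivity
  two_mul_le k := by
    rw [zpow_add_one₀ (by positivity), mul_comm]
    gcongr
  le_mul k := by rw [zpow_add_one₀ (by positivity), mul_comm]

lemma monotone (hx : IsLacunary D x) : Monotone x :=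
  monotone_int_of_le_succ fun k => by linarith [hx.pos k, hx.two_mul_le k]

lemma two_le (hx : IsLacunary D x) : 2 ≤ D :=
  le_of_mul_le_mul_right ((hx.two_mul_le 0).trans (hx.le_mul 0)) (hx.pos 0)

lemma two_pow_mul_le (hx : IsLacunary D x) (k : ℤ) (n : ℕ) : 2 ^ n * x k ≤ x (k + n) := by
  induction n with
  | zero => simp
  | succ n ih =>
    calc 2 ^ (n + 1) * x k = 2 * (2 ^ n * x k) := by ring
      _ ≤ 2 * x (k + n) := by gcongr
      _ ≤ x (k + n + 1) := hx.two_mul_le _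
      _ = x (k + (n + 1 : ℕ)) := by push_cast; ring_nf

lemma exists_lt (hx : IsLacunary D x) (u : ℝ) : ∃ k, u < x k := by
  obtain ⟨n, hn⟩ := pow_unbounded_of_one_lt (u / x 0) one_lt_two
  refine ⟨0 + n, lt_of_lt_of_le ?_ (hx.two_pow_mul_le 0 n)⟩
  rwa [div_lt_iff₀ (hx.pos 0)] at hn

lemma exists_gt (hx : IsLacunary D x) {u : ℝ} (hu : 0 < u) : ∃ k, x k < u := by
  obtain ⟨n, hn⟩ := pow_unbounded_of_one_lt (x 0 / u) one_lt_two
  refine ⟨-n, ?_⟩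
  have hgrowth := hx.two_pow_mul_le (-n) n
  rw [neg_add_cancel] at hgrowth
  rw [div_lt_iff₀ hu] at hn
  exact lt_of_mul_lt_mul_left (hgrowth.trans_lt hn) (by positivity)

lemma exists_mem_Ioc (hx : IsLacunary D x) {u : ℝ} (hu : 0 < u) :
    ∃ k, u ∈ Ioc (x k) (x (k + 1)) := by
  obtain ⟨K, hK⟩ := hx.exists_lt u
  have hbdd : ∀ k, x k < u → k ≤ K := fun k hk =>
    le_of_lt (hx.monotone.reflect_lt (hk.trans hK))
  obtain ⟨k, hk, hmax⟩ := Int.exists_greatest_of_bdd ⟨K, hbdd⟩ (hx.exists_gt hu)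
  exact ⟨k, hk, not_lt.1 fun h => by linarith [hmax _ h]⟩

lemma le_of_mem_Ioc (hx : IsLacunary D x) {u v : ℝ} {k l : ℤ} (hu : u ∈ Ioc (x k) (x (k + 1)))
    (hv : v ∈ Ioc (x l) (x (l + 1))) (huv : u ≤ v) : k ≤ l :=
  Int.lt_add_one_iff.1 (hx.monotone.reflect_lt (hu.1.trans_le (huv.trans hv.2)))

lemma exists_index (hx : IsLacunary D x) :
    ∃ idx : ℝ → ℤ, AEMeasurable idx logMeasure ∧
      ∀ u, 0 < u → ∀ k, idx u = k ↔ u ∈ Ioc (x k) (x (k + 1)) := by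
  choose! idx hidx using fun u hu => hx.exists_mem_Ioc (u := u) hu
  have hmono : MonotoneOn idx (Ioi 0) := fun u hu v hv huv =>
    hx.le_of_mem_Ioc (hidx u hu) (hidx v hv) huv
  refine ⟨idx, (aemeasurable_restrict_of_monotoneOn (μ := volume) measurableSet_Ioi
    hmono).mono_ac (withDensity_absolutelyContinuous _ _), fun u hu k => ⟨?_, fun hk => ?_⟩⟩
  · rintro rfl
    exact hidx u hu
  · exact le_antisymm (hx.le_of_mem_Ioc (hidx u hu) hk le_rfl)
      (hx.le_of_mem_Ioc hk (hidx u hu) le_rfl)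

lemma logMeasure_Ioc_mem_Icc (hx : IsLacunary D x) (k : ℤ) :
    logMeasure (Ioc (x k) (x (k + 1))) ∈
      Icc (ENNReal.ofReal (Real.log 2)) (ENNReal.ofReal (Real.log D)) := by
  have hxk := hx.pos k
  have hratio : 2 ≤ x (k + 1) / x k := (le_div_iff₀ hxk).2 (hx.two_mul_le k)
  rw [logMeasure_Ioc hxk (hx.monotone (by simp))]
  exact ⟨ENNReal.ofReal_le_ofReal (Real.log_le_log two_pos hratio),
    ENNReal.ofReal_le_ofReal (Real.log_le_log (by linarith) ((div_le_iff₀ hxk).2 (hx.le_mul k)))⟩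

lemma exists_index_map (hx : IsLacunary D x) :
    ∃ idx : ℝ → ℤ, AEMeasurable idx logMeasure ∧
      (∀ u, 0 < u → u ∈ Ioc (x (idx u)) (x (idx u + 1))) ∧
      ENNReal.ofReal (Real.log 2) • Measure.count ≤ logMeasure.map idx ∧
      logMeasure.map idx ≤ ENNReal.ofReal (Real.log D) • Measure.count := by
  obtain ⟨idx, hmeas, hidx⟩ := hx.exists_index
  have hmap (k : ℤ) : logMeasure.map idx {k} = logMeasure (Ioc (x k) (x (k + 1))) := by
    rw [Measure.map_apply_of_aemeasurable hmeas (measurableSet_singleton k)]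
    refine measure_congr ?_
    filter_upwards [ae_logMeasure_pos] with u hu
    exact propext (hidx u hu k)
  have le_of_singleton {μ ν : Measure ℤ} (h : ∀ k, μ {k} ≤ ν {k}) : μ ≤ ν := by
    refine Measure.le_iff.2 fun s hs => ?_
    rw [← Measure.tsum_indicator_apply_singleton μ s hs,
      ← Measure.tsum_indicator_apply_singleton ν s hs]
    exact ENNReal.tsum_le_tsum fun k => indicator_le_indicator (h k)
  refine ⟨idx, hmeas, fun u hu => (hidx u hu _).1 rfl, le_of_singleton fun k => ?_,
    le_of_singleton fun k => ?_⟩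
  · simpa [hmap] using (hx.logMeasure_Ioc_mem_Icc k).1
  · simpa [hmap] using (hx.logMeasure_Ioc_mem_Icc k).2

variable {ι : Type*} {r C : ℝ≥0∞} {F : ι → ℝ → ℝ≥0∞}

lemma dominated_eLpNorm_count (hx : IsLacunary D x) (hC : C ≠ ∞)
    (hF : ∀ i, ModerateWith D C (F i)) :
    Dominated (fun i => eLpNorm (F i) r logMeasure)
      (fun i => eLpNorm (fun k => F i (x k)) r Measure.count) := by
  obtain ⟨idx, hmeas, hidx, -, hmap⟩ := hx.exists_index_map
  have hD : 0 < Real.log D := Real.log_pos (one_lt_two.trans_le hx.two_le)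
  refine ⟨C * ENNReal.ofReal (Real.log D) ^ (1 / r).toReal, ENNReal.mul_ne_top hC
    (ENNReal.rpow_ne_top_of_nonneg ENNReal.toReal_nonneg ENNReal.ofReal_ne_top), fun i => ?_⟩
  have hle : ∀ᵐ u ∂logMeasure, F i u ≤ C * ((fun k => F i (x k)) ∘ idx) u := by
    filter_upwards [ae_logMeasure_pos] with u hu
    obtain ⟨hlower, hupper⟩ := hidx u hu
    exact hF i _ _ hu (hx.pos _) (hupper.trans (hx.le_mul _)) (by nlinarith [hx.two_le])
  calc eLpNorm (F i) r logMeasure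
      ≤ C * eLpNorm ((fun k => F i (x k)) ∘ idx) r logMeasure :=
        eLpNorm_le_const_mul_of_ae_le hC hle
    _ = C * eLpNorm (fun k => F i (x k)) r (logMeasure.map idx) := by
        rw [eLpNorm_map_measure StronglyMeasurable.of_discrete.aestronglyMeasurable hmeas]
    _ ≤ C * eLpNorm (fun k => F i (x k)) r (ENNReal.ofReal (Real.log D) • Measure.count) := by
        gcongr
    _ = C * ENNReal.ofReal (Real.log D) ^ (1 / r).toReal *
          eLpNorm (fun k => F i (x k)) r Measure.count := by
        rw [eLpNorm_smul_measure_of_ne_zero (ENNReal.ofReal_pos.2 hD).ne', smul_eq_mul, mul_assoc]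

lemma dominated_count_eLpNorm (hx : IsLacunary D x) (hC : C ≠ ∞)
    (hF : ∀ i, ModerateWith D C (F i)) :
    Dominated (fun i => eLpNorm (fun k => F i (x k)) r Measure.count)
      (fun i => eLpNorm (F i) r logMeasure) := by
  obtain ⟨idx, hmeas, hidx, hmap, -⟩ := hx.exists_index_map
  have hlog : ENNReal.ofReal (Real.log 2) ≠ 0 :=
    (ENNReal.ofReal_pos.2 (Real.log_pos one_lt_two)).ne'
  set m := ENNReal.ofReal (Real.log 2) ^ (1 / r).toReal
  have hm₀ : m ≠ 0 := (ENNReal.rpow_pos hlog.bot_lt ENNReal.ofReal_ne_top).ne'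
  have hm : m ≠ ∞ := ENNReal.rpow_ne_top_of_nonneg ENNReal.toReal_nonneg ENNReal.ofReal_ne_top
  refine ⟨m⁻¹ * C, ENNReal.mul_ne_top (ENNReal.inv_ne_top.2 hm₀) hC, fun i => ?_⟩
  have hle : ∀ᵐ u ∂logMeasure, ((fun k => F i (x k)) ∘ idx) u ≤ C * F i u := by
    filter_upwards [ae_logMeasure_pos] with u hu
    obtain ⟨hlower, hupper⟩ := hidx u hu
    exact hF i _ _ (hx.pos _) hu (by nlinarith [hx.two_le]) (hupper.trans (hx.le_mul _))
  rw [mul_assoc, ← ENNReal.mul_le_iff_le_inv hm₀ hm]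
  calc m * eLpNorm (fun k => F i (x k)) r Measure.count
      = eLpNorm (fun k => F i (x k)) r (ENNReal.ofReal (Real.log 2) • Measure.count) := by
        rw [eLpNorm_smul_measure_of_ne_zero hlog, smul_eq_mul]
    _ ≤ eLpNorm (fun k => F i (x k)) r (logMeasure.map idx) := eLpNorm_mono_measure _ hmap
    _ = eLpNorm ((fun k => F i (x k)) ∘ idx) r logMeasure := by
        rw [eLpNorm_map_measure StronglyMeasurable.of_discrete.aestronglyMeasurable hmeas]
    _ ≤ C * eLpNorm (F i) r logMeasure := eLpNorm_le_const_mul_of_ae_le hC hle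

end IsLacunary

lemma exists_eLpNorm_iSup_pow_mul_le (r : ℝ≥0∞) {l : ℝ≥0∞} (hl : l < 1) :
    ∃ C : ℝ≥0∞, C ≠ ∞ ∧ ∀ y : ℤ → ℝ≥0∞,
      eLpNorm (fun n => ⨆ m : ℕ, l ^ m * y (n + m)) r Measure.count ≤
        C * eLpNorm y r Measure.count := by
  rcases eq_or_ne r 0 with rfl | hr
  · exact ⟨1, ENNReal.one_ne_top, fun y => by simp⟩
  rcases eq_or_ne r ∞ with rfl | hr'
  · refine ⟨1, ENNReal.one_ne_top, fun y => ?_⟩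
    simp only [eLpNorm_exponent_top, eLpNormEssSup_count, enorm_eq_self, one_mul]
    exact iSup_le fun n => iSup_le fun m =>
      (mul_le_of_le_one_left zero_le (pow_le_one₀ zero_le hl.le)).trans (le_iSup y (n + m))
  · have hr₀ : 0 < r.toReal := ENNReal.toReal_pos hr hr'
    have hlr : l ^ r.toReal < 1 := ENNReal.rpow_lt_one hl hr₀
    refine ⟨(1 - l ^ r.toReal)⁻¹ ^ (1 / r.toReal), ENNReal.rpow_ne_top_of_nonneg (by positivity)
      (ENNReal.inv_ne_top.2 (tsub_pos_of_lt hlr).ne'), fun y => ?_⟩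
    have hiSup (n : ℤ) : (⨆ m : ℕ, l ^ m * y (n + m)) ^ r.toReal ≤
        ∑' m : ℕ, (l ^ r.toReal) ^ m * y (n + m) ^ r.toReal := by
      rw [← ENNReal.le_rpow_inv_iff hr₀]
      refine iSup_le fun m => (ENNReal.le_rpow_inv_iff hr₀).2 ?_
      refine le_trans (le_of_eq ?_) (ENNReal.le_tsum m)
      rw [ENNReal.mul_rpow_of_nonneg _ _ hr₀.le, ← ENNReal.rpow_natCast_mul, mul_comm (m : ℝ),
        ENNReal.rpow_mul_natCast]
    have hshift (m : ℕ) : ∑' n : ℤ, y (n + m) ^ r.toReal = ∑' n, y n ^ r.toReal :=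
      (Equiv.addRight (m : ℤ)).tsum_eq fun n => y n ^ r.toReal
    simp only [eLpNorm_eq_lintegral_rpow_enorm_toReal hr hr', lintegral_count, enorm_eq_self]
    rw [← ENNReal.mul_rpow_of_nonneg _ _ (by positivity)]
    gcongr
    calc ∑' n : ℤ, (⨆ m : ℕ, l ^ m * y (n + m)) ^ r.toReal
        ≤ ∑' (n : ℤ) (m : ℕ), (l ^ r.toReal) ^ m * y (n + m) ^ r.toReal :=
          ENNReal.tsum_le_tsum hiSup
      _ = (1 - l ^ r.toReal)⁻¹ * ∑' n, y n ^ r.toReal := by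
          rw [ENNReal.tsum_comm]
          simp only [ENNReal.tsum_mul_left, hshift, ENNReal.tsum_mul_right, ENNReal.tsum_geometric]

/-- An extended-real-valued quasi-seminorm on an abelian group: the part of `QuasiBanach` that
real interpolation uses, with homogeneity reduced to `N (-x) = N x` so that no scalars occur. -/
structure IsQuasiSeminorm_s5 {G : Type*} [AddCommGroup G] (N : G → ℝ≥0∞) : Prop where
  map_zero : N 0 = 0
  map_neg : ∀ x, N (-x) = N x
  exists_add_le : ∃ Q : ℝ≥0∞, Q ≠ ∞ ∧ ∀ x y, N (x + y) ≤ Q * (N x + N y)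

lemma QuasiBanach.isQuasiSeminorm {G : Type*} [AddCommGroup G] [Module ℝ G] (A : QuasiBanach G) :
    IsQuasiSeminorm_s5 A.N where
  map_zero := A.zero
  map_neg x := by simpa using A.smul (-1) x
  exists_add_le := let ⟨Q, _, hQ, h⟩ := A.quasi; ⟨Q, hQ, h⟩

section KFunctional

variable {G : Type*} [AddCommGroup G]

lemma Kf_mono (N₀ N₁ : G → ℝ≥0∞) (f : G) : Monotone fun t => Kf N₀ N₁ t f := fun t u htu =>
  iInf_mono fun g => by gcongr

lemma moderateWith_Kf (N₀ N₁ : G → ℝ≥0∞) (D : ℝ) (f : G) :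
    ModerateWith D (ENNReal.ofReal D) (fun t => Kf N₀ N₁ t f) := by
  intro x y hx hy hxy hyx
  have hD : 1 ≤ D := by
    by_contra! h
    nlinarith
  have hD₀ : ENNReal.ofReal D ≠ 0 := (ENNReal.ofReal_pos.2 (by linarith)).ne'
  change _ ≤ _ * ⨅ g, _
  rw [ENNReal.mul_iInf_of_ne hD₀ ENNReal.ofReal_ne_top]
  refine iInf_mono fun g => ?_
  rw [mul_add, ← mul_assoc, ← ENNReal.ofReal_mul (by linarith)]
  gcongr
  exact le_mul_of_one_le_left zero_le (ENNReal.one_le_ofReal.2 hD)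

variable {N₀ : G → ℝ≥0∞} (N₁ : G → ℝ≥0∞)

lemma IsQuasiSeminorm_s5.Kf_le_ofReal_mul (h₀ : IsQuasiSeminorm_s5 N₀) (t : ℝ) (f : G) :
    Kf N₀ N₁ t f ≤ ENNReal.ofReal t * N₁ f :=
  (iInf_le _ 0).trans (by rw [h₀.map_zero, zero_add, sub_zero])

lemma IsQuasiSeminorm_s5.exists_Kf_sub_le (h₀ : IsQuasiSeminorm_s5 N₀) :
    ∃ Q : ℝ≥0∞, Q ≠ ∞ ∧ ∀ t f g, Kf N₀ N₁ t (f - g) ≤ Q * (Kf N₀ N₁ t f + N₀ g) := by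
  obtain ⟨Q, hQ, hadd⟩ := h₀.exists_add_le
  have hQ₁ : max Q 1 ≠ ∞ := by simp [hQ]
  have hQ₀ : max Q 1 ≠ 0 := by simp
  refine ⟨max Q 1, hQ₁, fun t f g => ?_⟩
  change _ ≤ _ * ((⨅ g', _) + _)
  rw [ENNReal.iInf_add, ENNReal.mul_iInf_of_ne hQ₀ hQ₁]
  refine le_iInf fun g' => (iInf_le _ (g' - g)).trans ?_
  rw [sub_sub_sub_cancel_right]
  calc N₀ (g' - g) + ENNReal.ofReal t * N₁ (f - g')
      ≤ Q * (N₀ g' + N₀ g) + 1 * (ENNReal.ofReal t * N₁ (f - g')) := by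
        rw [sub_eq_add_neg, one_mul]
        gcongr
        simpa only [h₀.map_neg] using hadd g' (-g)
    _ ≤ max Q 1 * (N₀ g' + N₀ g) + max Q 1 * (ENNReal.ofReal t * N₁ (f - g')) := by
        gcongr
        · exact le_max_left _ _
        · exact le_max_right _ _
    _ = max Q 1 * (N₀ g' + ENNReal.ofReal t * N₁ (f - g') + N₀ g) := by ring

lemma IsQuasiSeminorm_s5.exists_Kf_le_add (h₀ : IsQuasiSeminorm_s5 N₀) :
    ∃ Q : ℝ≥0∞, Q ≠ ∞ ∧ ∀ t f g, Kf N₀ N₁ t f ≤ Q * (N₀ g + Kf N₀ N₁ t (f - g)) := by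
  obtain ⟨Q, hQ, hsub⟩ := h₀.exists_Kf_sub_le N₁
  refine ⟨Q, hQ, fun t f g => ?_⟩
  simpa only [sub_neg_eq_add, sub_add_cancel, h₀.map_neg, add_comm (N₀ g)] using hsub t (f - g) (-g)

end KFunctional

/-- `K` is bounded by the function that equals `κ` at `t`, is linear before `t` and grows like the
power `γ` after `t`. The difference of `f` and a nearly optimal `g` for `K(t, f)` has a
`K`-functional of this kind. -/
structure PowerBound (γ t : ℝ) (κ : ℝ≥0∞) (K : ℝ → ℝ≥0∞) : Prop where
  near : ∀ u ∈ Ioc 0 t, K u ≤ ENNReal.ofReal (u / t) * κ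
  far : ∀ u ∈ Ioi t, K u ≤ ENNReal.ofReal ((u / t) ^ γ) * κ

/-- The space with quasi-norm `X` has order `σ` and characteristic function `ρ` with respect to the
couple `(N₀, N₁)`: its elements satisfy `K(t, h) ≲ ρ(t) X(h)`, and this is sharp when the
`K`-functional of `h` stays below a power less than `σ` after `t`. -/
structure IsIntermediate {G : Type*} [AddCommGroup G] (N₀ N₁ X : G → ℝ≥0∞) (σ : ℝ) (ρ : ℝ → ℝ) :
    Prop where
  exists_Kf_le : ∃ C : ℝ≥0∞, C ≠ ∞ ∧ ∀ t, 0 < t → ∀ h,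
    Kf N₀ N₁ t h ≤ C * (ENNReal.ofReal (ρ t) * X h)
  exists_le_of_Kf_le : ∀ γ < σ, ∃ C : ℝ≥0∞, C ≠ ∞ ∧ ∀ t, 0 < t → ∀ κ ≠ ∞, ∀ h,
    PowerBound γ t κ (fun u => Kf N₀ N₁ u h) → ENNReal.ofReal (ρ t) * X h ≤ C * κ

section Reiteration

variable {G : Type*} [AddCommGroup G] {N₀ N₁ X : G → ℝ≥0∞} {σ : ℝ} {ρ : ℝ → ℝ}

lemma IsIntermediate.exists_Kf_le_Kf (hX : IsIntermediate N₀ N₁ X σ ρ) (h₀ : IsQuasiSeminorm_s5 N₀) :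
    ∃ C : ℝ≥0∞, C ≠ ∞ ∧ ∀ t, 0 < t → ∀ f, Kf N₀ N₁ t f ≤ C * Kf N₀ X (ρ t) f := by
  obtain ⟨Q, hQ, hadd⟩ := h₀.exists_Kf_le_add N₁
  obtain ⟨C, hC, hle⟩ := hX.exists_Kf_le
  have hne : (Q + 1) * (C + 1) ≠ ∞ := by finiteness
  refine ⟨(Q + 1) * (C + 1), hne, fun t ht f => ?_⟩
  change _ ≤ _ * ⨅ g, _
  rw [ENNReal.mul_iInf_of_ne (by simp) hne]
  refine le_iInf fun g => (hadd t f g).trans ?_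
  calc Q * (N₀ g + Kf N₀ N₁ t (f - g))
      ≤ (Q + 1) * (1 * N₀ g + C * (ENNReal.ofReal (ρ t) * X (f - g))) := by
        rw [one_mul]
        gcongr
        · exact le_self_add
        · exact hle t ht _
    _ ≤ (Q + 1) * ((C + 1) * N₀ g + (C + 1) * (ENNReal.ofReal (ρ t) * X (f - g))) := by
        gcongr
        · exact le_add_self
        · exact le_self_add
    _ = (Q + 1) * (C + 1) * (N₀ g + ENNReal.ofReal (ρ t) * X (f - g)) := by ring

lemma le_const_mul_of_forall_lt {a b C : ℝ≥0∞} (hC₀ : C ≠ 0) (hC : C ≠ ∞)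
    (h : ∀ κ, b < κ → κ ≠ ∞ → a ≤ C * κ) : a ≤ C * b := by
  rw [mul_comm, ← ENNReal.div_le_iff hC₀ hC]
  refine le_of_forall_gt_imp_ge_of_dense fun κ hκ => ?_
  rcases eq_or_ne κ ∞ with rfl | hκ'
  · exact le_top
  · rw [ENNReal.div_le_iff hC₀ hC, mul_comm]
    exact h κ hκ hκ'

/-- The discrete envelope `sup_m M ^ (-γ m) K(M ^ m t, f)`, which records how far the `K`-functional
of `f` beyond `t` exceeds the growth of the power `γ`. -/
def Kenvelope (N₀ N₁ : G → ℝ≥0∞) (M γ t : ℝ) (f : G) : ℝ≥0∞ :=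
  ⨆ m : ℕ, ENNReal.ofReal (M ^ (-γ)) ^ m * Kf N₀ N₁ (M ^ m * t) f

lemma Kf_le_Kenvelope (N₀ N₁ : G → ℝ≥0∞) (M γ t : ℝ) (f : G) :
    Kf N₀ N₁ t f ≤ Kenvelope N₀ N₁ M γ t f := by
  refine le_trans (le_of_eq ?_) (le_iSup _ 0)
  simp only [pow_zero, one_mul]

lemma Kf_le_rpow_mul_Kenvelope (N₀ N₁ : G → ℝ≥0∞) {M γ t u : ℝ} (hM : 1 < M) (hγ : 0 ≤ γ)
    (ht : 0 < t) (htu : t ≤ u) (f : G) :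
    Kf N₀ N₁ u f ≤
      ENNReal.ofReal (M ^ γ) * ENNReal.ofReal ((u / t) ^ γ) * Kenvelope N₀ N₁ M γ t f := by
  have hM₀ : 0 < M := one_pos.trans hM
  obtain ⟨m, hmu, hum⟩ := exists_nat_pow_near ((one_le_div ht).2 htu) hM
  have hcancel : ENNReal.ofReal (M ^ γ) ^ (m + 1) * ENNReal.ofReal (M ^ (-γ)) ^ (m + 1) = 1 := by
    rw [← mul_pow, ← ENNReal.ofReal_mul (by positivity), ← Real.rpow_add hM₀, add_neg_cancel,
      Real.rpow_zero, ENNReal.ofReal_one, one_pow]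
  have hpow : (M ^ γ) ^ (m + 1) ≤ M ^ γ * (u / t) ^ γ := by
    rw [pow_succ', ← Real.rpow_mul_natCast hM₀.le, mul_comm γ, Real.rpow_natCast_mul hM₀.le]
    gcongr
  calc Kf N₀ N₁ u f
      ≤ Kf N₀ N₁ (M ^ (m + 1) * t) f := Kf_mono N₀ N₁ f ((div_lt_iff₀ ht).1 hum).le
    _ = ENNReal.ofReal (M ^ γ) ^ (m + 1) *
          (ENNReal.ofReal (M ^ (-γ)) ^ (m + 1) * Kf N₀ N₁ (M ^ (m + 1) * t) f) := by
        rw [← mul_assoc, hcancel, one_mul]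
    _ ≤ ENNReal.ofReal (M ^ γ) ^ (m + 1) * Kenvelope N₀ N₁ M γ t f := by
        gcongr
        exact le_iSup (fun m : ℕ => ENNReal.ofReal (M ^ (-γ)) ^ m * Kf N₀ N₁ (M ^ m * t) f) (m + 1)
    _ ≤ ENNReal.ofReal (M ^ γ) * ENNReal.ofReal ((u / t) ^ γ) * Kenvelope N₀ N₁ M γ t f := by
        gcongr
        rw [← ENNReal.ofReal_pow (by positivity), ← ENNReal.ofReal_mul (by positivity)]
        exact ENNReal.ofReal_le_ofReal hpow

lemma IsQuasiSeminorm_s5.exists_decomposition (h₀ : IsQuasiSeminorm_s5 N₀) (N₁ : G → ℝ≥0∞) {M γ : ℝ}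
    (hM : 1 < M) (hγ : 0 ≤ γ) :
    ∃ B : ℝ≥0∞, B ≠ ∞ ∧ ∀ t, 0 < t → ∀ f κ, Kenvelope N₀ N₁ M γ t f < κ →
      ∃ g, N₀ g ≤ κ ∧ PowerBound γ t (B * κ) (fun u => Kf N₀ N₁ u (f - g)) := by
  obtain ⟨Q, hQ, hsub⟩ := h₀.exists_Kf_sub_le N₁
  refine ⟨Q * (ENNReal.ofReal (M ^ γ) + 1) + 1, by finiteness, fun t ht f κ hκ => ?_⟩
  set B := Q * (ENNReal.ofReal (M ^ γ) + 1) + 1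
  obtain ⟨g, hg⟩ := iInf_lt_iff.1 ((Kf_le_Kenvelope N₀ N₁ M γ t f).trans_lt hκ)
  have hg₀ : N₀ g ≤ κ := le_self_add.trans hg.le
  have hg₁ : ENNReal.ofReal t * N₁ (f - g) ≤ κ := le_add_self.trans hg.le
  refine ⟨g, hg₀, fun u hu => ?_, fun u hu => ?_⟩
  · calc Kf N₀ N₁ u (f - g) ≤ ENNReal.ofReal u * N₁ (f - g) := h₀.Kf_le_ofReal_mul N₁ u _
      _ = ENNReal.ofReal (u / t) * (ENNReal.ofReal t * N₁ (f - g)) := by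
          rw [← mul_assoc, ← ENNReal.ofReal_mul (div_nonneg hu.1.le ht.le),
            div_mul_cancel₀ _ ht.ne']
      _ ≤ ENNReal.ofReal (u / t) * (B * κ) := by
          gcongr ENNReal.ofReal (u / t) * ?_
          exact hg₁.trans (le_mul_of_one_le_left zero_le le_add_self)
  · have hone : 1 ≤ ENNReal.ofReal ((u / t) ^ γ) :=
      ENNReal.one_le_ofReal.2 (Real.one_le_rpow ((one_le_div ht).2 (le_of_lt hu)) hγ)
    set p := ENNReal.ofReal ((u / t) ^ γ)
    calc Kf N₀ N₁ u (f - g) ≤ Q * (Kf N₀ N₁ u f + N₀ g) := hsub u f g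
      _ ≤ Q * (ENNReal.ofReal (M ^ γ) * p * κ + p * κ) := by
          gcongr
          · exact (Kf_le_rpow_mul_Kenvelope N₀ N₁ hM hγ ht (le_of_lt hu) f).trans (by gcongr)
          · exact hg₀.trans (le_mul_of_one_le_left zero_le hone)
      _ = p * (Q * (ENNReal.ofReal (M ^ γ) + 1) * κ) := by ring
      _ ≤ p * (B * κ) := by
          gcongr
          exact le_self_add

lemma IsIntermediate.exists_Kf_le_Kenvelope (hX : IsIntermediate N₀ N₁ X σ ρ)
    (h₀ : IsQuasiSeminorm_s5 N₀) {M γ : ℝ} (hM : 1 < M) (hγ : 0 ≤ γ) (hγσ : γ < σ) :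
    ∃ C : ℝ≥0∞, C ≠ ∞ ∧ ∀ t, 0 < t → ∀ f,
      Kf N₀ X (ρ t) f ≤ C * Kenvelope N₀ N₁ M γ t f := by
  obtain ⟨B, hB, hdecomp⟩ := h₀.exists_decomposition N₁ hM hγ
  obtain ⟨C, hC, hle⟩ := hX.exists_le_of_Kf_le γ hγσ
  refine ⟨1 + C * B, by finiteness, fun t ht f =>
    le_const_mul_of_forall_lt (by simp) (by finiteness) fun κ hκ hκ' => ?_⟩
  obtain ⟨g, hg, hpow⟩ := hdecomp t ht f κ hκ
  calc Kf N₀ X (ρ t) f ≤ N₀ g + ENNReal.ofReal (ρ t) * X (f - g) := iInf_le _ g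
    _ ≤ κ + C * (B * κ) :=
        add_le_add hg (hle t ht (B * κ) (by finiteness) (f - g) hpow)
    _ = (1 + C * B) * κ := by ring

end Reiteration

lemma RegularlyVarying.exists_isLacunary_zpow {σ : ℝ} {ρ : ℝ → ℝ} (hρ : RegularlyVarying σ ρ)
    (hσ : 0 < σ) : ∃ M, 2 ≤ M ∧ ∃ D, IsLacunary D (fun k : ℤ => ρ (M ^ k)) := by
  obtain ⟨C, -, hle⟩ := hρ.exists_le_rpow (half_pos hσ)
  obtain ⟨M, hM, hMC⟩ := ((eventually_ge_atTop 2).and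
    ((tendsto_rpow_atTop (half_pos hσ)).eventually_ge_atTop (2 * C))).exists
  have hM₀ : 0 < M := by linarith
  have hMk (k : ℤ) : 0 < M ^ k := zpow_pos hM₀ k
  have hstep (k : ℤ) := hle (M ^ k) (M ^ (k + 1)) (hMk k)
    (zpow_le_zpow_right₀ (by linarith) (by simp))
  have hratio (k : ℤ) : M ^ (k + 1) / M ^ k = M := by
    rw [zpow_add_one₀ hM₀.ne', mul_div_cancel_left₀ _ (hMk k).ne']
  simp only [hratio] at hstep
  refine ⟨M, hM, C * M ^ (σ + σ / 2), fun k => hρ.pos (hMk k), fun k => ?_, fun k => (hstep k).1⟩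
  have hpos : 0 < ρ (M ^ (k + 1)) := hρ.pos (hMk _)
  calc 2 * ρ (M ^ k) ≤ 2 * (C * M ^ (σ / 2 - σ) * ρ (M ^ (k + 1))) := by
        gcongr
        exact (hstep k).2
    _ = 2 * C / M ^ (σ / 2) * ρ (M ^ (k + 1)) := by
        rw [show σ / 2 - σ = -(σ / 2) by ring, Real.rpow_neg hM₀.le]
        ring
    _ ≤ ρ (M ^ (k + 1)) := mul_le_of_le_one_left hpos.le ((div_le_one (by positivity)).2 hMC)

section Reiteration

variable {G : Type*} [AddCommGroup G] {N₀ N₁ X : G → ℝ≥0∞} {σ α : ℝ} {ρ φ : ℝ → ℝ}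

lemma RegularlyVarying.exists_mul_Kenvelope_le {v : ℝ → ℝ} (hv : RegularlyVarying α v)
    (N₀ N₁ : G → ℝ≥0∞) {M γ : ℝ} (hM : 1 < M) (hγ : -α < γ) :
    ∃ l < 1, ∃ C : ℝ≥0∞, C ≠ ∞ ∧ ∀ f (k : ℤ),
      ENNReal.ofReal (v (M ^ k)) * Kenvelope N₀ N₁ M γ (M ^ k) f ≤
        C * ⨆ m : ℕ, l ^ m *
          (ENNReal.ofReal (v (M ^ (k + m))) * Kf N₀ N₁ (M ^ (k + m)) f) := by
  have hM₀ : 0 < M := by linarith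
  obtain ⟨C, hC, hle⟩ := hv.exists_le_rpow (ε := (α + γ) / 2) (by linarith)
  refine ⟨ENNReal.ofReal (M ^ (-(α + γ) / 2)), ?_, ENNReal.ofReal C, ENNReal.ofReal_ne_top,
    fun f k => ?_⟩
  · exact ENNReal.ofReal_lt_one.2 (Real.rpow_lt_one_of_one_lt_of_neg hM (by linarith))
  rw [Kenvelope, ENNReal.mul_iSup, ENNReal.mul_iSup]
  refine iSup_mono fun m => ?_
  have hy : M ^ (k + m) = M ^ m * M ^ k := by
    rw [zpow_add₀ hM₀.ne', zpow_natCast, mul_comm]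
  have hpow : v (M ^ k) * (M ^ (-γ)) ^ m ≤ C * ((M ^ (-(α + γ) / 2)) ^ m * v (M ^ (k + m))) := by
    have hk : M ^ k ≤ M ^ (k + m) := zpow_le_zpow_right₀ hM.le (by simp)
    calc v (M ^ k) * (M ^ (-γ)) ^ m
        ≤ C * (M ^ m) ^ ((α + γ) / 2 - α) * v (M ^ (k + m)) * (M ^ (-γ)) ^ m := by
          gcongr
          simpa only [hy, mul_div_cancel_right₀ _ (zpow_pos hM₀ k).ne'] using
            (hle _ _ (zpow_pos hM₀ k) hk).2
      _ = C * ((M ^ ((α + γ) / 2 - α) * M ^ (-γ)) ^ m * v (M ^ (k + m))) := by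
          rw [← Real.rpow_natCast_mul hM₀.le, mul_comm (m : ℝ), Real.rpow_mul_natCast hM₀.le]
          ring
      _ = C * ((M ^ (-(α + γ) / 2)) ^ m * v (M ^ (k + m))) := by
          rw [← Real.rpow_add hM₀]
          ring_nf
  rw [← hy, ← mul_assoc, ← mul_assoc, ← mul_assoc]
  gcongr ?_ * _
  rw [← ENNReal.ofReal_pow (by positivity), ← ENNReal.ofReal_pow (by positivity), mul_assoc,
    ← ENNReal.ofReal_mul (hv.pos (by positivity)).le, ← ENNReal.ofReal_mul (by positivity),
    ← ENNReal.ofReal_mul hC.le]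
  exact ENNReal.ofReal_le_ofReal hpow

lemma IsIntermediate.dominated_Kf_map (hX : IsIntermediate N₀ N₁ X σ ρ) (h₀ : IsQuasiSeminorm_s5 N₀)
    (hσ : 0 < σ) {v : ℝ → ℝ} (hv : RegularlyVarying α v) (hα : -α < σ) {M : ℝ} (hM : 1 < M)
    (r : ℝ≥0∞) :
    Dominated
      (fun f => eLpNorm (fun k : ℤ => ENNReal.ofReal (v (M ^ k)) * Kf N₀ X (ρ (M ^ k)) f) r
        Measure.count)
      (fun f => eLpNorm (fun k : ℤ => ENNReal.ofReal (v (M ^ k)) * Kf N₀ N₁ (M ^ k) f) r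
        Measure.count) := by
  obtain ⟨γ, hγ, hγσ⟩ := exists_between (max_lt hα hσ)
  obtain ⟨hγα, hγ₀⟩ := max_lt_iff.1 hγ
  obtain ⟨C₁, hC₁, hK⟩ := hX.exists_Kf_le_Kenvelope h₀ hM hγ₀.le hγσ
  obtain ⟨l, hl, C₂, hC₂, henv⟩ := hv.exists_mul_Kenvelope_le N₀ N₁ hM hγα
  obtain ⟨C₃, hC₃, hHardy⟩ := exists_eLpNorm_iSup_pow_mul_le r hl
  refine ⟨C₁ * C₂ * C₃, by finiteness, fun f => ?_⟩
  rw [mul_assoc]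
  refine le_trans (eLpNorm_le_const_mul_of_ae_le (by finiteness) (.of_forall fun k => ?_))
    (mul_le_mul_right (hHardy _) (C₁ * C₂))
  have hMk : 0 < M ^ k := zpow_pos (by linarith) k
  rw [mul_assoc]
  refine le_trans ?_ (mul_le_mul_right (henv f k) C₁)
  rw [mul_left_comm]
  gcongr
  exact hK _ hMk f

lemma IsIntermediate.dominated_Kf (hX : IsIntermediate N₀ N₁ X σ ρ) (h₀ : IsQuasiSeminorm_s5 N₀)
    (v : ℤ → ℝ≥0∞) {x : ℤ → ℝ} (hx : ∀ k, 0 < x k) (r : ℝ≥0∞) :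
    Dominated
      (fun f => eLpNorm (fun k => v k * Kf N₀ N₁ (x k) f) r Measure.count)
      (fun f => eLpNorm (fun k => v k * Kf N₀ X (ρ (x k)) f) r Measure.count) := by
  obtain ⟨C, hC, hKf⟩ := hX.exists_Kf_le_Kf h₀
  refine ⟨C, hC, fun f => eLpNorm_le_const_mul_of_ae_le hC (.of_forall fun k => ?_)⟩
  rw [mul_left_comm]
  gcongr
  exact hKf _ (hx k) f

theorem IsIntermediate.equivNorms (hX : IsIntermediate N₀ N₁ X σ ρ) (h₀ : IsQuasiSeminorm_s5 N₀)
    (hρ : RegularlyVarying σ ρ) (hσ : 0 < σ) (hφ : RegularlyVarying α φ) (hα : -1 < α)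
    (r : ℝ≥0∞) :
    EquivNorms
      (fun f => eLpNorm (fun u => ENNReal.ofReal (φ u) * Kf N₀ X u f) r logMeasure)
      (fun f => eLpNorm (fun u => ENNReal.ofReal (φ (ρ u)) * Kf N₀ N₁ u f) r logMeasure) := by
  have hv := hφ.comp hρ
  obtain ⟨M, hM, D, hx⟩ := hρ.exists_isLacunary_zpow hσ
  have hy := IsLacunary.zpow hM
  obtain ⟨Cφ, hCφ, hφD⟩ := hφ.exists_moderateWith D
  obtain ⟨Cv, hCv, hvM⟩ := hv.exists_moderateWith M
  let F (f : G) (u : ℝ) := ENNReal.ofReal (φ u) * Kf N₀ X u f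
  let H (f : G) (u : ℝ) := ENNReal.ofReal (φ (ρ u)) * Kf N₀ N₁ u f
  have hF (f : G) : ModerateWith D (Cφ * ENNReal.ofReal D) (F f) :=
    hφD.mul (moderateWith_Kf N₀ X D f)
  have hH (f : G) : ModerateWith M (Cv * ENNReal.ofReal M) (H f) :=
    hvM.mul (moderateWith_Kf N₀ N₁ M f)
  have hFC : Cφ * ENNReal.ofReal D ≠ ∞ := by finiteness
  have hHC : Cv * ENNReal.ofReal M ≠ ∞ := by finiteness
  have hle : Dominated (fun f => eLpNorm (fun k : ℤ => F f (ρ (M ^ k))) r Measure.count)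
      (fun f => eLpNorm (fun k : ℤ => H f (M ^ k)) r Measure.count) :=
    hX.dominated_Kf_map h₀ hσ hv (by nlinarith) (one_lt_two.trans_le hM) r
  have hge : Dominated (fun f => eLpNorm (fun k : ℤ => H f (M ^ k)) r Measure.count)
      (fun f => eLpNorm (fun k : ℤ => F f (ρ (M ^ k))) r Measure.count) :=
    hX.dominated_Kf h₀ (fun k => ENNReal.ofReal (φ (ρ (M ^ k)))) hy.pos r
  exact Dominated.equivNorms
    ((hx.dominated_eLpNorm_count hFC hF).trans (hle.trans (hy.dominated_count_eLpNorm hHC hH)))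
    ((hy.dominated_eLpNorm_count hHC hH).trans (hge.trans (hx.dominated_count_eLpNorm hFC hF)))

end Reiteration

section TruncatedNorm

variable {q : ℝ≥0∞} {α β γ : ℝ} {f w : ℝ → ℝ}

lemma eLpNorm_ofReal_mul_le_of_le_rpow {S : Set ℝ} (hS : MeasurableSet S) (hS₀ : S ⊆ Ioi 0)
    {K : ℝ → ℝ≥0∞} {κ : ℝ≥0∞} (hκ : κ ≠ ∞) {t : ℝ} (ht : 0 < t)
    (hK : ∀ u ∈ S, K u ≤ ENNReal.ofReal ((u / t) ^ β) * κ) :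
    eLpNorm (fun u => ENNReal.ofReal (f u) * K u) q (logMeasure.restrict S) ≤
      ENNReal.ofReal (t ^ (-β)) * κ *
        eLpNorm (fun u => ENNReal.ofReal (u ^ β * f u)) q (logMeasure.restrict S) := by
  refine eLpNorm_le_const_mul_of_ae_le (by finiteness)
    (ae_restrict_of_forall_mem hS fun u hu => ?_)
  have hu₀ : 0 < u := hS₀ hu
  calc ENNReal.ofReal (f u) * K u ≤ ENNReal.ofReal (f u) * (ENNReal.ofReal ((u / t) ^ β) * κ) := by
        gcongr
        exact hK u hu
    _ = ENNReal.ofReal (t ^ (-β)) * κ * ENNReal.ofReal (u ^ β * f u) := by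
        rw [Real.div_rpow hu₀.le ht.le, div_eq_mul_inv, ← Real.rpow_neg ht.le,
          ENNReal.ofReal_mul (by positivity), ENNReal.ofReal_mul (by positivity)]
        ring

lemma ofReal_rpow_neg_mul_ofReal_rpow_mul {s t : ℝ} (hs : 0 < s) (ht : 0 < t) (β x : ℝ) :
    ENNReal.ofReal (t ^ (-β)) * ENNReal.ofReal (s ^ β * x) =
      ENNReal.ofReal x * ENNReal.ofReal ((s / t) ^ β) := by
  rw [Real.div_rpow hs.le ht.le, div_eq_mul_inv, ← Real.rpow_neg ht.le,
    ENNReal.ofReal_mul (by positivity), ENNReal.ofReal_mul (by positivity)]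
  ring

lemma RegularlyVarying.exists_eLpNorm_mul_Ioc_le (hf : RegularlyVarying α f) (hβ : 0 < β + α)
    (hq : q ≠ 0) :
    ∃ C : ℝ≥0∞, C ≠ ∞ ∧ ∀ s t, 0 < s → 0 < t → ∀ κ ≠ ∞, ∀ K : ℝ → ℝ≥0∞,
      (∀ u ∈ Ioc 0 s, K u ≤ ENNReal.ofReal ((u / t) ^ β) * κ) →
      eLpNorm (fun u => ENNReal.ofReal (f u) * K u) q (logMeasure.restrict (Ioc 0 s)) ≤
        C * (ENNReal.ofReal (f s) * ENNReal.ofReal ((s / t) ^ β) * κ) := by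
  obtain ⟨C, hC, hle⟩ := (hf.rpow_mul β).exists_eLpNorm_Ioc_le hβ hq
  refine ⟨C, hC, fun s t hs ht κ hκ K hK => (eLpNorm_ofReal_mul_le_of_le_rpow measurableSet_Ioc
    (fun u hu => hu.1) hκ ht hK).trans
      ((mul_le_mul_right (hle s hs) _).trans (le_of_eq ?_))⟩
  rw [← ofReal_rpow_neg_mul_ofReal_rpow_mul hs ht]
  ring

lemma RegularlyVarying.exists_eLpNorm_mul_Ioi_le (hf : RegularlyVarying α f) (hβ : β + α < 0)
    (hq : q ≠ 0) :
    ∃ C : ℝ≥0∞, C ≠ ∞ ∧ ∀ s t, 0 < s → 0 < t → ∀ κ ≠ ∞, ∀ K : ℝ → ℝ≥0∞,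
      (∀ u ∈ Ioi s, K u ≤ ENNReal.ofReal ((u / t) ^ β) * κ) →
      eLpNorm (fun u => ENNReal.ofReal (f u) * K u) q (logMeasure.restrict (Ioi s)) ≤
        C * (ENNReal.ofReal (f s) * ENNReal.ofReal ((s / t) ^ β) * κ) := by
  obtain ⟨C, hC, hle⟩ := (hf.rpow_mul β).exists_eLpNorm_Ioi_le hβ hq
  refine ⟨C, hC, fun s t hs ht κ hκ K hK => (eLpNorm_ofReal_mul_le_of_le_rpow measurableSet_Ioi
    (fun u hu => hs.trans hu) hκ ht hK).trans
      ((mul_le_mul_right (hle s hs) _).trans (le_of_eq ?_))⟩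
  rw [← ofReal_rpow_neg_mul_ofReal_rpow_mul hs ht]
  ring

/-- The inner quasi-norm of an `𝓛`-space: the `L_q(du/u)` quasi-norm of `w * K` over `(0, t)`. -/
def truncNorm (q : ℝ≥0∞) (w : ℝ → ℝ) (K : ℝ → ℝ≥0∞) (t : ℝ) : ℝ≥0∞ :=
  eLpNorm (fun u => ENNReal.ofReal (w u) * K u) q (logMeasure.restrict (Ioo 0 t))

lemma RegularlyVarying.exists_le_truncNorm (hw : RegularlyVarying α w) (hq : q ≠ 0) {D : ℝ≥0∞}
    (hD : D ≠ ∞) :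
    ∃ C : ℝ≥0∞, C ≠ ∞ ∧ ∀ K, ModerateWith 2 D K → ∀ t, 0 < t → ∀ s ∈ Ioi t,
      ENNReal.ofReal (w t) * K t ≤ C * truncNorm q w K s := by
  obtain ⟨B, hB, hwB⟩ := hw.exists_moderateWith 2
  obtain ⟨C, hC, hle⟩ := exists_le_const_mul_eLpNorm_Ioc hq (ENNReal.mul_ne_top hB hD)
  refine ⟨C, hC, fun K hK t ht s hs => ?_⟩
  refine (hle _ (hwB.mul hK) (t / 2) t (by linarith) (by linarith) (by linarith)).trans ?_
  gcongr
  refine eLpNorm_mono_measure _ (Measure.restrict_mono (fun u hu => ?_) le_rfl)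
  have hst : t < s := hs
  exact ⟨by linarith [hu.1], by linarith [hu.2]⟩

lemma RegularlyVarying.exists_truncNorm_near_le (hw : RegularlyVarying α w) (hα : 0 < 1 + α)
    (hq : q ≠ 0) :
    ∃ C : ℝ≥0∞, C ≠ ∞ ∧ ∀ t, 0 < t → ∀ κ ≠ ∞, ∀ K, PowerBound γ t κ K → ∀ s ∈ Ioc 0 t,
      truncNorm q w K s ≤ C * (ENNReal.ofReal (w s) * ENNReal.ofReal (s / t) * κ) := by
  obtain ⟨C, hC, hle⟩ := hw.exists_eLpNorm_mul_Ioc_le hα hq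
  refine ⟨C, hC, fun t ht κ hκ K hK s hs => ?_⟩
  have hnear := hle s t hs.1 ht κ hκ K
    (fun u hu => by simpa only [Real.rpow_one] using hK.near u ⟨hu.1, hu.2.trans hs.2⟩)
  rw [Real.rpow_one] at hnear
  exact (eLpNorm_mono_measure _ (Measure.restrict_mono Ioo_subset_Ioc_self le_rfl)).trans hnear

lemma RegularlyVarying.exists_truncNorm_far_le (hw : RegularlyVarying α w) (hα : 0 < 1 + α)
    (hγ : γ + α < 0) (hq : q ≠ 0) :
    ∃ C : ℝ≥0∞, C ≠ ∞ ∧ ∀ t, 0 < t → ∀ κ ≠ ∞, ∀ K, PowerBound γ t κ K → ∀ s,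
      truncNorm q w K s ≤ C * (ENNReal.ofReal (w t) * κ) := by
  obtain ⟨C₁, hC₁, hnear⟩ := hw.exists_eLpNorm_mul_Ioc_le hα hq
  obtain ⟨C₂, hC₂, hfar⟩ := hw.exists_eLpNorm_mul_Ioi_le hγ hq
  have htwo : (2 : ℝ≥0∞) ^ q⁻¹.toReal ≠ ∞ :=
    ENNReal.rpow_ne_top_of_nonneg ENNReal.toReal_nonneg ENNReal.ofNat_ne_top
  refine ⟨2 ^ q⁻¹.toReal * (C₁ + C₂), by finiteness, fun t ht κ hκ K hK s => ?_⟩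
  have hnear_t := hnear t t ht ht κ hκ K
    (fun u hu => by simpa only [Real.rpow_one] using hK.near u hu)
  have hfar_t := hfar t t ht ht κ hκ K hK.far
  simp only [div_self ht.ne', Real.one_rpow, ENNReal.ofReal_one, mul_one] at hnear_t hfar_t
  have hsub : Ioo 0 s ⊆ Ioc 0 t ∪ Ioi t := by
    rw [Ioc_union_Ioi_eq_Ioi ht.le]
    exact fun u hu => hu.1
  calc truncNorm q w K s
      ≤ eLpNorm (fun u => ENNReal.ofReal (w u) * K u) q
          (logMeasure.restrict (Ioc 0 t ∪ Ioi t)) :=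
        eLpNorm_mono_measure _ (Measure.restrict_mono hsub le_rfl)
    _ ≤ 2 ^ q⁻¹.toReal *
          (C₁ * (ENNReal.ofReal (w t) * κ) + C₂ * (ENNReal.ofReal (w t) * κ)) :=
        (eLpNorm_restrict_union_le hq _ _).trans (by gcongr)
    _ = 2 ^ q⁻¹.toReal * (C₁ + C₂) * (ENNReal.ofReal (w t) * κ) := by ring

end TruncatedNorm

/-- The quasi-norm of an `𝓛`-space as a functional of `K`, with inner weight `w` and outer weight
`d`, both taken with respect to `du/u`. -/
def limitingNorm (r q : ℝ≥0∞) (w d : ℝ → ℝ) (K : ℝ → ℝ≥0∞) : ℝ≥0∞ :=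
  eLpNorm (fun t => ENNReal.ofReal (d t) * truncNorm q w K t) r logMeasure

section LimitingNorm

variable {q r : ℝ≥0∞} {α γ : ℝ} {w d : ℝ → ℝ}

lemma logMeasure_restrict_Ioi_zero : logMeasure.restrict (Ioi 0) = logMeasure :=
  Measure.restrict_eq_self_of_ae_mem ae_logMeasure_pos

lemma RegularlyVarying.exists_tailNorm_mul_le_limitingNorm (hw : RegularlyVarying α w) (hq : q ≠ 0)
    (r : ℝ≥0∞) (d : ℝ → ℝ) {D : ℝ≥0∞} (hD : D ≠ ∞) :
    ∃ C : ℝ≥0∞, C ≠ ∞ ∧ ∀ K, ModerateWith 2 D K → ∀ t, 0 < t →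
      ENNReal.ofReal (w t) * tailNorm r d t * K t ≤ C * limitingNorm r q w d K := by
  obtain ⟨C, hC, hle⟩ := hw.exists_le_truncNorm hq hD
  refine ⟨C, hC, fun K hK t ht => ?_⟩
  have htrunc : ∀ s ∈ Ioi t, ENNReal.ofReal (w t) * K t * ENNReal.ofReal (d s) ≤
      C * (ENNReal.ofReal (d s) * truncNorm q w K s) := fun s hs => by
    rw [mul_comm, mul_left_comm C]
    exact mul_le_mul_right (hle K hK t ht s hs) _
  calc ENNReal.ofReal (w t) * tailNorm r d t * K t
      = ENNReal.ofReal (w t) * K t * tailNorm r d t := mul_right_comm _ _ _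
    _ ≤ eLpNorm (fun s => ENNReal.ofReal (w t) * K t * ENNReal.ofReal (d s)) r
          (logMeasure.restrict (Ioi t)) := const_mul_eLpNorm_le
    _ ≤ C * eLpNorm (fun s => ENNReal.ofReal (d s) * truncNorm q w K s) r
          (logMeasure.restrict (Ioi t)) :=
        eLpNorm_le_const_mul_of_ae_le hC (ae_restrict_of_forall_mem measurableSet_Ioi htrunc)
    _ ≤ C * limitingNorm r q w d K := by
        gcongr
        exact eLpNorm_mono_measure _ Measure.restrict_le_self

lemma RegularlyVarying.exists_eLpNorm_truncNorm_Ioc_le (hw : RegularlyVarying α w)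
    (hα : 0 < 1 + α) (hd : RegularlyVarying 0 d) (hq : q ≠ 0) (hr : r ≠ 0) :
    ∃ C : ℝ≥0∞, C ≠ ∞ ∧ ∀ t, 0 < t → ∀ κ ≠ ∞, ∀ K, PowerBound γ t κ K →
      eLpNorm (fun s => ENNReal.ofReal (d s) * truncNorm q w K s) r
        (logMeasure.restrict (Ioc 0 t)) ≤ C * (ENNReal.ofReal (w t) * tailNorm r d t * κ) := by
  obtain ⟨C₁, hC₁, htrunc⟩ := hw.exists_truncNorm_near_le (γ := γ) hα hq
  obtain ⟨C₂, hC₂, hle⟩ := (hd.mul hw).exists_eLpNorm_mul_Ioc_le (β := 1) (by linarith) hr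
  obtain ⟨C₃, hC₃, htail⟩ := hd.exists_le_tailNorm hr
  refine ⟨C₁ * (C₂ * C₃), by finiteness, fun t ht κ hκ K hK => ?_⟩
  have hbound : ∀ s ∈ Ioc 0 t, ENNReal.ofReal (d s) * truncNorm q w K s ≤
      C₁ * (ENNReal.ofReal (d s * w s) * (ENNReal.ofReal ((s / t) ^ (1 : ℝ)) * κ)) := by
    intro s hs
    rw [Real.rpow_one, ENNReal.ofReal_mul (hd.pos hs.1).le, mul_assoc, mul_left_comm C₁,
      ← mul_assoc (ENNReal.ofReal (w s))]
    gcongr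
    exact htrunc t ht κ hκ K hK s hs
  calc eLpNorm (fun s => ENNReal.ofReal (d s) * truncNorm q w K s) r
        (logMeasure.restrict (Ioc 0 t))
      ≤ C₁ * (C₂ * (ENNReal.ofReal (d t * w t) * ENNReal.ofReal ((t / t) ^ (1 : ℝ)) * κ)) := by
        refine (eLpNorm_le_const_mul_of_ae_le hC₁
          (ae_restrict_of_forall_mem measurableSet_Ioc hbound)).trans ?_
        gcongr
        exact hle t t ht ht κ hκ _ fun u _ => le_rfl
    _ = C₁ * (C₂ * (ENNReal.ofReal (w t) * ENNReal.ofReal (d t) * κ)) := by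
        rw [div_self ht.ne', Real.one_rpow, ENNReal.ofReal_one, mul_one,
          ENNReal.ofReal_mul (hd.pos ht).le, mul_comm (ENNReal.ofReal (d t))]
    _ ≤ C₁ * (C₂ * (ENNReal.ofReal (w t) * (C₃ * tailNorm r d t) * κ)) := by
        gcongr
        exact htail t ht
    _ = C₁ * (C₂ * C₃) * (ENNReal.ofReal (w t) * tailNorm r d t * κ) := by ring

lemma RegularlyVarying.exists_limitingNorm_le (hw : RegularlyVarying α w) (hα : 0 < 1 + α)
    (hγ : γ + α < 0) (hd : RegularlyVarying 0 d) (hq : q ≠ 0) (hr : r ≠ 0) :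
    ∃ C : ℝ≥0∞, C ≠ ∞ ∧ ∀ t, 0 < t → ∀ κ ≠ ∞, ∀ K, PowerBound γ t κ K →
      limitingNorm r q w d K ≤ C * (ENNReal.ofReal (w t) * tailNorm r d t * κ) := by
  obtain ⟨C₁, hC₁, hnear⟩ := hw.exists_eLpNorm_truncNorm_Ioc_le (γ := γ) hα hd hq hr
  obtain ⟨C₂, hC₂, htrunc⟩ := hw.exists_truncNorm_far_le hα hγ hq
  have htwo : (2 : ℝ≥0∞) ^ r⁻¹.toReal ≠ ∞ :=
    ENNReal.rpow_ne_top_of_nonneg ENNReal.toReal_nonneg ENNReal.ofNat_ne_top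
  refine ⟨2 ^ r⁻¹.toReal * (C₁ + C₂), by finiteness, fun t ht κ hκ K hK => ?_⟩
  have hfar : eLpNorm (fun s => ENNReal.ofReal (d s) * truncNorm q w K s) r
      (logMeasure.restrict (Ioi t)) ≤ C₂ * (ENNReal.ofReal (w t) * κ) * tailNorm r d t := by
    refine eLpNorm_le_const_mul_of_ae_le (by finiteness) (.of_forall fun s => ?_)
    rw [mul_comm]
    gcongr
    exact htrunc t ht κ hκ K hK s
  calc limitingNorm r q w d K
      = eLpNorm (fun s => ENNReal.ofReal (d s) * truncNorm q w K s) r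
          (logMeasure.restrict (Ioc 0 t ∪ Ioi t)) := by
        rw [Ioc_union_Ioi_eq_Ioi ht.le, logMeasure_restrict_Ioi_zero, limitingNorm]
    _ ≤ 2 ^ r⁻¹.toReal * (C₁ * (ENNReal.ofReal (w t) * tailNorm r d t * κ) +
          C₂ * (ENNReal.ofReal (w t) * κ) * tailNorm r d t) :=
        (eLpNorm_restrict_union_le hr _ _).trans (by gcongr; exact hnear t ht κ hκ K hK)
    _ = 2 ^ r⁻¹.toReal * (C₁ + C₂) * (ENNReal.ofReal (w t) * tailNorm r d t * κ) := by ring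

theorem isIntermediate_limitingNorm {G : Type*} [AddCommGroup G] (N₀ N₁ : G → ℝ≥0∞) {σ : ℝ}
    (hw : RegularlyVarying (-σ) w) (hσ : σ < 1) (hd : RegularlyVarying 0 d) (hq : q ≠ 0)
    (hr : r ≠ 0) (hfin : tailNorm r d 1 ≠ ∞) {ρ : ℝ → ℝ}
    (hρ : ∀ t, 0 < t → ρ t = (w t * (tailNorm r d t).toReal)⁻¹) :
    IsIntermediate N₀ N₁ (fun f => limitingNorm r q w d fun u => Kf N₀ N₁ u f) σ ρ := by
  have hρ' {t : ℝ} (ht : 0 < t) :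
      ENNReal.ofReal (ρ t) = (ENNReal.ofReal (w t) * tailNorm r d t)⁻¹ := by
    have htail := ENNReal.toReal_pos (hd.tailNorm_pos hr ht).ne' (hd.tailNorm_ne_top hr hfin ht)
    rw [hρ t ht, ENNReal.ofReal_inv_of_pos (mul_pos (hw.pos ht) htail),
      ENNReal.ofReal_mul (hw.pos ht).le, ENNReal.ofReal_toReal (hd.tailNorm_ne_top hr hfin ht)]
  have hne₀ {t : ℝ} (ht : 0 < t) : ENNReal.ofReal (w t) * tailNorm r d t ≠ 0 :=
    mul_ne_zero (ENNReal.ofReal_pos.2 (hw.pos ht)).ne' (hd.tailNorm_pos hr ht).ne'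
  have hne {t : ℝ} (ht : 0 < t) : ENNReal.ofReal (w t) * tailNorm r d t ≠ ∞ :=
    ENNReal.mul_ne_top ENNReal.ofReal_ne_top (hd.tailNorm_ne_top hr hfin ht)
  constructor
  · obtain ⟨C, hC, hle⟩ :=
      hw.exists_tailNorm_mul_le_limitingNorm hq r d (ENNReal.ofReal_ne_top (r := 2))
    refine ⟨C, hC, fun t ht h => ?_⟩
    rw [hρ' ht, mul_left_comm, ← ENNReal.mul_le_iff_le_inv (hne₀ ht) (hne ht)]
    exact hle _ (moderateWith_Kf N₀ N₁ 2 h) t ht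
  · intro γ hγ
    obtain ⟨C, hC, hle⟩ := hw.exists_limitingNorm_le (γ := γ) (by linarith) (by linarith) hd hq hr
    refine ⟨C, hC, fun t ht κ hκ h hpow => ?_⟩
    rw [hρ' ht, ENNReal.inv_mul_le_iff (hne₀ ht) (hne ht), mul_left_comm]
    exact hle t ht κ hκ _ hpow

end LimitingNorm

section InterpolationNorms

variable {G : Type*} [AddCommGroup G] (N₀ N₁ : G → ℝ≥0∞)

lemma ofReal_rpow_sub_mul {u : ℝ} (hu : 0 < u) (x y c : ℝ) :
    ENNReal.ofReal (u ^ (x - y) * c) = ENNReal.ofReal (u ^ (-y)) * ENNReal.ofReal (u ^ x * c) := by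
  rw [← ENNReal.ofReal_mul (by positivity), ← mul_assoc, ← Real.rpow_add hu, neg_add_eq_sub]

lemma LqNorm_svWgt_Ioi {r : ℝ≥0∞} (hr : r ≠ 0) (d : ℝ → ℝ) {t : ℝ} (ht : 0 < t) :
    LqNorm r (Ioi t) (svWgt r d) = tailNorm r d t :=
  LqNorm_eq_eLpNorm hr measurableSet_Ioi (Ioi_subset_Ioi ht.le) fun _ hu =>
    ENNReal.ofReal_mul (Real.rpow_nonneg (ht.trans hu).le _)

lemma normK_eq_eLpNorm {q : ℝ≥0∞} (hq : q ≠ 0) (θ : ℝ) (b : ℝ → ℝ) (f : G) :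
    normK N₀ N₁ θ q b f =
      eLpNorm (fun u => ENNReal.ofReal (u ^ (-θ) * b u) * Kf N₀ N₁ u f) q logMeasure := by
  rw [normK, LqNorm_eq_eLpNorm hq measurableSet_Ioi subset_rfl, logMeasure_restrict_Ioi_zero]
  intro u hu
  rw [ofReal_rpow_sub_mul hu, mul_assoc]

lemma normL_eq_limitingNorm {q r : ℝ≥0∞} (hq : q ≠ 0) (hr : r ≠ 0) (σ : ℝ) (a b : ℝ → ℝ) (f : G) :
    normL N₀ N₁ σ r q b a f =
      limitingNorm r q (fun u => u ^ (-σ) * a u) (fun t => b t / a t)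
        (fun u => Kf N₀ N₁ u f) := by
  rw [normL, LqNorm_eq_eLpNorm hr measurableSet_Ioi subset_rfl, logMeasure_restrict_Ioi_zero,
    limitingNorm]
  intro t ht
  rw [ENNReal.ofReal_mul (Real.rpow_nonneg (le_of_lt ht) _), mul_assoc, truncNorm,
    LqNorm_eq_eLpNorm hq measurableSet_Ioo Ioo_subset_Ioi_self]
  intro u hu
  rw [ofReal_rpow_sub_mul hu.1, mul_assoc]

lemma isIntermediate_normL {σ : ℝ} (hσ : σ < 1) {q r : ℝ≥0∞} (hq : q ≠ 0) (hr : r ≠ 0)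
    {a b : ℝ → ℝ} (ha : RegularlyVarying 0 a) (hd : RegularlyVarying 0 fun t => b t / a t)
    (hfin : tailNorm r (fun t => b t / a t) 1 ≠ ∞) {ρ : ℝ → ℝ}
    (hρ : ∀ t, 0 < t → ρ t = t ^ σ / (a t * (tailNorm r (fun t => b t / a t) t).toReal)) :
    IsIntermediate N₀ N₁ (normL N₀ N₁ σ r q b a) σ ρ := by
  have hw : RegularlyVarying (-σ) fun u => u ^ (-σ) * a u := by
    simpa only [add_zero] using ha.rpow_mul (-σ)
  rw [funext (normL_eq_limitingNorm N₀ N₁ hq hr σ a b)]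
  refine isIntermediate_limitingNorm N₀ N₁ hw hσ hd hq hr hfin fun t ht => ?_
  rw [hρ t ht, Real.rpow_neg ht.le, mul_assoc, mul_inv, inv_inv, div_eq_mul_inv]

end InterpolationNorms

lemma div_rpow_neg_mul {t c : ℝ} (ht : 0 < t) (hc : 0 < c) (θ σ x : ℝ) :
    (t ^ σ / c) ^ (-θ) * x = t ^ (-(θ * σ)) * (c ^ θ * x) := by
  rw [Real.div_rpow (by positivity) hc.le, ← Real.rpow_mul ht.le, Real.rpow_neg hc.le,
    div_inv_eq_mul, mul_assoc, mul_neg, mul_comm σ]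

theorem theorem15_general {G : Type*} [AddCommGroup G] {N₀ : G → ℝ≥0∞} (hN₀ : IsQuasiSeminorm_s5 N₀)
    (N₁ : G → ℝ≥0∞) {θ₁ θ : ℝ} (hθ₁ : 0 < θ₁) (hθ₁' : θ₁ < 1) (hθ : θ < 1) {q₁ r r₁ : ℝ≥0∞}
    (hq₁ : 0 < q₁) (hr : 0 < r) (hr₁ : 0 < r₁) {a a₁ b₁ : ℝ → ℝ} (ha : RegularlyVarying 0 a)
    (ha₁ : RegularlyVarying 0 a₁) (hb₁ : RegularlyVarying 0 b₁)
    (hfin : LqNorm r₁ (Ioi 1) (svWgt r₁ (fun s => b₁ s / a₁ s)) ≠ ∞) {c₁ ρ : ℝ → ℝ}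
    (hc₁ : ∀ t, c₁ t = a₁ t * (LqNorm r₁ (Ioi t) (svWgt r₁ (fun s => b₁ s / a₁ s))).toReal)
    (hρ : ∀ t, ρ t = t ^ θ₁ / c₁ t) :
    EquivNorms (normK N₀ (normL N₀ N₁ θ₁ r₁ q₁ b₁ a₁) θ r a)
      (normK N₀ N₁ (θ * θ₁) r (fun t => c₁ t ^ θ * a (ρ t))) := by
  have hd : RegularlyVarying 0 fun t => b₁ t / a₁ t := by simpa only [sub_zero] using hb₁.div ha₁
  rw [LqNorm_svWgt_Ioi hr₁.ne' _ one_pos] at hfin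
  replace hc₁ t (ht : 0 < t) := LqNorm_svWgt_Ioi hr₁.ne' _ ht ▸ hc₁ t
  have hc : RegularlyVarying 0 c₁ := by
    simpa only [zero_add] using (ha₁.mul (hd.toReal_tailNorm hr₁.ne' hfin)).congr hc₁
  have hρ_var : RegularlyVarying θ₁ ρ := by
    simpa only [sub_zero] using ((RegularlyVarying.rpow θ₁).div hc).congr fun t _ => hρ t
  have hφ : RegularlyVarying (-θ) fun u => u ^ (-θ) * a u := by
    simpa only [add_zero] using ha.rpow_mul (-θ)
  have hX : IsIntermediate N₀ N₁ (normL N₀ N₁ θ₁ r₁ q₁ b₁ a₁) θ₁ ρ :=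
    isIntermediate_normL N₀ N₁ hθ₁' hq₁.ne' hr₁.ne' ha₁ hd hfin fun t ht => by rw [hρ, hc₁ t ht]
  convert hX.equivNorms hN₀ hρ_var hθ₁ hφ (neg_lt_neg hθ) r using 2 with f f
  · exact normK_eq_eLpNorm N₀ _ hr.ne' θ a f
  · rw [normK_eq_eLpNorm N₀ N₁ hr.ne']
    refine eLpNorm_congr_ae ?_
    filter_upwards [ae_logMeasure_pos] with u hu
    rw [hρ, div_rpow_neg_mul hu (hc.pos hu)]

theorem theorem15
    (A₀ A₁ : QuasiBanach E)
    (hne : ∃ x : E, x ≠ 0 ∧ A₀.N x ≠ ∞ ∧ A₁.N x ≠ ∞)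
    (θ₁ θ : ℝ) (hθ₁ : 0 < θ₁) (hθ₁' : θ₁ < 1) (hθ : 0 ≤ θ) (hθ' : θ < 1)
    (q₁ r r₁ : ℝ≥0∞) (hq₁ : 0 < q₁) (hr : 0 < r) (hr₁ : 0 < r₁)
    (a a₁ b₁ : ℝ → ℝ)
    (h_sv_a : SlowlyVarying a)
    (h_sv_a₁ : SlowlyVarying a₁)
    (h_sv_b₁ : SlowlyVarying b₁)
    (hfin : LqNorm r₁ (Ioi 1) (svWgt r₁ (fun s => b₁ s / a₁ s)) ≠ ∞)
    (hθ0 : θ = 0 → LqNorm r (Ioi 1) (svWgt r (fun s => a s)) ≠ ∞)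
    (c₁ ρ : ℝ → ℝ)
    (hc₁ : ∀ t, c₁ t = a₁ t * (LqNorm r₁ (Ioi t) (svWgt r₁ (fun s => b₁ s / a₁ s))).toReal)
    (hρ : ∀ t, ρ t = t ^ θ₁ / c₁ t) :
    EquivNorms
      (normK A₀.N (normL A₀.N A₁.N θ₁ r₁ q₁ b₁ a₁) θ r a)
      (normK A₀.N A₁.N (θ * θ₁) r (fun t => c₁ t ^ θ * a (ρ t))) :=
  theorem15_general A₀.isQuasiSeminorm A₁.N hθ₁ hθ₁' hθ' hq₁ hr hr₁ h_sv_a.regularlyVarying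
    h_sv_a₁.regularlyVarying h_sv_b₁.regularlyVarying hfin hc₁ hρ

end
end
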